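/- arXiv:2502.01345 — 11 statements merged into one kernel-verified Lean document; each statement's English description precedes it below -/
import Mathlib

section
/- Let K = ℚ(√D) be a real quadratic field, where D ≥ 2 is a squarefree positive integer. Then N_K = { x ∈ ℤ, x ≥ 1 : there exists y ∈ ℤ with x² − D y² = 4 or x² − D y² = −4 }. -/
/-!
Every element of `K` has the form `a + b α` with `a b : ℚ`, and the nontrivial automorphism sends
it to `a - b α`. For a unit `ε`, the integers `t = 2a` (trace) and `e = a² - D b² = ±1` (norm)
satisfy `t² - D y² = 4e`, where `y = 2b` is an integer because `D` is squarefree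
(`unit_coords`, `int_of_sqfree_mul_sq`).

If `ε + δ = n`, then `δ` has coordinates `n - a` and `-b`, so subtracting the two norm equations
expresses `n (n - t)` as the difference of the two norms. Equal norms force `n = t`. Opposite norms
force `n (n - t) = ±2`, whence `n = 2` (take `y = 0`) or `n = 1`; in the latter case `ε` and `δ`
have traces `3` and `-1` in some order, and the norm equation of the unit with trace `-1 = -n`
is the required one.

Conversely `(x + y α) / 2` and `(x - y α) / 2` are units with sum `x` whenever `x² - D y² = ±4`
(`isUnit_pair`).
-/

open NumberField

/-- `NK K` is the set of positive integers `n` that can be written as a sum of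
two units of the ring of integers of `K`. -/
def NK (K : Type*) [Field K] [NumberField K] : Set ℕ :=
  {n | 0 < n ∧ ∃ ε δ : (𝓞 K)ˣ, (ε : 𝓞 K) + (δ : 𝓞 K) = (n : 𝓞 K)}

theorem sqfree_ne_sq (D : ℤ) (hD : 2 ≤ D) (hsqfree : Squarefree D) (q : ℚ) :
    q ^ 2 ≠ (D : ℚ) := by
  intro h
  have hi : IsIntegral ℤ q := by
    refine IsIntegral.of_pow (n := 2) (by norm_num) ?_
    rw [h]
    exact isIntegral_algebraMap (R := ℤ) (A := ℚ) (x := D)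
  obtain ⟨z, rfl⟩ := IsIntegrallyClosed.isIntegral_iff.mp hi
  have hz : z ^ 2 = D := by
    simp only [algebraMap_int_eq, eq_intCast] at h
    exact_mod_cast h
  have hu := hsqfree z ⟨1, by rw [← hz]; ring⟩
  rcases Int.isUnit_iff.mp hu with rfl | rfl <;> norm_num at hz <;> omega

/-- A rational number `y` with `D y²` integral is an integer, since `D` is squarefree. -/
theorem int_of_sqfree_mul_sq (D : ℤ) (hsqfree : Squarefree D) (y : ℚ) (m : ℤ)
    (h : (D : ℚ) * y ^ 2 = m) : ∃ z : ℤ, (z : ℚ) = y := by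
  have hd : (y.den : ℚ) ≠ 0 := by exact_mod_cast y.den_ne_zero
  have h1 : D * y.num ^ 2 = m * (y.den : ℤ) ^ 2 := by
    have : (D : ℚ) * y.num ^ 2 = m * (y.den : ℚ) ^ 2 := by
      rw [← h]
      nth_rewrite 2 [← Rat.num_div_den y]
      field_simp
    exact_mod_cast this
  have hc : IsCoprime ((y.den : ℤ) ^ 2) (y.num ^ 2) := by
    apply IsCoprime.pow
    rw [Int.isCoprime_iff_gcd_eq_one]
    have := y.reduced
    rw [Nat.Coprime, Nat.gcd_comm] at this
    simpa [Int.gcd] using this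
  have hdvd : (y.den : ℤ) ^ 2 ∣ D := hc.dvd_of_dvd_mul_right ⟨m, by rw [h1]; ring⟩
  have hu := hsqfree (y.den : ℤ) (by rwa [← sq])
  have h1' : y.den = 1 := by
    rcases Int.isUnit_iff.mp hu with h | h <;> omega
  exact ⟨y.num, Rat.coe_int_num_of_den_eq_one h1'⟩

theorem int_of_isIntegral {K : Type*} [Field K] [NumberField K] (q : ℚ)
    (h : IsIntegral ℤ (q : K)) : ∃ z : ℤ, (z : ℚ) = q := by
  have hq : IsIntegral ℤ q := by
    rw [← isIntegral_algebraMap_iff (A := ℚ) (B := K) (algebraMap ℚ K).injective]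
    simpa using h
  obtain ⟨z, hz⟩ := IsIntegrallyClosed.isIntegral_iff.mp hq
  exact ⟨z, by simpa using hz⟩

section

variable {K : Type*} [Field K] [NumberField K] {D : ℤ} {α : K}

theorem ne_rat (hD : 2 ≤ D) (hsqfree : Squarefree D) (hα : α ^ 2 = (D : K)) (q : ℚ) :
    (q : K) ≠ α := by
  intro h
  apply sqfree_ne_sq D hD hsqfree q
  rw [← h] at hα
  exact_mod_cast hα

theorem exists_coords (hD : 2 ≤ D) (hsqfree : Squarefree D)
    (hdeg : Module.finrank ℚ K = 2) (hα : α ^ 2 = (D : K)) (u : K) :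
    ∃ a b : ℚ, u = a + b * α := by
  have hli : LinearIndependent ℚ ![(1 : K), α] := by
    rw [LinearIndependent.pair_iff' one_ne_zero]
    intro q hq
    rw [Rat.smul_def, mul_one] at hq
    exact ne_rat hD hsqfree hα q hq
  have hs := hli.span_eq_top_of_card_eq_finrank (by simp [hdeg])
  have hu : u ∈ Submodule.span ℚ (Set.range ![(1 : K), α]) := by rw [hs]; trivial
  rw [Matrix.range_cons, Matrix.range_cons, Matrix.range_empty, Set.union_empty,
    Set.singleton_union, Submodule.mem_span_pair] at hu
  obtain ⟨a, b, h⟩ := hu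
  exact ⟨a, b, by rw [← h]; simp [Rat.smul_def]⟩

theorem exists_conj (hD : 2 ≤ D) (hsqfree : Squarefree D)
    (hdeg : Module.finrank ℚ K = 2) (hα : α ^ 2 = (D : K)) :
    ∃ σ : K ≃ₐ[ℚ] K, σ α = -α := by
  have : Algebra.IsQuadraticExtension ℚ K := ⟨hdeg⟩
  have : IsGalois ℚ K := {}
  by_contra! hno
  have hfix : ∀ σ : K ≃ₐ[ℚ] K, σ α = α := by
    intro σ
    have h2 : (σ α) ^ 2 = α ^ 2 := by rw [← map_pow, hα, map_intCast]
    exact (sq_eq_sq_iff_eq_or_eq_neg.mp h2).resolve_right (hno σ)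
  obtain ⟨q, hq⟩ := (IsGalois.mem_range_algebraMap_iff_fixed α).mpr hfix
  exact ne_rat hD hsqfree hα q (by simpa using hq)

/-- The trace of a unit `a + b α` is the integer `t = 2a` and its norm is `e = ±1`. -/
theorem unit_coords (hD : 2 ≤ D) (hsqfree : Squarefree D)
    (hdeg : Module.finrank ℚ K = 2) (hα : α ^ 2 = (D : K)) (ε : (𝓞 K)ˣ) (a b : ℚ)
    (h : ((ε : 𝓞 K) : K) = a + b * α) :
    ∃ t e : ℤ, (t : ℚ) = 2 * a ∧ (e = 1 ∨ e = -1) ∧ (e : ℚ) = a ^ 2 - D * b ^ 2 := by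
  obtain ⟨σ, hσ⟩ := exists_conj hD hsqfree hdeg hα
  have hconj : σ ((ε : 𝓞 K) : K) = a - b * α := by
    rw [h, map_add, map_mul, map_ratCast, map_ratCast, hσ]; ring
  have hint : ∀ x : 𝓞 K, IsIntegral ℤ (σ (x : K)) := fun x =>
    (RingOfIntegers.isIntegral_coe x).map (σ.toAlgHom.restrictScalars ℤ)
  have hi := RingOfIntegers.isIntegral_coe (ε : 𝓞 K)
  have hi' := RingOfIntegers.isIntegral_coe ((ε⁻¹ : (𝓞 K)ˣ) : 𝓞 K)
  have hinv : ((ε : 𝓞 K) : K) * (((ε⁻¹ : (𝓞 K)ˣ) : 𝓞 K) : K) = 1 := by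
    rw [← map_mul, ← Units.val_mul, mul_inv_cancel, Units.val_one, map_one]
  have hnorm : ((ε : 𝓞 K) : K) * σ ((ε : 𝓞 K) : K) = ((a ^ 2 - D * b ^ 2 : ℚ) : K) := by
    rw [hconj, h]; push_cast; rw [← hα]; ring
  obtain ⟨t, ht⟩ := int_of_isIntegral (K := K) (2 * a) (by
    have htr : ((2 * a : ℚ) : K) = ((ε : 𝓞 K) : K) + σ ((ε : 𝓞 K) : K) := by
      rw [hconj, h]; push_cast; ring
    rw [htr]; exact hi.add (hint ε))
  obtain ⟨e, he⟩ := int_of_isIntegral (K := K) (a ^ 2 - D * b ^ 2) (by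
    rw [← hnorm]; exact hi.mul (hint ε))
  have hne : ((a ^ 2 - D * b ^ 2 : ℚ) : K) *
      ((((ε⁻¹ : (𝓞 K)ˣ) : 𝓞 K) : K) * σ (((ε⁻¹ : (𝓞 K)ˣ) : 𝓞 K) : K)) = 1 := by
    rw [← hnorm, mul_mul_mul_comm, hinv, ← map_mul, hinv, map_one, one_mul]
  obtain ⟨f, hf⟩ := int_of_isIntegral (K := K) (a ^ 2 - D * b ^ 2)⁻¹ (by
    rw [Rat.cast_inv, ← eq_inv_of_mul_eq_one_right hne]
    exact hi'.mul (hint _))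
  refine ⟨t, e, ht, ?_, he⟩
  have hr : (a ^ 2 - D * b ^ 2 : ℚ) ≠ 0 := by
    intro h0
    rw [h0] at hne
    simp at hne
  have hef : e * f = 1 := by
    have : (e : ℚ) * f = 1 := by rw [he, hf, mul_inv_cancel₀ hr]
    exact_mod_cast this
  exact Int.isUnit_iff.mp (IsUnit.of_mul_eq_one _ hef)

/-- The two roots of `X² - x X + s` with `s = ±1` and discriminant `D y²`, namely
`(x ± y α) / 2`, are units. -/
theorem isUnit_pair (hα : α ^ 2 = (D : K)) (x y s : ℤ) (hs : s = 1 ∨ s = -1)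
    (h : x ^ 2 - D * y ^ 2 = 4 * s) :
    ∃ ε δ : (𝓞 K)ˣ, (ε : 𝓞 K) + (δ : 𝓞 K) = (x : 𝓞 K) := by
  have key : ((x : K) + y * α) / 2 * (((x : K) - y * α) / 2) = s := by
    have h' : (x : K) ^ 2 - D * y ^ 2 = 4 * s := by exact_mod_cast h
    rw [← hα] at h'
    linear_combination h' / 4
  have hroot : ∀ u v : K, u + v = x → u * v = s → IsIntegral ℤ u := by
    intro u v h1 h2
    refine ⟨Polynomial.X ^ 2 + (Polynomial.C (-x) * Polynomial.X + Polynomial.C s), ?_, ?_⟩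
    · monicity!
    · simp only [Polynomial.eval₂_add, Polynomial.eval₂_pow, Polynomial.eval₂_mul,
        Polynomial.eval₂_X, Polynomial.eval₂_C]
      simp only [algebraMap_int_eq, eq_intCast, Int.cast_neg]
      rw [← h1, ← h2]; ring
  obtain ⟨u, hu⟩ : ∃ u : 𝓞 K, algebraMap (𝓞 K) K u = ((x : K) + y * α) / 2 :=
    ⟨⟨_, hroot _ _ (by ring) key⟩, rfl⟩
  obtain ⟨v, hv⟩ : ∃ v : 𝓞 K, algebraMap (𝓞 K) K v = ((x : K) - y * α) / 2 :=
    ⟨⟨_, hroot _ _ (by ring) ((mul_comm _ _).trans key)⟩, rfl⟩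
  have huv : u * v = (s : 𝓞 K) := by
    apply FaithfulSMul.algebraMap_injective (𝓞 K) K
    rw [map_mul, hu, hv, map_intCast, key]
  have hsum : u + v = (x : 𝓞 K) := by
    apply FaithfulSMul.algebraMap_injective (𝓞 K) K
    rw [map_add, hu, hv, map_intCast]
    ring
  have hunit : IsUnit (u * v) := by
    rw [huv]
    rcases hs with rfl | rfl <;> simp
  obtain ⟨⟨ε, hε⟩, ⟨δ, hδ⟩⟩ := IsUnit.mul_iff.mp hunit
  exact ⟨ε, δ, by rw [hε, hδ, hsum]⟩

end

/-- For the real quadratic field `K = ℚ(√D)`, with `D ≥ 2`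
squarefree, `N_K` consists exactly of the positive integers `x` such that
`x² − Dy² = ±4` for some integer `y`. -/
theorem sums_of_units_stmt_2 (K : Type*) [Field K] [NumberField K]
    (D : ℤ) (hD : 2 ≤ D) (hsqfree : Squarefree D)
    (hdeg : Module.finrank ℚ K = 2) (α : K) (hα : α ^ 2 = (D : K)) :
    NK K = {x : ℕ | 1 ≤ x ∧
      ∃ y : ℤ, (x : ℤ) ^ 2 - D * y ^ 2 = 4 ∨ (x : ℤ) ^ 2 - D * y ^ 2 = -4} := by
  ext n
  constructor
  · rintro ⟨hn, ε, δ, hsum⟩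
    refine ⟨hn, ?_⟩
    obtain ⟨a, b, hε⟩ := exists_coords hD hsqfree hdeg hα ((ε : 𝓞 K) : K)
    have hδ : ((δ : 𝓞 K) : K) = ((n - a : ℚ) : K) + ((-b : ℚ) : K) * α := by
      have h : ((ε : 𝓞 K) : K) + ((δ : 𝓞 K) : K) = n := by
        rw [← map_add, hsum, map_natCast]
      rw [hε] at h
      push_cast
      linear_combination h
    obtain ⟨t, e, ht, he, hN⟩ := unit_coords hD hsqfree hdeg hα ε a b hε
    obtain ⟨-, f, -, hf, hM⟩ := unit_coords hD hsqfree hdeg hα δ _ _ hδ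
    obtain ⟨y, hy⟩ := int_of_sqfree_mul_sq D hsqfree (2 * b) (t ^ 2 - 4 * e) (by
      push_cast; rw [ht, hN]; ring)
    have h1 : t ^ 2 - D * y ^ 2 = 4 * e := by
      have : (t : ℚ) ^ 2 - D * y ^ 2 = 4 * e := by rw [ht, hy, hN]; ring
      exact_mod_cast this
    have h2 : (n : ℤ) * (n - t) = f - e := by
      have : (n : ℚ) * (n - t) = f - e := by rw [ht, hN, hM]; ring
      exact_mod_cast this
    have hn0 : (n : ℤ) ≠ 0 := by exact_mod_cast hn.ne'
    by_cases hef : f = e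
    · have hnt : (n : ℤ) = t := by
        rw [hef, sub_self] at h2
        exact sub_eq_zero.mp ((mul_eq_zero.mp h2).resolve_left hn0)
      refine ⟨y, ?_⟩
      rw [hnt, h1]
      rcases he with rfl | rfl <;> norm_num
    · have hdvd : (n : ℤ) ∣ 2 := by
        rcases he with rfl | rfl <;> rcases hf with rfl | rfl
        · exact absurd rfl hef
        · exact ⟨t - n, by linear_combination h2⟩
        · exact ⟨n - t, by linear_combination -h2⟩
        · exact absurd rfl hef
      have hn2 : n ≤ 2 := by exact_mod_cast Int.le_of_dvd (by norm_num) hdvd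
      obtain rfl | rfl : n = 1 ∨ n = 2 := by omega
      · refine ⟨y, ?_⟩
        rcases he with rfl | rfl <;> rcases hf with rfl | rfl
        · exact absurd rfl hef
        · -- here `ε` has trace `3` and `δ = 1 - ε` has trace `-1` and norm `-1`
          have : t = 3 := by push_cast at h2; omega
          subst this
          right; push_cast; linarith
        · -- here `ε` has trace `-1` and norm `-1`
          have : t = -1 := by push_cast at h2; omega
          subst this
          right; push_cast; linarith
        · exact absurd rfl hef
      · exact ⟨0, by norm_num⟩
  · rintro ⟨hn, y, hy⟩
    refine ⟨hn, ?_⟩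
    rcases hy with hy | hy
    · simpa using isUnit_pair hα (n : ℤ) y 1 (Or.inl rfl) (by linarith)
    · simpa using isUnit_pair hα (n : ℤ) y (-1) (Or.inr rfl) (by linarith)
end

section
/- Let K be a cubic number field, n a positive integer, and ε, δ ∈ O_K^× units with ε + δ = n and δ ∉ ℚ, so that the minimal polynomial of δ over ℚ has the form x³ + a x² + b x + c with a, b ∈ ℤ and c ∈ {1, −1}. Assume n³ + a n² + b n ≠ 0. Then n = 1 or n = 2, and there exists an integer a' ∈ ℤ such that the minimal polynomials of ε and δ over ℚ are, respectively: if n = 1, either (x³ − (a'+3)x² + (a'+4)x − 1 and x³ + a'x² − (a'−1)x − 1) or (x³ − (a'+3)x² + a'x + 1 and x³ + a'x² − (a'+3)x + 1); if n = 2, either (x³ − (a'+6)x² + (2a'+9)x − 1 and x³ + a'x² − (2a'+3)x − 1) or (x³ − (a'+6)x² + (2a'+7)x + 1 and x³ + a'x² − (2a'+5)x + 1). -/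
/-!
The element `ε = n - δ` is a unit exactly when its norm is `±1`, and this norm is the value at `n`
of the characteristic polynomial of multiplication by `δ`. As the minimal polynomial `f` of `δ` has
degree `3 = [K : ℚ]`, it is that characteristic polynomial (`minpoly_eq_charpoly_lmul`), so
`f(n) = ±1` (`isUnit_eval_minpoly`). Since also `f(0) = c = ±1` and `f(n) - f(0) ≠ 0` by
hypothesis, `f(n) = -c`, that is `n (n² + an + b) = -2c`. Hence `n ∣ 2`, and in each of the four
cases given by `n` and `c` this equation expresses `b` through `a`. The minimal polynomial of `ε`
is `-f(n - X)` (`minpoly_of_add_eq_natCast`), and substituting `b` gives the stated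
shapes with `a' = a`.
-/

open NumberField Polynomial

section

variable {K : Type*} [Field K] [NumberField K]

/-- An integer of full degree generates `K`, so its minimal polynomial is the characteristic
polynomial of multiplication by it: the latter kills it by Cayley-Hamilton and has the right
degree. -/
lemma minpoly_eq_charpoly_lmul (x : 𝓞 K)
    (h : (minpoly ℤ x).natDegree = Module.finrank ℚ K) :
    minpoly ℤ x = (Algebra.lmul ℤ (𝓞 K) x).charpoly := by
  have hmonic := LinearMap.charpoly_monic (Algebra.lmul ℤ (𝓞 K) x)
  refine (minpoly.IsIntegrallyClosed.unique_of_degree_le_degree_minpoly hmonic ?_ ?_).symm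
  · apply Algebra.lmul_injective (R := ℤ)
    rw [← Polynomial.aeval_algHom_apply, LinearMap.aeval_self_charpoly, map_zero]
  · rw [Polynomial.degree_eq_natDegree hmonic.ne_zero,
      Polynomial.degree_eq_natDegree (minpoly.ne_zero (RingOfIntegers.isIntegral x)), h,
      LinearMap.charpoly_natDegree, RingOfIntegers.rank]

/-- The value `f(n)` is the norm of `n - δ`, hence a unit as soon as `n - δ` is one. -/
lemma isUnit_eval_minpoly (ε δ : 𝓞 K) (n : ℕ) (hε : IsUnit ε) (hsum : ε + δ = n)
    (h : (minpoly ℤ δ).natDegree = Module.finrank ℚ K) :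
    IsUnit ((minpoly ℤ δ).eval (n : ℤ)) := by
  have hnorm : (minpoly ℤ δ).eval (n : ℤ) = Algebra.norm ℤ ε := by
    rw [minpoly_eq_charpoly_lmul δ h, LinearMap.eval_charpoly, Algebra.norm_apply]
    congr 1
    rw [eq_sub_of_add_eq hsum]
    ext y
    simp
  rw [hnorm]
  exact hε.map _

/-- The minimal polynomial of `n - δ` is `-f(n - X)`, written out for a cubic `f`. Minimality
holds because `f` divides `g(n - X)`, where `g` is the minimal polynomial of `n - δ`, so that
`3 ≤ deg g`. -/
lemma minpoly_of_add_eq_natCast (ε δ : 𝓞 K) (n : ℕ) (hsum : ε + δ = n) (a b c : ℤ)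
    (hmin : minpoly ℤ δ = X ^ 3 + C a * X ^ 2 + C b * X + C c) :
    minpoly ℤ ε = X ^ 3 - C (a + 3 * n) * X ^ 2 + C (3 * n ^ 2 + 2 * a * n + b) * X
      - C (n ^ 3 + a * n ^ 2 + b * n + c) := by
  have hδ : δ ^ 3 + (a : 𝓞 K) * δ ^ 2 + (b : 𝓞 K) * δ + (c : 𝓞 K) = 0 := by
    simpa [hmin] using minpoly.aeval ℤ δ
  have hε : ε = n - δ := eq_sub_of_add_eq hsum
  have hform : (X ^ 3 - C (a + 3 * n) * X ^ 2 + C (3 * n ^ 2 + 2 * a * n + b) * X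
      - C (n ^ 3 + a * n ^ 2 + b * n + c) : ℤ[X]).degree = 3 := by
    compute_degree!
  symm
  refine minpoly.IsIntegrallyClosed.unique_of_degree_le_degree_minpoly ?_ ?_ ?_
  · monicity!
  · simp only [map_add, map_sub, map_mul, map_pow, aeval_X, eq_intCast, map_intCast,
      map_natCast, map_ofNat, hε]
    linear_combination -hδ
  · have hint := RingOfIntegers.isIntegral ε
    have hq0 : (minpoly ℤ ε).comp (C (n : ℤ) - X) ≠ 0 := fun h0 => by
      have h1 := congrArg (fun p : ℤ[X] => p.comp (C (n : ℤ) - X)) h0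
      simp only [comp_assoc, sub_comp, C_comp, X_comp, sub_sub_cancel, comp_X, zero_comp] at h1
      exact minpoly.ne_zero hint h1
    have hdvd : minpoly ℤ δ ∣ (minpoly ℤ ε).comp (C (n : ℤ) - X) := by
      refine minpoly.isIntegrallyClosed_dvd (RingOfIntegers.isIntegral δ) ?_
      rw [aeval_comp]
      simp [← hε]
    have hdeg := natDegree_le_of_dvd hdvd hq0
    have h3 : (minpoly ℤ δ).natDegree = 3 := by rw [hmin]; compute_degree!
    have h1 : (C (n : ℤ) - X).natDegree = 1 := by compute_degree!
    rw [natDegree_comp, h3, h1, mul_one] at hdeg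
    rw [hform, degree_eq_natDegree (minpoly.ne_zero hint)]
    exact_mod_cast hdeg

end

/-- (Lemma 3.1 of the paper.) Let `K` be a cubic field,
`ε, δ` units of `𝓞 K` with `ε + δ = n > 0`, `δ ∉ ℚ`, and let
`x³ + ax² + bx + c` (with `c = ±1`) be the minimal polynomial of `δ`.
If `n³ + an² + bn ≠ 0`, then `n = 1` or `n = 2` and the minimal polynomials of
`ε` and `δ` have the stated shapes for some integer `a'`. -/
theorem sums_of_units_stmt_3 (K : Type*) [Field K] [NumberField K]
    (hK : Module.finrank ℚ K = 3) (n : ℕ) (hn : 0 < n)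
    (ε δ : (𝓞 K)ˣ) (hsum : (ε : 𝓞 K) + (δ : 𝓞 K) = (n : 𝓞 K))
    (hδ : ∀ q : ℚ, algebraMap ℚ K q ≠ ((δ : 𝓞 K) : K))
    (a b c : ℤ) (hc : c = 1 ∨ c = -1)
    (hmin : minpoly ℤ ((δ : 𝓞 K)) = X ^ 3 + C a * X ^ 2 + C b * X + C c)
    (hne : (n : ℤ) ^ 3 + a * (n : ℤ) ^ 2 + b * (n : ℤ) ≠ 0) :
    ∃ a' : ℤ,
      (n = 1 ∧
        ((minpoly ℤ ((ε : 𝓞 K)) = X ^ 3 - C (a' + 3) * X ^ 2 + C (a' + 4) * X - 1 ∧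
          minpoly ℤ ((δ : 𝓞 K)) = X ^ 3 + C a' * X ^ 2 - C (a' - 1) * X - 1) ∨
         (minpoly ℤ ((ε : 𝓞 K)) = X ^ 3 - C (a' + 3) * X ^ 2 + C a' * X + 1 ∧
          minpoly ℤ ((δ : 𝓞 K)) = X ^ 3 + C a' * X ^ 2 - C (a' + 3) * X + 1))) ∨
      (n = 2 ∧
        ((minpoly ℤ ((ε : 𝓞 K)) = X ^ 3 - C (a' + 6) * X ^ 2 + C (2 * a' + 9) * X - 1 ∧
          minpoly ℤ ((δ : 𝓞 K)) = X ^ 3 + C a' * X ^ 2 - C (2 * a' + 3) * X - 1) ∨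
         (minpoly ℤ ((ε : 𝓞 K)) = X ^ 3 - C (a' + 6) * X ^ 2 + C (2 * a' + 7) * X + 1 ∧
          minpoly ℤ ((δ : 𝓞 K)) = X ^ 3 + C a' * X ^ 2 - C (2 * a' + 5) * X + 1))) := by
  have h3 : (minpoly ℤ (δ : 𝓞 K)).natDegree = Module.finrank ℚ K := by
    rw [hmin, hK]; compute_degree!
  have hu := isUnit_eval_minpoly (ε : 𝓞 K) δ n ε.isUnit hsum h3
  have hε := minpoly_of_add_eq_natCast (ε : 𝓞 K) δ n hsum a b c hmin
  simp only [hmin, eval_add, eval_mul, eval_pow, eval_X, eval_C] at hu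
  have hval : (n : ℤ) ^ 3 + a * (n : ℤ) ^ 2 + b * n + c = -c := by
    rcases Int.isUnit_iff.1 hu with h | h <;> rcases hc with rfl | rfl <;>
      first | exact h | exact absurd (by linarith) hne
  have hprod : (n : ℤ) * (n ^ 2 + a * n + b) = -2 * c := by linear_combination hval
  have hdvd : (n : ℤ) ∣ 2 := by
    rcases hc with rfl | rfl
    · exact ⟨-(n ^ 2 + a * n + b), by linear_combination hprod⟩
    · exact ⟨n ^ 2 + a * n + b, by linear_combination -hprod⟩
  have hn2 : n ≤ 2 := Nat.le_of_dvd two_pos (by exact_mod_cast hdvd)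
  rw [hval] at hε
  rw [hε, hmin]
  clear hε hmin hu hval hdvd h3 hne
  refine ⟨a, ?_⟩
  have hn12 : n = 1 ∨ n = 2 := by omega
  rcases hn12 with rfl | rfl
  · refine Or.inl ⟨rfl, ?_⟩
    rcases hc with rfl | rfl
    · obtain rfl : b = -3 - a := by norm_num at hprod; linarith
      refine Or.inr ⟨?_, ?_⟩ <;> simp <;> ring
    · obtain rfl : b = 1 - a := by norm_num at hprod; linarith
      refine Or.inl ⟨?_, ?_⟩ <;> simp <;> ring
  · refine Or.inr ⟨rfl, ?_⟩
    rcases hc with rfl | rfl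
    · obtain rfl : b = -5 - 2 * a := by norm_num at hprod; linarith
      refine Or.inr ⟨?_, ?_⟩ <;> simp <;> ring
    · obtain rfl : b = -3 - 2 * a := by norm_num at hprod; linarith
      refine Or.inl ⟨?_, ?_⟩ <;> simp <;> ring
end

section
/- Let K be a cyclic cubic number field, n a positive integer, and ε, δ ∈ O_K^× units with ε + δ = n and δ ∉ ℚ, so that the minimal polynomial of δ over ℚ has the form x³ + a x² + b x + c with a, b ∈ ℤ and c ∈ {1, −1}. Assume n³ + a n² + b n ≠ 0. Then either (n = 1 and there exist an integer a' ∈ ℤ and an element ρ ∈ O_K with ρ³ − a'ρ² − (a'+3)ρ − 1 = 0 such that {ε, δ} = {−ρ, ρ + 1}), or a ∈ {−10, −6, −5, −4, −2, 0, 2, 4}. -/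
/-!
Write `f = x³ + ax² + bx + c`. Up to sign `f(n)` is the norm of the unit `ε = n - δ`, so
`f(n) = ±1`; as `f(n) - c ≠ 0`, this forces `n³ + an² + bn = -2c`. Hence `n ∣ 2`, and `b` is
determined by `a`, `c` and `n`. Since `K` is cyclic, the discriminant of `f` is the square of an
integer `k ≠ 0`.

* For `n = 1`, `c = 1`, `f(-x)` is up to sign a simplest cubic polynomial, with root `ρ = -δ`.
* For `n = 1`, `c = -1`, the discriminant is `(a² + 3a - 1)² - 32`.
* For `n = 2`, sixteen times the discriminant is `(8a² + 48a + 85)² + 343` if `c = 1` and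
  `(8a² + 48a + 45)² - 729` if `c = -1`.

In the last three cases a nonzero constant is a difference of two squares, which leaves finitely
many `a`. The solution `a = -3`, `c = -1` of the last equation has `k = 0` and is excluded because
`f` is separable.
-/

open NumberField Polynomial

/-- A cyclic cubic field has an automorphism of order three with fixed field `ℚ`, namely a
generator of its Galois group; the algebraic integers fixed by it are therefore in `ℤ`. -/
lemma exists_generator_fixing_only_int (K : Type*) [Field K] [NumberField K]
    (hK : Module.finrank ℚ K = 3) [IsGalois ℚ K] :
    ∃ σ : K ≃ₐ[ℚ] K, (∀ w, σ (σ (σ w)) = w) ∧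
      (∀ w, σ w = w → ∃ q : ℚ, algebraMap ℚ K q = w) ∧
      ∀ w, σ w = w → IsIntegral ℤ w → ∃ m : ℤ, (m : K) = w := by
  have hcard : Nat.card (K ≃ₐ[ℚ] K) = 3 := by rw [IsGalois.card_aut_eq_finrank, hK]
  have : Fact (Nat.Prime 3) := ⟨Nat.prime_three⟩
  have : IsCyclic (K ≃ₐ[ℚ] K) := isCyclic_of_prime_card hcard
  obtain ⟨σ, hσ⟩ := IsCyclic.exists_generator (α := K ≃ₐ[ℚ] K)
  have hrat : ∀ w, σ w = w → ∃ q : ℚ, algebraMap ℚ K q = w := by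
    intro w hw
    have h : ∀ g : K ≃ₐ[ℚ] K, g w = w := fun g =>
      (Subgroup.zpowers_le (H := MulAction.stabilizer (K ≃ₐ[ℚ] K) w)).2 hw (hσ g)
    exact IntermediateField.mem_bot.1 ((IsGalois.mem_bot_iff_fixed w).2 h)
  refine ⟨σ, fun w => ?_, hrat, fun w hw hint => ?_⟩
  · have h3 : σ ^ 3 = 1 := by rw [← hcard]; exact pow_card_eq_one'
    exact DFunLike.congr_fun h3 w
  · obtain ⟨q, rfl⟩ := hrat w hw
    have hq : IsIntegral ℤ q :=
      (isIntegral_algebraMap_iff (algebraMap ℚ K).injective).1 hint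
    obtain ⟨m, rfl⟩ := IsIntegrallyClosed.isIntegral_iff.1 hq
    exact ⟨m, by simp⟩

/-- Vieta's formulas for a monic cubic with three distinct roots. -/
lemma cubic_vieta {F : Type*} [Field F] {a b c x y z : F}
    (hx : x ^ 3 + a * x ^ 2 + b * x + c = 0) (hy : y ^ 3 + a * y ^ 2 + b * y + c = 0)
    (hz : z ^ 3 + a * z ^ 2 + b * z + c = 0) (hxy : x ≠ y) (hyz : y ≠ z) (hzx : z ≠ x) :
    a = -(x + y + z) ∧ b = x * y + y * z + z * x ∧ c = -(x * y * z) := by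
  have h1 : x ^ 2 + x * y + y ^ 2 + a * (x + y) + b = 0 :=
    mul_left_cancel₀ (sub_ne_zero.2 hxy) (by linear_combination hx - hy)
  have h2 : y ^ 2 + y * z + z ^ 2 + a * (y + z) + b = 0 :=
    mul_left_cancel₀ (sub_ne_zero.2 hyz) (by linear_combination hy - hz)
  have h3 : a + (x + y + z) = 0 :=
    mul_left_cancel₀ (sub_ne_zero.2 hzx) (by linear_combination h2 - h1)
  have ha : a = -(x + y + z) := by linear_combination h3
  subst ha
  have hb : b = x * y + y * z + z * x := by linear_combination h1
  subst hb
  exact ⟨rfl, rfl, by linear_combination hx⟩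

/-- The case `n = 1`, `c = -1`, where `(a² + 3a - 1)² - k² = 32`. -/
lemma square_disc_one_neg {a k : ℤ} (h : (a ^ 2 + 3 * a - 1) ^ 2 - k ^ 2 = 32) :
    a = 2 ∨ a = -5 := by
  obtain ⟨m, hm⟩ : ∃ m, m = a ^ 2 + 3 * a - 1 := ⟨_, rfl⟩
  have hst : (m - k) * (m + k) = 32 := by rw [hm]; linear_combination h
  have hd : (m - k).natAbs ∈ Nat.divisors 32 := by
    rw [Nat.mem_divisors]
    exact ⟨Int.natAbs_dvd_natAbs.2 ⟨_, hst.symm⟩, by norm_num⟩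
  rw [show Nat.divisors 32 = {1, 2, 4, 8, 16, 32} by simp [Nat.divisors_ofNat]] at hd
  simp only [Finset.mem_insert, Finset.mem_singleton, Int.natAbs_eq_iff] at hd
  have hm' : m = 9 ∨ m = 6 ∨ m = -9 ∨ m = -6 := by
    rcases hd with (hd | hd) | (hd | hd) | (hd | hd) | (hd | hd) | (hd | hd) | hd | hd <;>
      rw [hd] at hst <;> push_cast at hst hd <;> omega
  have h1 : a ≤ 2 := by
    have : a ^ 2 + 3 * a ≤ 10 := by omega
    nlinarith
  have h2 : -5 ≤ a := by
    have : a ^ 2 + 3 * a ≤ 10 := by omega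
    nlinarith
  interval_cases a <;> omega

/-- The case `n = 2`, `c = 1`, where `k² - (8a² + 48a + 85)² = 343` after scaling. -/
lemma square_disc_two_pos {a k : ℤ} (h : (4 * k) ^ 2 - (8 * a ^ 2 + 48 * a + 85) ^ 2 = 343) :
    a = -2 ∨ a = -4 := by
  obtain ⟨m, hm⟩ : ∃ m, m = 8 * a ^ 2 + 48 * a + 85 := ⟨_, rfl⟩
  have hst : (4 * k - m) * (4 * k + m) = 343 := by rw [hm]; linear_combination h
  have hd : (4 * k - m).natAbs ∈ Nat.divisors 343 := by
    rw [Nat.mem_divisors]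
    exact ⟨Int.natAbs_dvd_natAbs.2 ⟨_, hst.symm⟩, by norm_num⟩
  rw [show Nat.divisors 343 = {1, 7, 49, 343} by simp [Nat.divisors_ofNat]] at hd
  simp only [Finset.mem_insert, Finset.mem_singleton, Int.natAbs_eq_iff] at hd
  have hv : (a + 3) ^ 2 = 1 := by
    have := sq_nonneg (a + 3)
    have hm' : m = 8 * (a + 3) ^ 2 + 13 := by rw [hm]; ring
    rcases hd with (hd | hd) | (hd | hd) | (hd | hd) | hd | hd <;>
      rw [hd] at hst <;> push_cast at hst hd <;> omega
  rcases sq_eq_sq_iff_eq_or_eq_neg.1 (hv.trans (one_pow 2).symm) with h | h <;> omega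

/-- The case `n = 2`, `c = -1`, where `(8a² + 48a + 45)² - k² = 729` after scaling. -/
lemma square_disc_two_neg {a k : ℤ} (hk : k ≠ 0)
    (h : (8 * a ^ 2 + 48 * a + 45) ^ 2 - (4 * k) ^ 2 = 729) :
    a = 4 ∨ a = -10 ∨ a = 0 ∨ a = -6 := by
  obtain ⟨m, hm⟩ : ∃ m, m = 8 * a ^ 2 + 48 * a + 45 := ⟨_, rfl⟩
  have hst : (m - 4 * k) * (m + 4 * k) = 729 := by rw [hm]; linear_combination h
  have hd : (m - 4 * k).natAbs ∈ Nat.divisors 729 := by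
    rw [Nat.mem_divisors]
    exact ⟨Int.natAbs_dvd_natAbs.2 ⟨_, hst.symm⟩, by norm_num⟩
  rw [show Nat.divisors 729 = {1, 3, 9, 27, 81, 243, 729} by simp [Nat.divisors_ofNat]] at hd
  simp only [Finset.mem_insert, Finset.mem_singleton, Int.natAbs_eq_iff] at hd
  -- The divisors `±27` would give `k = 0`. Since `m = 8 * (a + 3) ^ 2 - 27`, the remaining values
  -- of `m` other than `365` and `45` are either below `-27` or in a wrong class mod 8.
  have hv : (a + 3) ^ 2 = 7 ^ 2 ∨ (a + 3) ^ 2 = 3 ^ 2 := by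
    have := sq_nonneg (a + 3)
    have hm' : m = 8 * (a + 3) ^ 2 - 27 := by rw [hm]; ring
    rcases hd with
      (hd | hd) | (hd | hd) | (hd | hd) | (hd | hd) | (hd | hd) | (hd | hd) | hd | hd <;>
      rw [hd] at hst <;> push_cast at hst hd <;> omega
  rcases hv with hv | hv <;> rcases sq_eq_sq_iff_eq_or_eq_neg.1 hv with h | h <;> omega

/-- (Lemma 5.1 of the paper.) Let `K` be a cyclic cubic field,
`ε, δ` units of `𝓞 K` with `ε + δ = n > 0`, `δ ∉ ℚ`, and let
`x³ + ax² + bx + c` (with `c = ±1`) be the minimal polynomial of `δ`.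
If `n³ + an² + bn ≠ 0`, then either `n = 1` and `{ε, δ} = {−ρ, ρ+1}` for a root
`ρ ∈ 𝓞 K` of `x³ − a'x² − (a'+3)x − 1` for some `a' ∈ ℤ`, or
`a ∈ {−10, −6, −5, −4, −2, 0, 2, 4}`. -/
theorem sums_of_units_stmt_6 (K : Type*) [Field K] [NumberField K]
    (hK : Module.finrank ℚ K = 3) [IsGalois ℚ K]
    (n : ℕ) (hn : 0 < n)
    (ε δ : (𝓞 K)ˣ) (hsum : (ε : 𝓞 K) + (δ : 𝓞 K) = (n : 𝓞 K))
    (hδ : ∀ q : ℚ, algebraMap ℚ K q ≠ ((δ : 𝓞 K) : K))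
    (a b c : ℤ) (hc : c = 1 ∨ c = -1)
    (hmin : minpoly ℤ ((δ : 𝓞 K)) = X ^ 3 + C a * X ^ 2 + C b * X + C c)
    (hne : (n : ℤ) ^ 3 + a * (n : ℤ) ^ 2 + b * (n : ℤ) ≠ 0) :
    (n = 1 ∧ ∃ (a' : ℤ) (ρ : 𝓞 K),
        ρ ^ 3 - (a' : 𝓞 K) * ρ ^ 2 - ((a' : 𝓞 K) + 3) * ρ - 1 = 0 ∧
        ({(ε : 𝓞 K), (δ : 𝓞 K)} : Set (𝓞 K)) = {-ρ, ρ + 1}) ∨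
    a ∈ ({-10, -6, -5, -4, -2, 0, 2, 4} : Set ℤ) := by
  obtain ⟨σ, hσ3, hrat, hint⟩ := exists_generator_fixing_only_int K hK
  have hδO : (δ : 𝓞 K) ^ 3 + (a : 𝓞 K) * (δ : 𝓞 K) ^ 2 + (b : 𝓞 K) * (δ : 𝓞 K)
      + (c : 𝓞 K) = 0 := by
    have h := minpoly.aeval ℤ (δ : 𝓞 K)
    rw [hmin] at h
    simpa using h
  obtain ⟨x, hx⟩ : ∃ x : K, x = ((δ : 𝓞 K) : K) := ⟨_, rfl⟩
  have hxint : IsIntegral ℤ x := hx ▸ RingOfIntegers.isIntegral_coe _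
  have hfx : x ^ 3 + (a : K) * x ^ 2 + (b : K) * x + (c : K) = 0 := by
    have h := congrArg (algebraMap (𝓞 K) K) hδO
    simpa [hx] using h
  have hfy : (σ x) ^ 3 + (a : K) * (σ x) ^ 2 + (b : K) * (σ x) + (c : K) = 0 := by
    simpa using congrArg σ hfx
  have hfz : (σ (σ x)) ^ 3 + (a : K) * (σ (σ x)) ^ 2 + (b : K) * (σ (σ x)) + (c : K) = 0 := by
    simpa using congrArg σ hfy
  have hxy : x ≠ σ x := fun h => by
    obtain ⟨q, hq⟩ := hrat x h.symm
    exact hδ q (hq.trans hx)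
  have hyz : σ x ≠ σ (σ x) := fun h => hxy (σ.injective h)
  have hzx : σ (σ x) ≠ x := fun h => hyz (by rw [h]; exact (congrArg σ h).symm.trans (hσ3 x))
  obtain ⟨ha, hb, hc'⟩ := cubic_vieta hfx hfy hfz hxy hyz hzx
  have hσint : ∀ w : K, IsIntegral ℤ w → IsIntegral ℤ (σ w) := fun w hw =>
    hw.map (σ.toAlgHom.restrictScalars ℤ)
  -- The square root of the discriminant given by the cyclic ordering of the roots is `σ`-fixed.
  obtain ⟨k, hk⟩ := hint ((x - σ x) * (σ x - σ (σ x)) * (σ (σ x) - x))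
    (by simp only [map_mul, map_sub, hσ3]; ring)
    (((hxint.sub (hσint _ hxint)).mul ((hσint _ hxint).sub (hσint _ (hσint _ hxint)))).mul
      ((hσint _ (hσint _ hxint)).sub hxint))
  have hk0 : k ≠ 0 := by
    rintro rfl
    rw [Int.cast_zero] at hk
    exact mul_ne_zero (mul_ne_zero (sub_ne_zero.2 hxy) (sub_ne_zero.2 hyz))
      (sub_ne_zero.2 hzx) hk.symm
  have hdisc : k ^ 2 = a ^ 2 * b ^ 2 - 4 * b ^ 3 - 4 * a ^ 3 * c - 27 * c ^ 2
      + 18 * a * b * c := by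
    have : ((k : K)) ^ 2 = (a : K) ^ 2 * (b : K) ^ 2 - 4 * (b : K) ^ 3 - 4 * (a : K) ^ 3 * (c : K)
        - 27 * (c : K) ^ 2 + 18 * (a : K) * (b : K) * (c : K) := by
      rw [hk, ha, hb, hc']; ring
    exact_mod_cast this
  -- The norm of `ε⁻¹` is an integer inverse of `f(n)`.
  obtain ⟨u, hu⟩ : ∃ u : K, u = ((ε⁻¹ : (𝓞 K)ˣ) : 𝓞 K) := ⟨_, rfl⟩
  have huint : IsIntegral ℤ u := hu ▸ RingOfIntegers.isIntegral_coe _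
  have hux : (n - x) * u = 1 := by
    have h1 : ((n : 𝓞 K) - (δ : 𝓞 K)) * ((ε⁻¹ : (𝓞 K)ˣ) : 𝓞 K) = 1 := by
      rw [← hsum, add_sub_cancel_right, Units.mul_inv]
    have h := congrArg (algebraMap (𝓞 K) K) h1
    simpa [hx, hu] using h
  have huy : (n - σ x) * σ u = 1 := by simpa using congrArg σ hux
  have huz : (n - σ (σ x)) * σ (σ u) = 1 := by simpa using congrArg σ huy
  obtain ⟨m, hm⟩ := hint (u * σ u * σ (σ u)) (by simp only [map_mul, hσ3]; ring)
    ((huint.mul (hσint _ huint)).mul (hσint _ (hσint _ huint)))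
  have hfn : ((n : ℤ) ^ 3 + a * (n : ℤ) ^ 2 + b * (n : ℤ) + c) * m = 1 := by
    have : ((n : K) ^ 3 + (a : K) * (n : K) ^ 2 + (b : K) * (n : K) + (c : K)) * (m : K) = 1 := by
      calc _ = ((n - x) * u) * ((n - σ x) * σ u) * ((n - σ (σ x)) * σ (σ u)) := by
            rw [hm, ha, hb, hc']; ring
        _ = 1 := by rw [hux, huy, huz]; ring
    exact_mod_cast this
  have hval : (n : ℤ) ^ 3 + a * (n : ℤ) ^ 2 + b * (n : ℤ) = -2 * c := by
    rcases Int.eq_one_or_neg_one_of_mul_eq_one hfn with h | h <;> rcases hc with rfl | rfl <;>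
      omega
  have hn2 : n ≤ 2 := by
    have hdvd : (n : ℤ) ∣ 2 := by
      have h : (n : ℤ) ∣ -2 * c := ⟨(n : ℤ) ^ 2 + a * n + b, by rw [← hval]; ring⟩
      rcases hc with rfl | rfl <;> simpa using h
    exact_mod_cast Int.le_of_dvd (by norm_num) hdvd
  obtain rfl | rfl : n = 1 ∨ n = 2 := by omega
  · rcases hc with rfl | rfl
    · left
      obtain rfl : b = -a - 3 := by push_cast at hval; linarith
      refine ⟨rfl, a, -(δ : 𝓞 K), ?_, ?_⟩
      · push_cast at hδO
        linear_combination -hδO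
      · rw [neg_neg, Set.pair_comm, eq_sub_of_add_eq hsum]
        congr 2
        push_cast; ring
    · right
      obtain rfl : b = 1 - a := by push_cast at hval; linarith
      rcases square_disc_one_neg (a := a) (k := k) (by rw [hdisc]; ring) with h | h <;> simp [h]
  · right
    rcases hc with rfl | rfl
    · obtain rfl : b = -5 - 2 * a := by push_cast at hval; linarith
      rcases square_disc_two_pos (a := a) (k := k) (by rw [mul_pow, hdisc]; ring) with h | h <;>
        simp [h]
    · obtain rfl : b = -3 - 2 * a := by push_cast at hval; linarith
      rcases square_disc_two_neg (a := a) hk0 (by rw [mul_pow, hdisc]; ring)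
        with h | h | h | h <;> simp [h]
end

section
/- Let U, V ∈ ℤ be integers such that (UV)²(U+V)² − 2(U−V)³ + 6(U³−V³) − 27 is the square of an integer. Then there exists an integer W ∈ ℤ such that U³ − W·U²V − (W+3)·UV² − V³ = W² + 3W + 9. -/
/-- If the discriminant quantity
`(UV)²(U+V)² − 2(U−V)³ + 6(U³−V³) − 27` is a perfect square, then there is an
integer `W` with `U³ − W·U²V − (W+3)·UV² − V³ = W² + 3W + 9`. -/
theorem sums_of_units_stmt_7 (U V : ℤ)
    (h : ∃ k : ℤ,
      (U * V) ^ 2 * (U + V) ^ 2 - 2 * (U - V) ^ 3 + 6 * (U ^ 3 - V ^ 3) - 27 = k ^ 2) :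
    ∃ W : ℤ, U ^ 3 - W * U ^ 2 * V - (W + 3) * U * V ^ 2 - V ^ 3 = W ^ 2 + 3 * W + 9 := by
  obtain ⟨k, hk⟩ := h
  -- Read as a quadratic `W² + bW + c = 0` with `b = UV(U + V) + 3` and
  -- `c = 9 - U³ + V³ + 3UV²`, the equation has discriminant `b² - 4c = k²`.
  have hdisc : k ^ 2 - (U * V * (U + V) + 3) ^ 2 = 2 * (2 * (U ^ 3 - V ^ 3 - 3 * U * V ^ 2 - 9)) := by
    rw [← hk]; ring
  -- Hence `k ≡ b` modulo 2, and the root `(k - b) / 2` is an integer.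
  have heven : Even (k - (U * V * (U + V) + 3)) := by
    have h2 : Even (k ^ 2 - (U * V * (U + V) + 3) ^ 2) := hdisc ▸ even_two_mul _
    simpa [Int.even_sub, Int.even_pow] using h2
  obtain ⟨W, hW⟩ := heven
  have hkW : k = 2 * W + (U * V * (U + V) + 3) := by linarith
  subst hkW
  exact ⟨W, by linarith⟩
end

section
/- Let K be a cyclic cubic field such that K contains no root of f_a(x) = x³ − a x² − (a+3)x − 1 for any integer a ∈ ℤ (i.e., K is not isomorphic to any simplest cubic field). Then N_K = {2}. -/
/-!
If `ε + δ = n` with units `ε, δ`, write `x, y, z` for the conjugates of `ε`, `N = xyz` and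
`M = (n - x)(n - y)(n - z)`; both are `±1`, and `n ∣ M + N`.

Suppose `M = -N`. With `c = x + y + z - n` the elements `x, y, z` are the roots of
`X (X - n) (X - c) - N`, so all entries of the matrix with rows `(x, x - n, x - c)`,
`(y, y - n, y - c)`, `(z, z - n, z - c)` are units. Its generalized diagonal
`κ = N x (y - n) (z - c)` then has norm `1` and trace `3`. An element `κ` of trace `3`, norm `1`
and second symmetric function `S` has discriminant `-(4 S + 15) (S - 3) ^ 2`; as the field is cyclic
cubic, this is a square in `ℚ`, so when `S ≠ 3` we get `-(4 S + 15) = (2 a + 3) ^ 2` for an integer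
`a`; the sign of `2 a + 3` depends on the cyclic order of the conjugates `κ, κ', κ''`, so that the
order can be chosen with `a ≠ -3`. Then `θ = -(1 + κ'' + κ' κ'') / (a + 3)` satisfies
`σ θ = -1 / (1 + θ)` and is a root of `f_a`. (Conversely `σ θ / θ` has trace `3` and norm `1` when
`θ` is a root of `f_a` with `σ θ = -1 / (1 + θ)`.) The condition `S ≠ 3` amounts to `κ ≠ 1`, and `κ = 1` would force `n ^ 2 - n c + c ^ 2 = 0`.

If `M = N`, then `n ∣ 2`. For `n = 1` and `N = -1` the element `-ε` is itself a root of some `f_a`;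
for `n = 1` and `N = 1` the relation `ε⁻¹ + (-δ ε⁻¹) = 1` falls under the first case.
-/

open NumberField

/-- The discriminant of `X ^ 3 - 3 X ^ 2 + S X - 1` is `-(4 S + 15) (S - 3) ^ 2`; if its
square root is `-(2 a + 3) (S - 3)`, then `-(4 S + 15) = (2 a + 3) ^ 2`. -/
lemma trace_three_param {K : Type*} [Field K] [CharZero K] {p q r S a : K}
    (h1 : p + q + r = 3) (h3 : p * q * r = 1) (hS : p * q + q * r + r * p = S) (hS3 : S ≠ 3)
    (ha : (p - q) * (q - r) * (r - p) = -(2 * a + 3) * (S - 3)) :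
    S = -(a ^ 2 + 3 * a + 6) := by
  have h : (2 * a + 3) ^ 2 * (S - 3) ^ 2 = -(4 * S + 15) * (S - 3) ^ 2 := by
    rw [← mul_pow, ← neg_sq, ← neg_mul, ← ha]
    obtain rfl : r = 3 - p - q := by linear_combination h1
    subst hS
    clear ha hS3 h1
    grind
  have h' := mul_right_cancel₀ (pow_ne_zero 2 (sub_ne_zero.mpr hS3)) h
  linear_combination (1 / 4 : K) * h'

/-- With `θ = -(1 + r + q r) / (a + 3)` and `θ' = -(1 + p + r p) / (a + 3)`, this is the relation
`1 + θ' + θ θ' = 0`, cleared of denominators. -/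
lemma trace_three_moebius {K : Type*} [Field K] [CharZero K] {p q r S a : K}
    (h1 : p + q + r = 3) (h3 : p * q * r = 1) (hS : p * q + q * r + r * p = S) (hS3 : S ≠ 3)
    (ha : (p - q) * (q - r) * (r - p) = -(2 * a + 3) * (S - 3)) :
    (a + 3) ^ 2 - (a + 3) * (1 + p + r * p) + (1 + r + q * r) * (1 + p + r * p) = 0 := by
  have hSa := trace_three_param h1 h3 hS hS3 ha
  apply mul_right_cancel₀ (mul_ne_zero two_ne_zero (sub_ne_zero.mpr hS3))
  have e : 2 * a * (S - 3) = -(p - q) * (q - r) * (r - p) - 3 * (S - 3) := by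
    linear_combination ha
  have e2 : a ^ 2 * (S - 3) = (-S - 6) * (S - 3) - 3 * a * (S - 3) := by
    linear_combination (S - 3) * hSa
  obtain rfl : r = 3 - p - q := by linear_combination h1
  subst hS
  clear ha hS3 h1
  grind

/-- Three conjugates `p, q, r` of trace `3` and norm `1` whose discriminant has the square root
`-(2 a + 3) (S - 3)` yield a root of `f_a`. -/
lemma root_of_trace_three {K : Type*} [Field K] [CharZero K] {p q r S a : K}
    (h1 : p + q + r = 3) (h3 : p * q * r = 1) (hS : p * q + q * r + r * p = S) (hS3 : S ≠ 3)
    (ha : (p - q) * (q - r) * (r - p) = -(2 * a + 3) * (S - 3)) (ha3 : a + 3 ≠ 0) :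
    ∃ ρ : K, ρ ^ 3 - a * ρ ^ 2 - (a + 3) * ρ - 1 = 0 := by
  have hSa := trace_three_param h1 h3 hS hS3 ha
  have k01 := trace_three_moebius h1 h3 hS hS3 ha
  have k12 := trace_three_moebius (p := q) (q := r) (r := p) (S := S) (a := a)
    (by linear_combination h1) (by linear_combination h3) (by linear_combination hS) hS3
    (by linear_combination ha)
  have k20 := trace_three_moebius (p := r) (q := p) (r := q) (S := S) (a := a)
    (by linear_combination h1) (by linear_combination h3) (by linear_combination hS) hS3
    (by linear_combination ha)
  have e1 : (1 + r + q * r) + (1 + p + r * p) + (1 + q + p * q) + a * (a + 3) = 0 := by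
    linear_combination h1 + hS + hSa
  generalize 1 + r + q * r = m₀ at *
  generalize 1 + p + r * p = m₁ at *
  generalize 1 + q + p * q = m₂ at *
  have e2 : m₀ * m₁ + m₁ * m₂ + m₂ * m₀ + (a + 3) ^ 3 = 0 := by
    linear_combination k01 + k12 + k20 + (a + 3) * e1
  have e3 : m₀ * m₁ * m₂ + (a + 3) ^ 3 = 0 := by
    linear_combination m₂ * k01 + (a + 3) * k12
  refine ⟨-m₀ / (a + 3), ?_⟩
  field_simp
  linear_combination (-m₀ ^ 2) * e1 + m₀ * e2 - e3

/-- A generator `σ` of the Galois group: its cube is the identity, and an integral element fixed by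
`σ` is rational, hence a rational integer. -/
lemma exists_generator (K : Type*) [Field K] [NumberField K]
    (hK : Module.finrank ℚ K = 3) [IsGalois ℚ K] :
    ∃ σ : K ≃ₐ[ℚ] K, (∀ x, σ (σ (σ x)) = x) ∧
      ∀ x, IsIntegral ℤ x → σ x = x → ∃ z : ℤ, x = z := by
  have hc : Nat.card (K ≃ₐ[ℚ] K) = 3 := by rw [IsGalois.card_aut_eq_finrank, hK]
  have : Fact (Nat.Prime 3) := ⟨Nat.prime_three⟩
  have : IsCyclic (K ≃ₐ[ℚ] K) := isCyclic_of_prime_card hc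
  obtain ⟨σ, hσ⟩ := IsCyclic.exists_generator (α := K ≃ₐ[ℚ] K)
  refine ⟨σ, fun x => ?_, fun x hx hfix => ?_⟩
  · have h : σ ^ 3 = 1 := by rw [← hc]; exact pow_card_eq_one'
    simpa [pow_succ] using congrArg (fun τ : K ≃ₐ[ℚ] K => τ x) h
  · have hall : ∀ τ : K ≃ₐ[ℚ] K, τ x = x := by
      intro τ
      have : σ ∈ MulAction.stabilizer (K ≃ₐ[ℚ] K) x := hfix
      exact (Subgroup.zpowers_le.mpr this) (hσ τ)
    obtain ⟨y, rfl⟩ := (IsGalois.mem_range_algebraMap_iff_fixed x).mpr hall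
    rw [isIntegral_algebraMap_iff (algebraMap ℚ K).injective] at hx
    obtain ⟨z, rfl⟩ := IsIntegrallyClosed.isIntegral_iff.mp hx
    exact ⟨z, by simp⟩

/-- Here `σ` generates the Galois group of a cyclic cubic field. An integral `p` of trace `3` and norm `1`, other than `1` itself
(which is what `S ≠ 3` says), yields a root of some `f_a`. -/
lemma root_of_integral_trace_three {K : Type*} [Field K] [NumberField K] (σ : K ≃ₐ[ℚ] K)
    (hσ : ∀ x, IsIntegral ℤ x → σ x = x → ∃ z : ℤ, x = z) {p q r S : K}
    (hp : IsIntegral ℤ p) (hq : IsIntegral ℤ q) (hr : IsIntegral ℤ r)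
    (hpq : σ p = q) (hqr : σ q = r) (hrp : σ r = p)
    (h1 : p + q + r = 3) (h3 : p * q * r = 1) (hS : p * q + q * r + r * p = S) (hS3 : S ≠ 3) :
    ∃ (a : ℤ) (ρ : K), ρ ^ 3 - (a : K) * ρ ^ 2 - ((a : K) + 3) * ρ - 1 = 0 := by
  have hS3' : S - 3 ≠ 0 := sub_ne_zero.mpr hS3
  have hSint : IsIntegral ℤ S := hS ▸ ((hp.mul hq).add (hq.mul hr)).add (hr.mul hp)
  have hSfix : σ S = S := by
    rw [← hS]; simp only [map_add, map_mul, hpq, hqr, hrp]; ring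
  obtain ⟨s, hs⟩ := hσ S hSint hSfix
  obtain ⟨w, hw⟩ : ∃ w, w = (p - q) * (q - r) * (r - p) / (S - 3) := ⟨_, rfl⟩
  have hV : (p - q) * (q - r) * (r - p) = w * (S - 3) := by rw [hw]; field_simp
  have hw2 : w ^ 2 = -(4 * S + 15) := by
    have := trace_three_param (a := (-w - 3) / 2) h1 h3 hS hS3 (by rw [hV]; ring)
    linear_combination (4 : K) * this
  have hwint : IsIntegral ℤ w := by
    refine IsIntegral.of_pow two_pos ?_
    rw [hw2, hs]
    exact_mod_cast (isIntegral_algebraMap (R := ℤ) (A := K) (x := -(4 * s + 15)))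
  have hwfix : σ w = w := by
    rw [hw, map_div₀, map_sub, hSfix]
    simp only [map_mul, map_sub, hpq, hqr, hrp, map_ofNat]
    congr 1; ring
  obtain ⟨z, rfl⟩ := hσ w hwint hwfix
  have hz : z ^ 2 = -(4 * s + 15) := by
    rw [hs] at hw2; exact_mod_cast hw2
  obtain ⟨k, rfl⟩ : Odd z := by
    rw [← Int.not_even_iff_odd]
    rintro ⟨t, rfl⟩
    have : 4 * (t ^ 2 + s + 4) = 1 := by linear_combination hz
    omega
  push_cast at hV
  -- Reversing the cyclic order replaces `a` by `-3 - a`, so `a + 3 = 0` can be avoided.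
  by_cases hk : k = 1
  · subst hk
    obtain ⟨ρ, h⟩ := root_of_trace_three (p := p) (q := r) (r := q) (S := S) (a := 0)
      (by linear_combination h1) (by linear_combination h3) (by linear_combination hS) hS3
      (by push_cast at hV; linear_combination -hV) (by norm_num)
    exact ⟨0, ρ, by simpa using h⟩
  · obtain ⟨ρ, h⟩ := root_of_trace_three (a := ((-k - 2 : ℤ) : K)) h1 h3 hS hS3
      (by push_cast; linear_combination hV)
      (by
        intro h
        have : (-k - 2 : ℤ) + 3 = 0 := by exact_mod_cast h
        omega)
    exact ⟨_, ρ, h⟩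

/-- If `x` and `x - n` have the same norm `N = ± 1`, then the generalized diagonal
`N x (y - n) (z - c)` has trace `3` and norm `1`, and the field contains a root of some `f_a`. -/
lemma root_of_norm_eq {K : Type*} [Field K] [NumberField K] (σ : K ≃ₐ[ℚ] K)
    (hσ : ∀ x, IsIntegral ℤ x → σ x = x → ∃ z : ℤ, x = z) {x y z : K} {n N : ℤ}
    (hx : IsIntegral ℤ x) (hy : IsIntegral ℤ y) (hz : IsIntegral ℤ z)
    (hxy : σ x = y) (hyz : σ y = z) (hzx : σ z = x) (hn : n ≠ 0) (hN : N ^ 2 = 1)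
    (h0 : x * y * z = N) (h1 : (x - n) * (y - n) * (z - n) = N) :
    ∃ (a : ℤ) (ρ : K), ρ ^ 3 - (a : K) * ρ ^ 2 - ((a : K) + 3) * ρ - 1 = 0 := by
  obtain ⟨c, hc⟩ : ∃ c : ℤ, x + y + z - n = c := by
    refine hσ _ (((hx.add hy).add hz).sub (isIntegral_algebraMap (R := ℤ) (x := n))) ?_
    simp only [map_sub, map_add, hxy, hyz, hzx, map_intCast]
    ring
  have hn' : (n : K) ≠ 0 := by exact_mod_cast hn
  have hN' : (N : K) ^ 2 = 1 := by exact_mod_cast hN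
  have hnint : IsIntegral ℤ (n : K) := isIntegral_algebraMap (R := ℤ) (x := n)
  have hcint : IsIntegral ℤ (c : K) := isIntegral_algebraMap (R := ℤ) (x := c)
  have hNint : IsIntegral ℤ (N : K) := isIntegral_algebraMap (R := ℤ) (x := N)
  have e2 : x * y + y * z + z * x = n * c := by
    apply mul_left_cancel₀ hn'
    linear_combination h0 - h1 + (n : K) ^ 2 * hc
  have hcN : (x - c) * (y - c) * (z - c) = N := by
    linear_combination h0 - (c : K) * e2 + (c : K) ^ 2 * hc
  have e1 : (N * x * (y - n) * (z - c)) + (N * y * (z - n) * (x - c)) +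
      (N * z * (x - n) * (y - c)) = 3 := by
    linear_combination (3 * N : K) * h0 - (N * (c + n) : K) * e2 + (N * n * c : K) * hc + 3 * hN'
  have e3 : (N * x * (y - n) * (z - c)) * (N * y * (z - n) * (x - c)) *
      (N * z * (x - n) * (y - c)) = 1 := by
    have : (N : K) ^ 3 * (x * y * z) * ((x - n) * (y - n) * (z - n)) *
        ((x - c) * (y - c) * (z - c)) = 1 := by
      rw [h0, h1, hcN]
      linear_combination ((N : K) ^ 4 + (N : K) ^ 2 + 1) * hN'
    linear_combination this
  refine root_of_integral_trace_three σ hσ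
    (p := N * x * (y - n) * (z - c)) (q := N * y * (z - n) * (x - c))
    (r := N * z * (x - n) * (y - c))
    (((hNint.mul hx).mul (hy.sub hnint)).mul (hz.sub hcint))
    (((hNint.mul hy).mul (hz.sub hnint)).mul (hx.sub hcint))
    (((hNint.mul hz).mul (hx.sub hnint)).mul (hy.sub hcint))
    (by simp [hxy, hyz, hzx]) (by simp [hxy, hyz, hzx]) (by simp [hxy, hyz, hzx])
    e1 e3 rfl ?_
  intro hS
  -- Then `p, q, r` are the roots of `(X - 1) ^ 3`, so all three equal `1`.
  have hp : N * x * (y - n) * (z - c) = 1 := by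
    have : (N * x * (y - n) * (z - c) - 1) ^ 3 = 0 := by
      generalize N * x * (y - n) * (z - c) = p at *
      generalize N * y * (z - n) * (x - c) = q at *
      generalize N * z * (x - n) * (y - c) = r at *
      linear_combination (p ^ 2) * e1 - p * hS + e3
    exact sub_eq_zero.mp (pow_eq_zero_iff three_ne_zero |>.mp this)
  have hNx : (N * x : K) ≠ 0 := by
    intro h; rw [h] at hp; simp at hp
  have l1 : c * y + n * z = n * c := by
    apply mul_left_cancel₀ hNx
    linear_combination -hp + (N : K) * h0 + hN'
  have l2 : c * z + n * x = n * c := by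
    have := congrArg σ l1
    simpa [hyz, hzx] using this
  have l3 : c * x + n * y = n * c := by
    have := congrArg σ l2
    simpa [hxy, hzx] using this
  have hK : ((c : K) + n) ^ 2 = 3 * n * c := by
    linear_combination l1 + l2 + l3 - (c + n : K) * hc
  have hZ : (c + n) ^ 2 = 3 * n * c := by exact_mod_cast hK
  have : 0 < n ^ 2 := by positivity
  nlinarith [sq_nonneg (2 * c - n)]

/-- The product of the conjugates of a unit `x` (with inverse `x'`) of a cyclic cubic field is
`± 1`. -/
lemma norm_unit {K : Type*} [Field K] [NumberField K] (σ : K ≃ₐ[ℚ] K)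
    (hσ3 : ∀ x, σ (σ (σ x)) = x) (hσ : ∀ x, IsIntegral ℤ x → σ x = x → ∃ z : ℤ, x = z)
    {x x' : K} (hx : IsIntegral ℤ x) (hx' : IsIntegral ℤ x') (h : x * x' = 1) :
    ∃ N : ℤ, (N = 1 ∨ N = -1) ∧ x * σ x * σ (σ x) = N := by
  have key : ∀ t : K, IsIntegral ℤ t → ∃ N : ℤ, t * σ t * σ (σ t) = N := by
    intro t ht
    refine hσ _ ((ht.mul (ht.map σ)).mul ((ht.map σ).map σ)) ?_
    simp only [map_mul, hσ3]
    ring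
  obtain ⟨N, hN⟩ := key x hx
  obtain ⟨N', hN'⟩ := key x' hx'
  refine ⟨N, Int.isUnit_iff.mp (IsUnit.of_mul_eq_one N' ?_), hN⟩
  have h1 : σ x * σ x' = 1 := by rw [← map_mul, h, map_one]
  have h2 : σ (σ x) * σ (σ x') = 1 := by rw [← map_mul, h1, map_one]
  have : (N : K) * N' = 1 := by
    rw [← hN, ← hN']
    linear_combination h + x * x' * h1 + x * x' * (σ x * σ x') * h2
  exact_mod_cast this

/-- Let `K` be a cyclic cubic field containing no root of
`f_a(x) = x³ − ax² − (a+3)x − 1` for any `a ∈ ℤ` (i.e. `K` is not isomorphic to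
any simplest cubic field). Then `N_K = {2}`. -/
theorem sums_of_units_stmt_12 (K : Type*) [Field K] [NumberField K]
    (hK : Module.finrank ℚ K = 3) [IsGalois ℚ K]
    (hnotsimp : ∀ (a : ℤ) (ρ : K),
      ρ ^ 3 - (a : K) * ρ ^ 2 - ((a : K) + 3) * ρ - 1 ≠ 0) :
    NK K = {2} := by
  ext n
  simp only [NK, Set.mem_ofPred_eq, Set.mem_singleton_iff]
  constructor
  swap
  · rintro rfl
    exact ⟨two_pos, 1, 1, by norm_num⟩
  rintro ⟨hn, ε, δ, hsum⟩
  by_contra hn2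
  suffices h : ∃ (a : ℤ) (ρ : K), ρ ^ 3 - (a : K) * ρ ^ 2 - ((a : K) + 3) * ρ - 1 = 0 by
    obtain ⟨a, ρ, h⟩ := h
    exact hnotsimp a ρ h
  obtain ⟨σ, hσ3, hσ⟩ := exists_generator K hK
  have hint : ∀ u : 𝓞 K, IsIntegral ℤ (u : K) := fun u => RingOfIntegers.isIntegral_coe u
  have hinv : ∀ u : (𝓞 K)ˣ, ((u : 𝓞 K) : K) * (((u⁻¹ : (𝓞 K)ˣ) : 𝓞 K) : K) = 1 := by
    intro u
    rw [← map_mul, Units.mul_inv, map_one]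
  have hs : ((ε : 𝓞 K) : K) + ((δ : 𝓞 K) : K) = ((n : ℤ) : K) := by
    have := congrArg (algebraMap (𝓞 K) K) hsum
    simpa using this
  obtain ⟨N, hN, hεN⟩ := norm_unit σ hσ3 hσ (hint ε) (hint _) (hinv ε)
  obtain ⟨M, hM, hδM⟩ := norm_unit σ hσ3 hσ (hint δ) (hint _) (hinv δ)
  have hε' := hinv ε
  have hi' := hint ((ε⁻¹ : (𝓞 K)ˣ) : 𝓞 K)
  have hi := hint ε
  generalize (((ε⁻¹ : (𝓞 K)ˣ) : 𝓞 K) : K) = x' at *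
  generalize ((ε : 𝓞 K) : K) = x at *
  have hδ : ((δ : 𝓞 K) : K) = (n : ℤ) - x := by linear_combination hs
  rw [hδ] at hδM
  simp only [map_sub, map_intCast] at hδM
  have hn0 : (n : ℤ) ≠ 0 := by omega
  by_cases hMN : M = -N
  · subst hMN
    refine root_of_norm_eq σ hσ hi (hi.map σ) ((hi.map σ).map σ) rfl rfl (hσ3 x) hn0
      (N := N) (by rcases hN with rfl | rfl <;> norm_num) hεN ?_
    push_cast at hδM ⊢
    linear_combination -hδM
  obtain rfl : N = M := by omega
  have e1 : ∃ e : ℤ, x + σ x + σ (σ x) = e := by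
    refine hσ _ ((hi.add (hi.map σ)).add ((hi.map σ).map σ)) ?_
    simp only [map_add, hσ3]; ring
  have e2 : ∃ e : ℤ, x * σ x + σ x * σ (σ x) + σ (σ x) * x = e := by
    refine hσ _ (((hi.mul (hi.map σ)).add ((hi.map σ).mul ((hi.map σ).map σ))).add
      (((hi.map σ).map σ).mul hi)) ?_
    simp only [map_add, map_mul, hσ3]; ring
  obtain ⟨a, ha⟩ := e1
  obtain ⟨b, hb⟩ := e2
  have hab : (n : ℤ) * (n ^ 2 - a * n + b) = 2 * N := by
    have : ((n : ℤ) : K) * ((n : ℤ) ^ 2 - a * (n : ℤ) + b) = 2 * N := by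
      rw [← ha, ← hb]
      linear_combination hδM + hεN
    exact_mod_cast this
  have hn1 : n = 1 := by
    have h2 : (n : ℤ) ∣ 2 := by
      rcases hN with rfl | rfl
      · exact ⟨n ^ 2 - a * n + b, by linear_combination -hab⟩
      · exact ⟨-(n ^ 2 - a * n + b), by linear_combination hab⟩
    have h2' : n ∣ 2 := by exact_mod_cast h2
    rcases (Nat.dvd_prime Nat.prime_two).mp h2' with h | h
    · exact h
    · exact absurd h hn2
  subst hn1
  rcases hN with rfl | rfl
  · -- `x⁻¹` has norm `1`, and so does `x⁻¹ - 1 = δ x⁻¹`.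
    have hi1 := congrArg σ hε'
    have hi2 := congrArg σ hi1
    simp only [map_mul, map_one] at hi1 hi2
    have hN' : x' * σ x' * σ (σ x') = ((1 : ℤ) : K) := by
      push_cast at hεN ⊢
      linear_combination hε' + x * x' * hi1 + x * x' * (σ x * σ x') * hi2
        - x' * σ x' * σ (σ x') * hεN
    refine root_of_norm_eq σ hσ hi' (hi'.map σ) ((hi'.map σ).map σ) rfl rfl (hσ3 x')
      (n := 1) (N := 1) one_ne_zero (by norm_num) hN' ?_
    have f0 : x' - 1 = x' * (1 - x) := by linear_combination hε'
    have f1 : σ x' - 1 = σ x' * (1 - σ x) := by linear_combination hi1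
    have f2 : σ (σ x') - 1 = σ (σ x') * (1 - σ (σ x)) := by linear_combination hi2
    push_cast at hδM hN' ⊢
    rw [f0, f1, f2]
    linear_combination hN' + x' * σ x' * σ (σ x') * hδM
  · -- `f_{-a}` is the characteristic polynomial of `-x`.
    refine ⟨-a, -x, ?_⟩
    have hb' : (b : K) = a - 3 := by
      have : b = a - 3 := by push_cast at hab; linear_combination hab
      rw [this]; push_cast; ring
    push_cast at hεN ⊢
    linear_combination (-x ^ 2) * ha + x * hb + x * hb' - hεN
end

section
/- Let K be a complex cubic number field, n a positive integer, and ε, δ ∈ O_K^× units with ε + δ = n and δ ∉ ℚ, so that the minimal polynomial of δ over ℚ has the form x³ + a x² + b x + c with a, b ∈ ℤ and c ∈ {1, −1}. Assume n³ + a n² + b n ≠ 0. Then either n = 1 and a ∈ {−4, −3, −2, −1, 0, 1}, or n = 2 and a ∈ {−5, −4, −2, −1}. -/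
/-!
Let `p = x³ + ax² + bx + c` be the minimal polynomial of `δ`. Since `deg p = [K : ℚ]`, it is also the
characteristic polynomial of multiplication by `δ`, so `p(n) = N(n - δ) = N(ε) = ±1`
(`eval_minpoly_eq_norm`). As `p(n) ≠ p(0) = c = ±1`, this forces `n³ + an² + bn = -2c`; hence `n ∣ 2`,
and `b` is determined by `n`, `a` and `c`.

The same degree equality shows that `δ` generates `K`, so a non-real embedding of `K` takes `δ` to a
non-real root of `p` (`not_real_of_natDegree_eq`), whence `disc p < 0` (`disc_neg_of_nonreal_root`).
The discriminant is then a quartic in `a` in each of the four cases: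
* `n = 1`, `c = 1`: `(a² + 3a + 9)²`, and `n = 2`, `c = 1`:
  `(2a² + 12a + 21)² + (a + 3)² + 23`; neither is negative;
* `n = 1`, `c = -1`: `(a² + 3a - 1)² - 32`, negative exactly for `-4 ≤ a ≤ 1`;
* `n = 2`, `c = -1`: with `s = (a + 3)²`, it is `s (4s - 27)`, negative exactly for
  `0 < |a + 3| ≤ 2`.
-/

open NumberField Polynomial

/-- A real cubic `x³ + ax² + bx + c` with a non-real root `u + iv` has negative discriminant:
it equals `-4v²((r - u)² + v²)²`, where `r = -a - 2u` is the real root. -/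
lemma disc_neg_of_nonreal_root (a b c : ℝ) (z : ℂ) (hz : z.im ≠ 0)
    (h : z ^ 3 + a * z ^ 2 + b * z + c = 0) :
    a ^ 2 * b ^ 2 - 4 * b ^ 3 - 4 * a ^ 3 * c - 27 * c ^ 2 + 18 * a * b * c < 0 := by
  obtain ⟨u, v⟩ := z
  have hre := congrArg Complex.re h
  have him := congrArg Complex.im h
  simp [pow_succ] at hre him hz
  have hb : b = v ^ 2 - 3 * u ^ 2 - 2 * a * u := by
    apply mul_left_cancel₀ hz
    linear_combination him
  subst hb
  have hc : c = -(u ^ 3 - 3 * u * v ^ 2 + a * (u ^ 2 - v ^ 2)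
      + (v ^ 2 - 3 * u ^ 2 - 2 * a * u) * u) := by
    linear_combination hre
  subst hc
  have hv : 0 < v ^ 2 := by positivity
  have hpos : 0 < 4 * v ^ 2 * ((-a - 2 * u - u) ^ 2 + v ^ 2) ^ 2 := by positivity
  linarith [hpos,
    show a ^ 2 * (v ^ 2 - 3 * u ^ 2 - 2 * a * u) ^ 2 - 4 * (v ^ 2 - 3 * u ^ 2 - 2 * a * u) ^ 3
      - 4 * a ^ 3 * (-(u ^ 3 - 3 * u * v ^ 2 + a * (u ^ 2 - v ^ 2)
      + (v ^ 2 - 3 * u ^ 2 - 2 * a * u) * u))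
      - 27 * (-(u ^ 3 - 3 * u * v ^ 2 + a * (u ^ 2 - v ^ 2)
      + (v ^ 2 - 3 * u ^ 2 - 2 * a * u) * u)) ^ 2
      + 18 * a * (v ^ 2 - 3 * u ^ 2 - 2 * a * u) * (-(u ^ 3 - 3 * u * v ^ 2 + a * (u ^ 2 - v ^ 2)
      + (v ^ 2 - 3 * u ^ 2 - 2 * a * u) * u))
      = -(4 * v ^ 2 * ((-a - 2 * u - u) ^ 2 + v ^ 2) ^ 2) by ring]

/-- For a generator `x` of `L / F`, the minimal polynomial is the characteristic polynomial of
multiplication by `x`, so its value at `t` is the norm of `t - x`. -/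
lemma eval_minpoly_eq_norm {F L : Type*} [Field F] [Field L] [Algebra F L]
    [FiniteDimensional F L] (x : L) (hx : (minpoly F x).natDegree = Module.finrank F L) (t : F) :
    (minpoly F x).eval t = Algebra.norm F (algebraMap F L t - x) := by
  have h : (Algebra.lmul F L x).charpoly = minpoly F x :=
    eq_of_monic_of_dvd_of_natDegree_le (minpoly.monic (IsIntegral.of_finite F x))
      (LinearMap.charpoly_monic _) (minpoly.dvd F x (Algebra.aeval_self_charpoly_lmul x))
      (by rw [LinearMap.charpoly_natDegree, hx])
  rw [← h, LinearMap.eval_charpoly, Algebra.norm_apply]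
  congr 1
  ext y
  simp [Algebra.smul_def]

/-- A non-real embedding does not map a generator of the field to a real number. -/
lemma not_real_of_natDegree_eq {K : Type*} [Field K] [NumberField K] (x : K)
    (hx : (minpoly ℚ x).natDegree = Module.finrank ℚ K) (φ : K →+* ℂ)
    (hφ : ¬ ComplexEmbedding.IsReal φ) : (φ x).im ≠ 0 := by
  intro h
  apply hφ
  rw [ComplexEmbedding.isReal_iff]
  have htop := (Field.primitive_element_iff_minpoly_natDegree_eq ℚ x).2 hx
  have hadj : Algebra.adjoin ℚ {x} = ⊤ := by
    rw [← IntermediateField.adjoin_simple_toSubalgebra_of_isAlgebraic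
        (Algebra.IsAlgebraic.isAlgebraic x),
      htop, IntermediateField.top_toSubalgebra]
  have : (ComplexEmbedding.conjugate φ).toRatAlgHom = φ.toRatAlgHom := by
    refine AlgHom.ext_of_adjoin_eq_top hadj ?_
    rintro y rfl
    exact Complex.conj_eq_iff_im.2 h
  ext y
  exact DFunLike.congr_fun this y

/-- Arithmetic core: the value at `n` of the cubic differs from its constant term `±1` but is again
`±1`, and the discriminant is negative. -/
lemma bounds_of_disc_neg (n : ℕ) (hn : 0 < n) (a b c : ℤ) (hc : c = 1 ∨ c = -1)
    (hne : (n : ℤ) ^ 3 + a * (n : ℤ) ^ 2 + b * (n : ℤ) ≠ 0)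
    (hval : |(n : ℤ) ^ 3 + a * (n : ℤ) ^ 2 + b * n + c| = 1)
    (hdisc : a ^ 2 * b ^ 2 - 4 * b ^ 3 - 4 * a ^ 3 * c - 27 * c ^ 2 + 18 * a * b * c < 0) :
    (n = 1 ∧ a ∈ ({-4, -3, -2, -1, 0, 1} : Set ℤ)) ∨
    (n = 2 ∧ a ∈ ({-5, -4, -2, -1} : Set ℤ)) := by
  have h2 : (n : ℤ) ^ 3 + a * (n : ℤ) ^ 2 + b * n = -2 * c := by
    rcases hc with rfl | rfl <;> rcases (abs_eq one_pos.le).1 hval with h | h <;> lia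
  have hdvd : (n : ℤ) ∣ 2 := by
    have h : (n : ℤ) ∣ -2 * c := ⟨(n : ℤ) ^ 2 + a * n + b, by rw [← h2]; ring⟩
    rcases hc with rfl | rfl <;> simpa using h
  have hn2 : n ≤ 2 := by exact_mod_cast Int.le_of_dvd two_pos hdvd
  simp only [Set.mem_insert_iff, Set.mem_singleton_iff]
  obtain rfl | rfl : n = 1 ∨ n = 2 := by omega
  · left
    refine ⟨rfl, ?_⟩
    rcases hc with rfl | rfl
    · obtain rfl : b = -3 - a := by push_cast at h2; linarith
      nlinarith [sq_nonneg (a ^ 2 + 3 * a + 9)]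
    · obtain rfl : b = 1 - a := by push_cast at h2; linarith
      have h3 : (a ^ 2 + 3 * a - 1) ^ 2 < 6 ^ 2 := by linarith
      have h4 := abs_lt_of_sq_lt_sq' h3 (by norm_num)
      have h5 : a ≤ 1 := by nlinarith
      have h6 : -4 ≤ a := by nlinarith
      omega
  · right
    refine ⟨rfl, ?_⟩
    rcases hc with rfl | rfl
    · obtain rfl : b = -5 - 2 * a := by push_cast at h2; linarith
      nlinarith [sq_nonneg (2 * a ^ 2 + 12 * a + 21), sq_nonneg (a + 3)]
    · obtain rfl : b = -3 - 2 * a := by push_cast at h2; linarith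
      have h3 : (a + 3) ^ 2 * (4 * (a + 3) ^ 2 - 27) < 0 := by linarith
      have h4 : 4 * (a + 3) ^ 2 - 27 < 0 := by
        by_contra! h
        exact absurd h3 (not_lt.2 (mul_nonneg (sq_nonneg _) h))
      have h5 : a ≤ -1 := by nlinarith
      have h6 : -5 ≤ a := by nlinarith
      have h7 : a ≠ -3 := by rintro rfl; norm_num at h3
      omega

/-- (Lemma 6.1 of the paper.) Let `K` be a complex cubic
field, `ε, δ` units of `𝓞 K` with `ε + δ = n > 0`, `δ ∉ ℚ`, and let
`x³ + ax² + bx + c` (with `c = ±1`) be the minimal polynomial of `δ`.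
If `n³ + an² + bn ≠ 0`, then either `n = 1` and `a ∈ {−4, −3, −2, −1, 0, 1}`,
or `n = 2` and `a ∈ {−5, −4, −2, −1}`. -/
theorem sums_of_units_stmt_13 (K : Type*) [Field K] [NumberField K]
    (hK : Module.finrank ℚ K = 3)
    (hcomplex : ∃ φ : K →+* ℂ, ¬ NumberField.ComplexEmbedding.IsReal φ)
    (n : ℕ) (hn : 0 < n)
    (ε δ : (𝓞 K)ˣ) (hsum : (ε : 𝓞 K) + (δ : 𝓞 K) = (n : 𝓞 K))
    (hδ : ∀ q : ℚ, algebraMap ℚ K q ≠ ((δ : 𝓞 K) : K))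
    (a b c : ℤ) (hc : c = 1 ∨ c = -1)
    (hmin : minpoly ℤ ((δ : 𝓞 K)) = X ^ 3 + C a * X ^ 2 + C b * X + C c)
    (hne : (n : ℤ) ^ 3 + a * (n : ℤ) ^ 2 + b * (n : ℤ) ≠ 0) :
    (n = 1 ∧ a ∈ ({-4, -3, -2, -1, 0, 1} : Set ℤ)) ∨
    (n = 2 ∧ a ∈ ({-5, -4, -2, -1} : Set ℤ)) := by
  obtain ⟨φ, hφ⟩ := hcomplex
  have hQ : minpoly ℚ ((δ : 𝓞 K) : K)
      = X ^ 3 + C (a : ℚ) * X ^ 2 + C (b : ℚ) * X + C (c : ℚ) := by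
    have h := minpoly.isIntegrallyClosed_eq_field_fractions (R := ℤ) (S := 𝓞 K) ℚ K
      (RingOfIntegers.isIntegral (δ : 𝓞 K))
    rw [hmin] at h
    simpa using h
  have hdeg : (minpoly ℚ ((δ : 𝓞 K) : K)).natDegree = Module.finrank ℚ K := by
    rw [hK, hQ]
    compute_degree!
  refine bounds_of_disc_neg n hn a b c hc hne ?_ ?_
  · have hε : ((ε : 𝓞 K) : K) = algebraMap ℚ K n - ((δ : 𝓞 K) : K) := by
      have h := congrArg (algebraMap (𝓞 K) K) hsum
      simp only [map_add, map_natCast] at h ⊢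
      exact eq_sub_of_add_eq h
    have h := eval_minpoly_eq_norm ((δ : 𝓞 K) : K) hdeg n
    have h1 := NumberField.isUnit_iff_norm.1 ε.isUnit
    rw [RingOfIntegers.coe_norm, hε, ← h, hQ] at h1
    simp at h1
    exact_mod_cast h1
  · have hroot : (φ ((δ : 𝓞 K) : K)) ^ 3 + ((a : ℝ) : ℂ) * (φ ((δ : 𝓞 K) : K)) ^ 2
        + ((b : ℝ) : ℂ) * φ ((δ : 𝓞 K) : K) + ((c : ℝ) : ℂ) = 0 := by
      have h := minpoly.aeval ℚ ((δ : 𝓞 K) : K)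
      rw [hQ] at h
      simpa using congrArg φ h
    have h := disc_neg_of_nonreal_root a b c _ (not_real_of_natDegree_eq _ hdeg φ hφ) hroot
    exact_mod_cast h
end

section
/- Let U be a positive integer and V ∈ ℤ an integer such that (UV)²(U+V)² − 2(U−V)³ + 6(U³−V³) − 27 < 0. Then either V = −U, or (U, V) is one of the ten pairs (1,−2), (1,0), (1,1), (1,2), (1,3), (2,−3), (2,−1), (3,−4), (3,−2), (4,−3). -/
/-!
Write `D(U, V)` for the quantity in the hypothesis; it equals
`(UV(U+V))² + 2(U-V)(2U+V)(U+2V) - 27`. With `W = -(U+V)`, it is invariant under cyclic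
permutations of `(U, V, W)`, and under a transposition combined with a global sign change.
Two of three nonzero integers with sum zero share a sign, which reduces the problem to
`D(a, b) < 0` with `a, b ≥ 1` (`eq_one_and_le_three`), applied to `(U, V)`, `(-W, -V)` or
`(W, U)`. In that range the sextic term dominates, leaving `a = 1`, `b ≤ 3`. The remaining
cases are `V = 0` and `V = -U`.
-/

/-- The positive case of the classification. The left side of `h` is `D(a, b)`
with its cubic part expanded. -/
theorem eq_one_and_le_three {a b : ℤ} (ha : 1 ≤ a) (hb : 1 ≤ b)
    (h : a ^ 2 * b ^ 2 * (a + b) ^ 2 + 4 * a ^ 3 + 6 * a ^ 2 * b - 6 * a * b ^ 2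
      - 4 * b ^ 3 - 27 < 0) : a = 1 ∧ b ≤ 3 := by
  have ha1 : a = 1 := by
    by_contra hne
    obtain ⟨x, hx, rfl⟩ : ∃ x : ℤ, 0 ≤ x ∧ a = x + 2 := ⟨a - 2, by omega, by ring⟩
    obtain ⟨y, hy, rfl⟩ : ∃ y : ℤ, 0 ≤ y ∧ b = y + 1 := ⟨b - 1, by omega, by ring⟩
    -- In the shifted variables every coefficient of the polynomial is nonnegative.
    apply absurd h
    rw [not_lt]
    ring_nf
    positivity
  subst ha1
  refine ⟨rfl, ?_⟩
  by_contra! hb4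
  obtain ⟨y, hy, rfl⟩ : ∃ y : ℤ, 0 ≤ y ∧ b = y + 4 := ⟨b - 4, by omega, by ring⟩
  apply absurd h
  rw [not_lt]
  ring_nf
  positivity

/-- (Lemma 6.2 of the paper.) If `U > 0` and
`(UV)²(U+V)² − 2(U−V)³ + 6(U³−V³) − 27 < 0`, then either `V = −U` or `(U, V)`
is one of ten explicit pairs. -/
theorem sums_of_units_stmt_14 (U : ℤ) (hU : 0 < U) (V : ℤ)
    (h : (U * V) ^ 2 * (U + V) ^ 2 - 2 * (U - V) ^ 3 + 6 * (U ^ 3 - V ^ 3) - 27 < 0) :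
    V = -U ∨ (U, V) ∈ ({(1, -2), (1, 0), (1, 1), (1, 2), (1, 3), (2, -3), (2, -1),
      (3, -4), (3, -2), (4, -3)} : Set (ℤ × ℤ)) := by
  simp only [Set.mem_insert_iff, Set.mem_singleton_iff, Prod.mk.injEq]
  rcases lt_trichotomy V 0 with hV | rfl | hV
  · rcases lt_trichotomy (U + V) 0 with hW | hW | hW
    · have := eq_one_and_le_three (a := -(U + V)) (b := U) (by omega) (by omega)
        (by linarith only [h])
      omega
    · omega
    · have := eq_one_and_le_three (a := U + V) (b := -V) (by omega) (by omega)
        (by linarith only [h])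
      omega
  · have : U < 2 := by
      by_contra! h2
      have := pow_le_pow_left₀ (by norm_num) h2 3
      linarith
    omega
  · have := eq_one_and_le_three (a := U) (b := V) (by omega) (by omega)
      (by linarith only [h])
    omega
end

section
/- Let K = ℚ(ω) where ω is a root of the irreducible polynomial x³ + x² − 1 (a complex cubic field of discriminant −23). Then N_K = {1, 2, 3, 4}. -/
/-!
Why `N_K = {1, 2, 3, 4}`. Put `θ = ω⁻¹ = ω + ω²`. The four values are attained:
`1 = ω³ + ω²`, `2 = 1 + 1`, `3 = θ⁴ - ω⁹`, `4 = θ⁵ - ω⁹`.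

Conversely let `ε + δ = n ≥ 5`. The field has one real embedding `σ` and one pair of complex
embeddings `τ, τ̄` (`exists_embeddings`). The characteristic polynomial `f` of `ε` takes the unit
values `-N(ε)` and `N(δ)` at `0` and `n`; as `n > 2` divides their difference, they are equal and
`f = X (X - n) (X - m) - c` with `m ∈ ℤ`, `c = ±1`. Since `f` has a single sign change on the real
line, `m ∈ {0, n}` (`cubic_double_root`). In either case one of `ε⁻¹`, `δ⁻¹` is a unit `y` with
`σ y > 0`, `Tr y = 0` and `Tr y⁻¹ = n` (`unit_of_large_sum`).

The positive units are the powers of `ω`: multiplying by a power of `ω` brings `σ u` into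
`[1, θ)`, and a cubic with such a real root and integer coefficients must be that of `1`
(`no_unit_between`, `unit_eq_zpow`). So `y = ω ^ k` with `Tr (ω ^ k) = 0`.

Finally `Tr (ω ^ k) = 0` only for `k = -1` (`trace_zpow_eq_zero`), by Skolem's `p`-adic method at
`p = 59`, which splits completely in `K`: `ω⁵⁸ ≡ 1 mod 59`, within a period the only zero of the
trace modulo `59` is at `k ≡ -1 mod 58`, and on that residue class the trace vanishes to first
order only. Hence `n = Tr ω = -1`, a contradiction.
-/

open NumberField

/-! ### Zeros of the trace on powers of `ω` -/

/-- The binomial expansion of `(1 + y) ^ n` up to second order. -/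
theorem one_add_pow_expand {R : Type*} [CommRing R] (y : R) (n : ℕ) :
    ∃ t : R, (1 + y) ^ n = 1 + n * y + (n.choose 2 : ℕ) * y ^ 2 + y ^ 3 * t := by
  induction n with
  | zero => exact ⟨0, by simp⟩
  | succ n ih =>
    obtain ⟨t, ht⟩ := ih
    refine ⟨t + (n.choose 2 : ℕ) + y * t, ?_⟩
    have hc : (n + 1).choose 2 = n + n.choose 2 := by
      rw [Nat.choose_succ_succ' n 1, Nat.choose_one_right]
    rw [pow_succ, ht, hc]
    push_cast
    ring

/-- A `u`-th power multiplies the first-order term by `u`; this carries information when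
`59 ∤ u`. -/
theorem pow_mod_first_order {R : Type*} [CommRing R] (e : ℕ) (γ : R) (u : ℕ) :
    ∃ β : R, (1 + 59 ^ (e + 1) * γ) ^ u = 1 + 59 ^ (e + 1) * (u * γ + 59 * β) := by
  obtain ⟨t, ht⟩ := one_add_pow_expand (59 ^ (e + 1) * γ) u
  refine ⟨59 ^ e * γ ^ 2 * ((u.choose 2 : ℕ) + 59 ^ (e + 1) * γ * t), ?_⟩
  rw [ht]
  ring

/-- A `59`-th power raises the order of the deviation from `1` by exactly one and keeps its leading
term. The second-order term is harmless since `59` divides `Nat.choose 59 2`. -/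
theorem pow_fiftynine {R : Type*} [CommRing R] (e : ℕ) (γ : R) :
    ∃ β : R, (1 + 59 ^ (e + 1) * γ) ^ 59 = 1 + 59 ^ (e + 2) * (γ + 59 * β) := by
  obtain ⟨t, ht⟩ := one_add_pow_expand (59 ^ (e + 1) * γ) 59
  have hc : (Nat.choose 59 2) = 59 * 29 := by decide
  refine ⟨59 ^ e * γ ^ 2 * (29 + 59 ^ e * γ * t), ?_⟩
  rw [ht, hc]
  push_cast
  ring

theorem pow_fiftynine_pow {R : Type*} [CommRing R] (α : R) (e : ℕ) :
    ∃ β : R, (1 + 59 * α) ^ 59 ^ e = 1 + 59 ^ (e + 1) * (α + 59 * β) := by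
  induction e with
  | zero => exact ⟨0, by simp⟩
  | succ e ih =>
    obtain ⟨β, hβ⟩ := ih
    obtain ⟨β₂, hpow⟩ := pow_fiftynine e (α + 59 * β)
    refine ⟨β + β₂, ?_⟩
    rw [pow_succ, pow_mul, hβ, hpow]
    ring

/-- The `59`-adic step of Skolem's method: if `t v = 0` and `t (v α)` is prime to `59`, then
`n ↦ t (v (1 + 59 α) ^ n)` has no zero besides `n = 0`. Writing `n = 59 ^ e * u` with `59 ∤ u`, the
value is `59 ^ (e + 1) * u * t (v α)` modulo `59 ^ (e + 2)`. -/
theorem trace_mul_pow_ne_zero {R : Type*} [CommRing R] (t : R →+ ℤ) (v α : R)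
    (hv : t v = 0) (hα : ¬ (59 : ℤ) ∣ t (v * α)) {n : ℕ} (hn : n ≠ 0) :
    t (v * (1 + 59 * α) ^ n) ≠ 0 := by
  intro h
  obtain ⟨e, u, hu, rfl⟩ := Nat.exists_eq_pow_mul_and_not_dvd hn 59 (by norm_num)
  obtain ⟨β, hβ⟩ := pow_fiftynine_pow α e
  obtain ⟨β', hβ'⟩ := pow_mod_first_order e (α + 59 * β) u
  have hx : v * (1 + 59 * α) ^ (59 ^ e * u)
      = v + (59 ^ (e + 1) : ℕ) • (u • (v * α) + (59 : ℕ) • (v * (u * β + β'))) := by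
    rw [pow_mul, hβ, hβ']
    simp only [nsmul_eq_mul]
    push_cast
    ring
  rw [hx, map_add, hv, map_nsmul, map_add, map_nsmul, map_nsmul, zero_add,
    smul_eq_zero] at h
  have h' := h.resolve_left (by positivity)
  simp only [nsmul_eq_mul] at h'
  push_cast at h'
  have hd : (59 : ℤ) ∣ (u : ℤ) * t (v * α) := ⟨- t (v * (u * β + β')), by linarith⟩
  rcases (Nat.prime_iff_prime_int.mp (by norm_num : Nat.Prime 59)).dvd_or_dvd hd with h1 | h1
  · exact hu (by exact_mod_cast h1)
  · exact hα h1

/-- Three consecutive terms `(s n, s (n+1), s (n+2))` of the integer recurrence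
`s (n+3) = s n - s (n+2)` with `s 0 = 3`, `s 1 = -1`, `s 2 = 1`: the power sums of the roots of
`X³ + X² - 1`. -/
def powerSums : ℕ → ℤ × ℤ × ℤ
  | 0 => (3, -1, 1)
  | n + 1 => ((powerSums n).2.1, (powerSums n).2.2, (powerSums n).1 - (powerSums n).2.2)

/-- One period of the power sums modulo `59`: the only zero is at `57 ≡ -1`. -/
theorem powerSums_mod : ∀ r < 58, (59 : ℤ) ∣ (powerSums r).1 → r = 57 := by
  decide

theorem trace_pow {R : Type*} [CommRing R] (t : R →+ ℤ) (w : R) (hw : w ^ 3 + w ^ 2 = 1)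
    (h0 : t 1 = 3) (h1 : t w = -1) (h2 : t (w ^ 2) = 1) (n : ℕ) :
    powerSums n = (t (w ^ n), t (w ^ (n + 1)), t (w ^ (n + 2))) := by
  induction n with
  | zero => simp [powerSums, h0, h1, h2]
  | succ n ih =>
    have : w ^ (n + 1 + 2) = w ^ n - w ^ (n + 2) := by
      linear_combination w ^ n * hw
    simp [powerSums, ih, this, map_sub]

/-- Stated for any additive functional `t` with the values of the trace on `1, w, w²`, so that only
the relation `w³ + w² = 1` is used. -/
theorem trace_zpow_eq_zero {R : Type*} [CommRing R] (t : R →+ ℤ) (w : Rˣ)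
    (hw : (w : R) ^ 3 + (w : R) ^ 2 = 1)
    (h0 : t 1 = 3) (h1 : t w = -1) (h2 : t ((w : R) ^ 2) = 1) (k : ℤ)
    (hk : t ((w ^ k : Rˣ) : R) = 0) : k = -1 := by
  have hinv : ((w⁻¹ : Rˣ) : R) = w + w ^ 2 := by
    apply Units.inv_eq_of_mul_eq_one_right
    linear_combination hw
  have htr (a b c : ℤ) : t (a + b * (w : R) + c * (w : R) ^ 2) = 3 * a - b + c := by
    have : (a + b * (w : R) + c * (w : R) ^ 2 : R) = a • (1 : R) + b • (w : R) + c • (w : R) ^ 2 := by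
      simp [zsmul_eq_mul]
    rw [this, map_add, map_add, map_zsmul, map_zsmul, map_zsmul, h0, h1, h2]
    simp only [smul_eq_mul]; ring
  generalize hx : (w : R) = x at *
  -- Repeated squaring gives `w⁵⁸ ≡ 1` modulo `59`.
  have e7 : x ^ 7 = -1 + 2 * x ^ 2 := by
    linear_combination (x ^ 4 - x ^ 3 + x ^ 2 - 1) * hw
  have e14 : x ^ 14 = -3 + 4 * x := by
    linear_combination (x ^ 7 - 1 + 2 * x ^ 2) * e7 + (4 * x - 4) * hw
  have e28 : x ^ 28 = 9 - 24 * x + 16 * x ^ 2 := by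
    linear_combination (x ^ 14 - 3 + 4 * x) * e14
  have e29 : x ^ 29 = 16 + 9 * x - 40 * x ^ 2 := by
    linear_combination x * e28 + 16 * hw
  have e58 : x ^ 58 = 1 + 59 * (-35 + 32 * x + 19 * x ^ 2) := by
    linear_combination (x ^ 29 + 16 + 9 * x - 40 * x ^ 2) * e29 + (1600 * x - 2320) * hw
  -- The same for the inverse `v`, needed for negative exponents.
  obtain ⟨v, hv⟩ : ∃ v : R, v = x + x ^ 2 := ⟨_, rfl⟩
  have v2 : v ^ 2 = x + 1 := by rw [hv]; linear_combination (x + 1) * hw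
  have v3 : v ^ 3 = v + 1 := by
    rw [hv]; linear_combination (x ^ 3 + 2 * x ^ 2 + x + 1) * hw
  have v7 : v ^ 7 = 1 + 2 * v + 2 * v ^ 2 := by
    linear_combination (v ^ 4 + v ^ 2 + v + 1) * v3
  have v14 : v ^ 14 = 9 + 16 * v + 12 * v ^ 2 := by
    linear_combination (v ^ 7 + 1 + 2 * v + 2 * v ^ 2) * v7 + (8 + 4 * v) * v3
  have v28 : v ^ 28 = 465 + 816 * v + 616 * v ^ 2 := by
    linear_combination (v ^ 14 + 9 + 16 * v + 12 * v ^ 2) * v14 + (384 + 144 * v) * v3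
  have v29 : v ^ 29 = 616 + 1081 * v + 816 * v ^ 2 := by
    linear_combination v * v28 + 616 * v3
  have v58 : v ^ 58 = 1 + 59 * (36333 + 63760 * v + 48131 * v ^ 2) := by
    linear_combination (v ^ 29 + 616 + 1081 * v + 816 * v ^ 2) * v29
      + (1764192 + 665856 * v) * v3
  rw [← hv] at hinv
  have tv : t v = 0 := by
    have := htr 0 1 1
    rw [show ((0 : ℤ) + (1 : ℤ) * x + (1 : ℤ) * x ^ 2 : R) = v by rw [hv]; push_cast; ring] at this
    rw [this]; norm_num
  have ta : t (v * (-35 + 32 * x + 19 * x ^ 2)) = 77 := by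
    have := htr 32 (-16) (-35)
    rw [show ((32 : ℤ) + (-16 : ℤ) * x + (-35 : ℤ) * x ^ 2 : R)
      = v * (-35 + 32 * x + 19 * x ^ 2) by
        rw [hv]; push_cast; linear_combination (-19 * x - 32) * hw] at this
    rw [this]; norm_num
  have tb : t (v * (36333 + 63760 * v + 48131 * v ^ 2)) = 271913 := by
    have := htr (48131 + 63760) (84464 + 63760) 84464
    rw [show ((48131 + 63760 : ℤ) + (84464 + 63760 : ℤ) * x + (84464 : ℤ) * x ^ 2 : R)
      = v * (36333 + 63760 * v + 48131 * v ^ 2) by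
        push_cast
        linear_combination (-48131 : R) * v3 - 63760 * v2 - 84464 * hv] at this
    rw [this]; norm_num
  have epos (n : ℕ) : (((w ^ (58 : ℕ)) ^ n : Rˣ) : R)
      = (1 + 59 * (-35 + 32 * x + 19 * x ^ 2)) ^ n := by
    rw [Units.val_pow_eq_pow_val, Units.val_pow_eq_pow_val, hx, e58]
  have eneg (n : ℕ) : ((((w ^ (58 : ℕ)) ^ n)⁻¹ : Rˣ) : R)
      = (1 + 59 * (36333 + 63760 * v + 48131 * v ^ 2)) ^ n := by
    rw [← inv_pow, ← inv_pow, Units.val_pow_eq_pow_val, Units.val_pow_eq_pow_val, hinv, v58]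
  have emod (q : ℤ) : ∃ β : R, (((w ^ (58 : ℕ)) ^ q : Rˣ) : R) = 1 + 59 * β := by
    obtain ⟨n, rfl | rfl⟩ := q.eq_nat_or_neg
    · obtain ⟨β, hβ⟩ := pow_mod_first_order 0 (-35 + 32 * x + 19 * x ^ 2) n
      rw [zpow_natCast, epos]
      exact ⟨_, by simpa using hβ⟩
    · obtain ⟨β, hβ⟩ := pow_mod_first_order 0 (36333 + 63760 * v + 48131 * v ^ 2) n
      rw [zpow_neg, zpow_natCast, eneg]
      exact ⟨_, by simpa using hβ⟩
  -- Reduction modulo 59 forces `k ≡ -1` modulo 58.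
  have hr : k % 58 = 57 := by
    obtain ⟨r, hr⟩ := Int.eq_ofNat_of_zero_le (Int.emod_nonneg k (by norm_num : (58 : ℤ) ≠ 0))
    have hlt : r < 58 := by have := Int.emod_lt_of_pos k (by norm_num : (0 : ℤ) < 58); omega
    obtain ⟨β, hβ⟩ := emod (k / 58)
    have hkr : w ^ k = (w ^ (58 : ℕ)) ^ (k / 58) * w ^ r := by
      rw [← zpow_natCast w 58, ← zpow_mul, ← zpow_natCast w r, ← zpow_add]
      congr 1
      push_cast
      omega
    rw [hkr, Units.val_mul, hβ, Units.val_pow_eq_pow_val, hx,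
      show (1 + 59 * β) * x ^ r = x ^ r + (59 : ℕ) • (β * x ^ r) by
        simp only [nsmul_eq_mul]; push_cast; ring, map_add, map_nsmul] at hk
    have hdvd : (59 : ℤ) ∣ (powerSums r).1 := by
      rw [trace_pow t x hw h0 h1 h2]
      exact ⟨- t (β * x ^ r), by simp only [nsmul_eq_mul] at hk; push_cast at hk; linarith⟩
    have := powerSums_mod r hlt hdvd
    omega
  obtain ⟨q, hq⟩ : ∃ q : ℤ, k = -1 + 58 * q := ⟨k / 58 + 1, by omega⟩
  have hkq : ((w ^ k : Rˣ) : R) = v * (((w ^ (58 : ℕ)) ^ q : Rˣ) : R) := by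
    rw [← hinv, ← Units.val_mul, hq, zpow_add, zpow_neg_one, zpow_mul]
    norm_cast
  rw [hkq] at hk
  obtain ⟨n, rfl | rfl⟩ := q.eq_nat_or_neg
  · rw [zpow_natCast, epos] at hk
    rcases eq_or_ne n 0 with rfl | hn
    · simpa using hq
    · exact absurd hk (trace_mul_pow_ne_zero t v _ tv (by rw [ta]; norm_num) hn)
  · rw [zpow_neg, zpow_natCast, eneg] at hk
    rcases eq_or_ne n 0 with rfl | hn
    · simpa using hq
    · exact absurd hk (trace_mul_pow_ne_zero t v _ tv (by rw [tb]; norm_num) hn)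

/-! ### The embeddings of `K` -/

theorem minpoly_omega (K : Type*) [Field K] [NumberField K]
    (ω : K) (hω : ω ^ 3 + ω ^ 2 - 1 = 0) :
    minpoly ℚ ω = Polynomial.X ^ 3 + Polynomial.X ^ 2 - 1 := by
  open Polynomial in
  have hdeg : (X ^ 3 + X ^ 2 - 1 : ℚ[X]).natDegree = 3 := by compute_degree!
  have hmon : (X ^ 3 + X ^ 2 - 1 : ℚ[X]).Monic := by monicity!
  refine (minpoly.eq_of_irreducible_of_monic ?_ (by simpa using hω) hmon).symm
  rw [hmon.irreducible_iff_roots_eq_zero_of_degree_le_three (by omega) (by omega),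
    Multiset.eq_zero_iff_forall_notMem]
  intro a ha
  have hroot : a ^ 3 + a ^ 2 - 1 = 0 := by
    have := (mem_roots'.mp ha).2
    simpa using this
  -- A rational root would be an integer `m` with `m² (m + 1) = 1`.
  obtain ⟨m, rfl⟩ : ∃ m : ℤ, (m : ℚ) = a := by
    have hint : IsIntegral ℤ a :=
      ⟨X ^ 3 + X ^ 2 - 1, by monicity!, by simpa using hroot⟩
    exact IsIntegrallyClosed.isIntegral_iff.mp hint
  have hm : m * (m * (m + 1)) = 1 := by
    have : (m : ℚ) * (m * (m + 1)) = 1 := by linear_combination hroot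
    exact_mod_cast this
  rcases Int.eq_one_or_neg_one_of_mul_eq_one hm with rfl | rfl <;> norm_num at hm

/-- The real embedding `σ` and a non-real embedding `τ` of `K`, with the resulting formulas
`Tr x = σ x + τ x + conj (τ x)` and `N x = σ x * |τ x|²`. -/
theorem exists_embeddings (K : Type*) [Field K] [NumberField K]
    (ω : K) (hω : ω ^ 3 + ω ^ 2 - 1 = 0)
    (hgen : IntermediateField.adjoin ℚ {ω} = ⊤) :
    ∃ (σ : K →+* ℝ) (τ : K →+* ℂ), 3 / 4 < σ ω ∧ σ ω < 1 ∧
      τ ω + (starRingEnd ℂ) (τ ω) = -(1 + σ ω) ∧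
      (∀ x, (Algebra.trace ℚ K x : ℝ) = σ x + 2 * (τ x).re) ∧
      (∀ x, (Algebra.norm ℚ x : ℝ) = σ x * Complex.normSq (τ x)) := by
  obtain ⟨ρ, ⟨h1, h2⟩, hρ⟩ : ∃ ρ ∈ Set.Ioo (3 / 4 : ℝ) 1, ρ ^ 3 + ρ ^ 2 = 1 := by
    have := intermediate_value_Ioo (f := fun x : ℝ => x ^ 3 + x ^ 2)
      (by norm_num : (3 / 4 : ℝ) ≤ 1) (by fun_prop)
    exact this ⟨by norm_num, by norm_num⟩
  have hpos : 0 < ρ * (1 + ρ) - (1 + ρ) ^ 2 / 4 := by nlinarith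
  obtain ⟨s, hs0, hs⟩ : ∃ s : ℝ, 0 < s ∧ s ^ 2 = ρ * (1 + ρ) - (1 + ρ) ^ 2 / 4 :=
    ⟨_, Real.sqrt_pos.mpr hpos, Real.sq_sqrt hpos.le⟩
  set z : ℂ := ⟨-(1 + ρ) / 2, s⟩ with hz
  have hρC : (ρ : ℂ) ^ 3 + (ρ : ℂ) ^ 2 = 1 := by exact_mod_cast hρ
  have hquad : z ^ 2 + (1 + ρ) * z + ρ * (1 + ρ) = 0 := by
    apply Complex.ext
    · simp [hz, pow_two]; nlinarith
    · simp [hz, pow_two]; ring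
  have hsum : z + (starRingEnd ℂ) z = -(1 + ρ) := by
    apply Complex.ext <;> simp [hz]
  have hzz : z * (starRingEnd ℂ) z = ρ * (1 + ρ) := by
    linear_combination z * hsum - hquad
  have hz3 : z ^ 3 + z ^ 2 - 1 = 0 := by
    linear_combination (z - ρ) * hquad + hρC
  have hint : IsIntegral ℚ ω := Algebra.IsIntegral.isIntegral ω
  have htop : Algebra.adjoin ℚ {ω} = ⊤ := by
    rw [← IntermediateField.adjoin_simple_toSubalgebra_of_isAlgebraic hint.isAlgebraic, hgen]
    rfl
  let pb := PowerBasis.ofAdjoinEqTop hint htop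
  have hpb : pb.gen = ω := PowerBasis.ofAdjoinEqTop_gen hint htop
  have hmin := minpoly_omega K ω hω
  let σ : K →ₐ[ℚ] ℝ := pb.lift ρ (by
    rw [hpb, hmin]; simp; linarith)
  let τ : K →ₐ[ℚ] ℂ := pb.lift z (by
    rw [hpb, hmin]; simpa using hz3)
  have hσ : σ ω = ρ := by rw [← hpb]; exact pb.lift_gen _ _
  have hτ : τ ω = z := by rw [← hpb]; exact pb.lift_gen _ _
  let σ' : K →ₐ[ℚ] ℂ := (Complex.ofRealAm.restrictScalars ℚ).comp σ
  let τ' : K →ₐ[ℚ] ℂ := ((Complex.conjAe.restrictScalars ℚ : ℂ ≃ₐ[ℚ] ℂ) : ℂ →ₐ[ℚ] ℂ).comp τ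
  have hσ' (x : K) : σ' x = (σ x : ℂ) := rfl
  have hτ' (x : K) : τ' x = (starRingEnd ℂ) (τ x) := rfl
  classical
  have huniv : (Finset.univ : Finset (K →ₐ[ℚ] ℂ)) = {σ', τ, τ'} := by
    symm
    rw [Finset.eq_univ_iff_forall]
    intro f
    have hf : f ω ^ 3 + f ω ^ 2 - 1 = 0 := by simpa using congrArg f hω
    have hfac : (f ω - ρ) * ((f ω - z) * (f ω - (starRingEnd ℂ) z)) = 0 := by
      linear_combination hf - hρC + (f ω - ρ) * (hzz - f ω * hsum)
    have key (g : K →ₐ[ℚ] ℂ) (h : f ω = g ω) : f = g := pb.algHom_ext (by rw [hpb, h])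
    simp only [Finset.mem_insert, Finset.mem_singleton]
    rcases mul_eq_zero.mp hfac with h | h
    · exact Or.inl (key _ (by rw [hσ', hσ]; exact sub_eq_zero.mp h))
    rcases mul_eq_zero.mp h with h | h
    · exact Or.inr (Or.inl (key _ (by rw [hτ]; exact sub_eq_zero.mp h)))
    · exact Or.inr (Or.inr (key _ (by rw [hτ', hτ]; exact sub_eq_zero.mp h)))
  have him (g : K →ₐ[ℚ] ℂ) (h : (g ω).im ≠ (σ' ω).im) : σ' ≠ g := by
    rintro rfl; exact h rfl
  have n1 : σ' ∉ ({τ, τ'} : Finset (K →ₐ[ℚ] ℂ)) := by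
    simp only [Finset.mem_insert, Finset.mem_singleton, not_or]
    constructor <;> apply him
    · rw [hτ, hσ']; simpa [hz] using hs0.ne'
    · rw [hτ', hτ, hσ']; simpa [hz] using hs0.ne'
  have n2 : τ ∉ ({τ'} : Finset (K →ₐ[ℚ] ℂ)) := by
    rw [Finset.mem_singleton]
    intro h
    have := congrArg Complex.im (DFunLike.congr_fun h ω)
    rw [hτ', hτ] at this
    simp [hz] at this
    linarith
  refine ⟨σ, τ, by simpa [hσ] using h1, by simpa [hσ] using h2, ?_, fun x => ?_, fun x => ?_⟩
  · simpa [hσ, hτ] using hsum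
  · have h := trace_eq_sum_embeddings ℂ (K := ℚ) (x := x)
    rw [huniv, Finset.sum_insert n1, Finset.sum_insert n2, Finset.sum_singleton, hσ', hτ',
      Complex.add_conj] at h
    have hre := congrArg Complex.re h
    simpa using hre
  · have h := Algebra.norm_eq_prod_embeddings ℚ ℂ x
    rw [huniv, Finset.prod_insert n1, Finset.prod_insert n2, Finset.prod_singleton, hσ', hτ',
      Complex.mul_conj] at h
    have hre := congrArg Complex.re h
    simpa using hre

/-! ### Real cubics with a single sign change -/

/-- A real cubic with roots `r, p ± iq` is `≤ 0` to the left of `r` and `≥ 0` to the right of it. -/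
theorem cubic_sign {f : ℝ → ℝ} {r p q : ℝ} (hf : ∀ x, f x = (x - r) * ((x - p) ^ 2 + q ^ 2))
    {x₁ x₂ : ℝ} (h : x₁ < x₂) (h1 : 0 < f x₁) (h2 : f x₂ < 0) : False := by
  rw [hf] at h1 h2
  have a1 : r < x₁ := by
    by_contra! hc
    nlinarith [mul_nonneg (sub_nonneg.mpr hc) (add_nonneg (sq_nonneg (x₁ - p)) (sq_nonneg q))]
  have a2 : x₂ < r := by
    by_contra! hc
    nlinarith [mul_nonneg (sub_nonneg.mpr hc) (add_nonneg (sq_nonneg (x₂ - p)) (sq_nonneg q))]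
  linarith

/-- If `m ∉ {0, n}`, then `X (X - n) (X - m)` exceeds `1` at a point between its two smaller roots
and is below `-1` at a point between its two larger roots, so that subtracting `c = ±1` leaves three
real sign changes. For `m ∈ {0, n}` the same happens with one of the two signs of `c`. -/
theorem cubic_double_root {n m c : ℤ} {r p q : ℝ} (hn : 5 ≤ n) (hc : c = 1 ∨ c = -1)
    (hf : ∀ x : ℝ, x * (x - n) * (x - m) - c = (x - r) * ((x - p) ^ 2 + q ^ 2)) :
    (m = 0 ∧ c = 1) ∨ (m = n ∧ c = -1) := by
  have hn' : (5 : ℝ) ≤ n := by exact_mod_cast hn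
  have hc1 : (c : ℝ) ≤ 1 := by rcases hc with rfl | rfl <;> norm_num
  have hc2 : (-1 : ℝ) ≤ c := by rcases hc with rfl | rfl <;> norm_num
  rcases lt_trichotomy m 0 with hm | rfl | hm
  · have hm' : (m : ℝ) ≤ -1 := by exact_mod_cast Int.le_sub_one_of_lt hm
    exact (cubic_sign hf (x₁ := -1 / 2) (x₂ := 1) (by norm_num) (by nlinarith)
      (by nlinarith)).elim
  · rcases hc with rfl | rfl
    · exact Or.inl ⟨rfl, rfl⟩
    · exact (cubic_sign hf (x₁ := 0) (x₂ := 1) (by norm_num) (by norm_num)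
        (by push_cast; nlinarith)).elim
  · have hm' : (1 : ℝ) ≤ m := by exact_mod_cast hm
    rcases lt_trichotomy m n with h | rfl | h
    · have h' : (m : ℝ) ≤ n - 1 := by exact_mod_cast Int.le_sub_one_of_lt h
      exact (cubic_sign hf (x₁ := 1 / 2) (x₂ := n - 1 / 2) (by linarith) (by nlinarith)
        (by nlinarith)).elim
    · rcases hc with rfl | rfl
      · exact (cubic_sign hf (x₁ := 1) (x₂ := m) (by linarith) (by push_cast; nlinarith)
          (by norm_num)).elim
      · exact Or.inr ⟨rfl, rfl⟩
    · have h' : (n : ℝ) + 1 ≤ m := by exact_mod_cast h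
      exact (cubic_sign hf (x₁ := 1) (x₂ := n + 1 / 2) (by linarith) (by nlinarith)
        (by nlinarith)).elim

/-! ### Units of `K` -/

/-- The elementary symmetric functions of the conjugates of a unit `ε`, with `r = σ ε` and
`z = τ ε = p + iq`: the norm `r |z|² = c = ±1`, the trace `r + 2p`, and the second one
`2rp + |z|² = N(ε) Tr(ε⁻¹)`. -/
theorem unit_symmetric_functions {K : Type*} [Field K] [NumberField K]
    (σ : K →+* ℝ) (τ : K →+* ℂ)
    (htr : ∀ x, (Algebra.trace ℚ K x : ℝ) = σ x + 2 * (τ x).re)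
    (hnm : ∀ x, (Algebra.norm ℚ x : ℝ) = σ x * Complex.normSq (τ x)) (ε : (𝓞 K)ˣ) :
    ∃ c : ℤ, (c = 1 ∨ c = -1) ∧
      σ (ε : 𝓞 K) * ((τ (ε : 𝓞 K)).re ^ 2 + (τ (ε : 𝓞 K)).im ^ 2) = c ∧
      σ (ε : 𝓞 K) + 2 * (τ (ε : 𝓞 K)).re = Algebra.trace ℤ (𝓞 K) (ε : 𝓞 K) ∧
      2 * σ (ε : 𝓞 K) * (τ (ε : 𝓞 K)).re + ((τ (ε : 𝓞 K)).re ^ 2 + (τ (ε : 𝓞 K)).im ^ 2)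
        = c * Algebra.trace ℤ (𝓞 K) ((ε⁻¹ : (𝓞 K)ˣ) : 𝓞 K) := by
  have htrZ (x : 𝓞 K) : (Algebra.trace ℤ (𝓞 K) x : ℝ) = σ x + 2 * (τ x).re := by
    rw [← htr, ← Algebra.coe_trace_int]; norm_cast
  have hq : |(Algebra.norm ℚ ((ε : 𝓞 K) : K))| = 1 := by
    have := NumberField.isUnit_iff_norm.mp ε.isUnit
    simpa only [RingOfIntegers.coe_norm] using this
  obtain ⟨c, hc, hcq⟩ : ∃ c : ℤ, (c = 1 ∨ c = -1) ∧ Algebra.norm ℚ ((ε : 𝓞 K) : K) = c := by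
    rcases eq_or_eq_neg_of_abs_eq hq with h | h
    · exact ⟨1, Or.inl rfl, by rw [h]; norm_num⟩
    · exact ⟨-1, Or.inr rfl, by rw [h]; norm_num⟩
  have hinv : (((ε⁻¹ : (𝓞 K)ˣ) : 𝓞 K) : K) = ((ε : 𝓞 K) : K)⁻¹ := by
    apply eq_inv_of_mul_eq_one_left
    rw [← map_mul, ← Units.val_mul, inv_mul_cancel, Units.val_one, map_one]
  have hN := hnm ((ε : 𝓞 K) : K)
  have hT := htrZ (ε : 𝓞 K)
  have hT' := htrZ ((ε⁻¹ : (𝓞 K)ˣ) : 𝓞 K)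
  rw [hinv, map_inv₀, map_inv₀, Complex.inv_re] at hT'
  rw [hcq, Rat.cast_intCast] at hN
  have hsq : Complex.normSq (τ (ε : 𝓞 K))
      = (τ (ε : 𝓞 K)).re ^ 2 + (τ (ε : 𝓞 K)).im ^ 2 := by
    rw [Complex.normSq_apply]; ring
  have hc0 : (c : ℝ) ≠ 0 := by rcases hc with rfl | rfl <;> norm_num
  have hr0 : σ (ε : 𝓞 K) ≠ 0 := fun h => hc0 (by rw [hN, h, zero_mul])
  have hz0 : Complex.normSq (τ (ε : 𝓞 K)) ≠ 0 := fun h => hc0 (by rw [hN, h, mul_zero])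
  refine ⟨c, hc, by rw [hN, hsq], hT.symm, ?_⟩
  rw [hT', hN, ← hsq]
  field_simp
  ring

/-- There is no unit `u` of norm `1` with `1 < σ u < ρ⁻¹`, where `ρ = σ ω`. Here `r, p ± iq` are the
conjugates of `u`, `t` is its trace and `s` the trace of `u⁻¹`, so that `r` is a root of
`f = X³ - t X² + s X - 1`. The values `-f(1) = t - s` and `-f(-1) = 2 + t + s` are positive, and the
first is less than `2`; this leaves `s = t - 1` with `t ≥ 0`, whereas `r < ρ⁻¹` forces `t < 0`. -/
theorem no_unit_between {r p q ρ : ℝ} {t s : ℤ} (hρ : 3 / 4 < ρ) (hρ3 : ρ ^ 3 + ρ ^ 2 = 1)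
    (hN : r * (p ^ 2 + q ^ 2) = 1) (ht : r + 2 * p = t) (hs : 2 * r * p + (p ^ 2 + q ^ 2) = s)
    (h1 : 1 < r) (h2 : r * ρ < 1) : False := by
  have hr : r < 4 / 3 := by nlinarith
  have hz : p ^ 2 + q ^ 2 < 1 := by nlinarith [sq_nonneg p, sq_nonneg q]
  have hp1 : -1 < p := by nlinarith [sq_nonneg q]
  have hp2 : p < 1 := by nlinarith [sq_nonneg q]
  have e1 : (r - 1) * ((p - 1) ^ 2 + q ^ 2) = t - s := by rw [← ht, ← hs]; linear_combination hN
  have e2 : (r + 1) * ((p + 1) ^ 2 + q ^ 2) = 2 + t + s := by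
    rw [← ht, ← hs]; linear_combination hN
  have a1 : (0 : ℝ) < t - s := by
    rw [← e1]; exact mul_pos (by linarith) (by nlinarith [sq_nonneg q])
  have a2 : (t : ℝ) - s < 2 := by rw [← e1]; nlinarith
  have a3 : (0 : ℝ) < 2 + t + s := by
    rw [← e2]; exact mul_pos (by linarith) (by nlinarith [sq_nonneg q])
  have b1 : 0 < t - s := by exact_mod_cast a1
  have b2 : t - s < 2 := by exact_mod_cast a2
  have b3 : 0 < 2 + t + s := by exact_mod_cast a3
  have b4 : s = t - 1 := by omega
  have b5 : 0 ≤ t := by omega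
  have b6 : (0 : ℝ) ≤ t := by exact_mod_cast b5
  have hcub : r ^ 3 - t * r ^ 2 + s * r - 1 = 0 := by
    rw [← ht, ← hs]; linear_combination hN
  rw [b4] at hcub
  push_cast at hcub
  -- `1 < r < ρ⁻¹`, and `ρ⁻¹` is the real root of `X³ - X - 1`.
  have hlt : r ^ 3 - r - 1 < 0 := by
    have h0 : (0 : ℝ) < ρ := by linarith
    have : (r ^ 3 - r - 1) * ρ ^ 3 = (r * ρ - 1) * ((r * ρ) ^ 2 + r * ρ + 1 - ρ ^ 2) := by
      linear_combination -hρ3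
    have hr0 : 0 < r * ρ := by positivity
    have hρ1 : ρ < 1 := by nlinarith
    have hneg : (r ^ 3 - r - 1) * ρ ^ 3 < 0 := by
      rw [this]
      exact mul_neg_of_neg_of_pos (by linarith) (by nlinarith [sq_nonneg (r * ρ)])
    by_contra! hge
    exact absurd hneg (not_lt.mpr (by positivity))
  nlinarith [mul_nonneg b6 (by nlinarith : 0 ≤ r ^ 2 - r)]

/-- A unit that is positive under the real embedding is a power of `w`, as soon as `w` is a unit
with `σ w = σ ω`. -/
theorem unit_eq_zpow {K : Type*} [Field K] [NumberField K]
    (σ : K →+* ℝ) (τ : K →+* ℂ)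
    (htr : ∀ x, (Algebra.trace ℚ K x : ℝ) = σ x + 2 * (τ x).re)
    (hnm : ∀ x, (Algebra.norm ℚ x : ℝ) = σ x * Complex.normSq (τ x))
    (w : (𝓞 K)ˣ) (hw : 3 / 4 < σ (w : 𝓞 K)) (hw1 : σ (w : 𝓞 K) < 1)
    (hw3 : σ (w : 𝓞 K) ^ 3 + σ (w : 𝓞 K) ^ 2 = 1)
    (η : (𝓞 K)ˣ) (hη : 0 < σ (η : 𝓞 K)) : ∃ k : ℤ, η = w ^ k := by
  let φ : (𝓞 K)ˣ →* ℝˣ := Units.map ((σ : K →* ℝ).comp (algebraMap (𝓞 K) K : 𝓞 K →* K))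
  have hφ (u : (𝓞 K)ˣ) : ((φ u : ℝˣ) : ℝ) = σ (u : 𝓞 K) := rfl
  have hw0 : 0 < σ (w : 𝓞 K) := by linarith
  obtain ⟨n, hn1, hn2⟩ := exists_mem_Ico_zpow hη (one_lt_inv_iff₀.mpr ⟨hw0, hw1⟩)
  have hσu : σ ((η * w ^ n : (𝓞 K)ˣ) : 𝓞 K) = σ (η : 𝓞 K) * σ (w : 𝓞 K) ^ n := by
    rw [← hφ, map_mul, map_zpow]
    push_cast
    rfl
  rw [inv_zpow] at hn1 hn2
  have hpn : 0 < σ (w : 𝓞 K) ^ n := zpow_pos hw0 n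
  have hu1 : 1 ≤ σ ((η * w ^ n : (𝓞 K)ˣ) : 𝓞 K) := by
    rw [hσu]; exact (inv_le_iff_one_le_mul₀ hpn).mp hn1
  have hu2 : σ ((η * w ^ n : (𝓞 K)ˣ) : 𝓞 K) * σ (w : 𝓞 K) < 1 := by
    rw [hσu, mul_assoc, ← zpow_add_one₀ hw0.ne']
    have hp : 0 < σ (w : 𝓞 K) ^ (n + 1) := zpow_pos hw0 _
    have := mul_lt_mul_of_pos_right hn2 hp
    rwa [inv_mul_cancel₀ hp.ne'] at this
  generalize hu : η * w ^ n = u at *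
  obtain ⟨c, hc, hN, hT, hS⟩ := unit_symmetric_functions σ τ htr hnm u
  have hc1 : c = 1 := by
    rcases hc with h | rfl
    · exact h
    · push_cast at hN
      nlinarith [sq_nonneg (τ (u : 𝓞 K)).re, sq_nonneg (τ (u : 𝓞 K)).im]
  subst hc1
  have h1 : σ (u : 𝓞 K) = 1 := by
    rcases hu1.eq_or_lt with h | h
    · exact h.symm
    · exact (no_unit_between hw hw3 (by simpa using hN) hT (by simpa using hS) h hu2).elim
  have hone : u = 1 := by
    have : ((u : 𝓞 K) : K) = 1 := σ.injective (by rw [h1, map_one])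
    exact Units.ext (RingOfIntegers.ext (by simpa using this))
  refine ⟨-n, ?_⟩
  rw [zpow_neg, eq_inv_iff_mul_eq_one, hu, hone]

/-- A representation of `n ≥ 5` as a sum of two units yields a positive unit `y` of trace zero whose
inverse has trace `n`, namely `y = ε⁻¹` or `y = δ⁻¹`. -/
theorem unit_of_large_sum {K : Type*} [Field K] [NumberField K]
    (σ : K →+* ℝ) (τ : K →+* ℂ)
    (htr : ∀ x, (Algebra.trace ℚ K x : ℝ) = σ x + 2 * (τ x).re)
    (hnm : ∀ x, (Algebra.norm ℚ x : ℝ) = σ x * Complex.normSq (τ x))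
    (ε δ : (𝓞 K)ˣ) {n : ℕ} (hn : 5 ≤ n) (h : (ε : 𝓞 K) + (δ : 𝓞 K) = (n : 𝓞 K)) :
    ∃ y : (𝓞 K)ˣ, 0 < σ (y : 𝓞 K) ∧ Algebra.trace ℤ (𝓞 K) (y : 𝓞 K) = 0 ∧
      Algebra.trace ℤ (𝓞 K) ((y⁻¹ : (𝓞 K)ˣ) : 𝓞 K) = n := by
  obtain ⟨c, hc, hN, hT, hS⟩ := unit_symmetric_functions σ τ htr hnm ε
  obtain ⟨d, hd, hN', hT', hS'⟩ := unit_symmetric_functions σ τ htr hnm δ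
  have hδ : ((δ : 𝓞 K) : K) = n - ((ε : 𝓞 K) : K) := by
    rw [eq_sub_iff_add_eq', ← map_add, h, map_natCast]
  have hσδ : σ (δ : 𝓞 K) = n - σ (ε : 𝓞 K) := by rw [hδ]; simp
  have hreδ : (τ (δ : 𝓞 K)).re = n - (τ (ε : 𝓞 K)).re := by rw [hδ]; simp
  have himδ : (τ (δ : 𝓞 K)).im = - (τ (ε : 𝓞 K)).im := by rw [hδ]; simp
  have hpos {x : (𝓞 K)ˣ} (hx : σ (x : 𝓞 K) *
      ((τ (x : 𝓞 K)).re ^ 2 + (τ (x : 𝓞 K)).im ^ 2) = (1 : ℤ)) : 0 < σ ((x⁻¹ : (𝓞 K)ˣ) : 𝓞 K) := by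
    have h1 : σ (x : 𝓞 K) * σ ((x⁻¹ : (𝓞 K)ˣ) : 𝓞 K) = 1 := by
      rw [← map_mul, ← map_mul, ← Units.val_mul, mul_inv_cancel, Units.val_one, map_one, map_one]
    push_cast at hx
    have hA := add_nonneg (sq_nonneg (τ (x : 𝓞 K)).re) (sq_nonneg (τ (x : 𝓞 K)).im)
    have hx0 : 0 < σ (x : 𝓞 K) := by
      by_contra! hle
      nlinarith [mul_nonneg (neg_nonneg.mpr hle) hA]
    rw [eq_inv_of_mul_eq_one_right h1]
    exact inv_pos.mpr hx0
  rw [hσδ, hreδ, himδ] at hN' hS'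
  rw [hσδ, hreδ] at hT'
  have hposε := hpos (x := ε)
  have hposδ := hpos (x := δ)
  rw [hσδ, hreδ, himδ] at hposδ
  generalize σ (ε : 𝓞 K) = r at *
  generalize (τ (ε : 𝓞 K)).re = p at *
  generalize (τ (ε : 𝓞 K)).im = q at *
  generalize ha : Algebra.trace ℤ (𝓞 K) (ε : 𝓞 K) = a at *
  generalize hb : Algebra.trace ℤ (𝓞 K) ((ε⁻¹ : (𝓞 K)ˣ) : 𝓞 K) = b at *
  generalize ha' : Algebra.trace ℤ (𝓞 K) (δ : 𝓞 K) = aδ at *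
  generalize hb' : Algebra.trace ℤ (𝓞 K) ((δ⁻¹ : (𝓞 K)ˣ) : 𝓞 K) = bδ at *
  -- The characteristic polynomial `X³ - a X² + c b X - c` of `ε` takes the value `d` at `n`.
  have hval : (n : ℤ) * (n ^ 2 - a * n + c * b) = c + d := by
    have : (n : ℝ) * (n ^ 2 - a * n + c * b) = c + d := by
      rw [← hT, ← hS, ← hN, ← hN']; ring
    exact_mod_cast this
  -- `n` divides `c + d`, which is one of `0, ±2`.
  have hzero : (n : ℤ) ^ 2 - a * n + c * b = 0 := by
    have hdvd : (n : ℤ) ∣ c + d := ⟨_, hval.symm⟩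
    have hcd : c + d = 0 := by
      apply Int.eq_zero_of_abs_lt_dvd hdvd
      rcases hc with rfl | rfl <;> rcases hd with rfl | rfl <;> norm_num <;> omega
    rw [hcd] at hval
    exact (mul_eq_zero.mp hval).resolve_left (by omega)
  have hzeroR : (n : ℝ) ^ 2 - a * n + c * b = 0 := by exact_mod_cast hzero
  have hf (x : ℝ) : x * (x - (n : ℤ)) * (x - (a - n : ℤ)) - c
      = (x - r) * ((x - p) ^ 2 + q ^ 2) := by
    push_cast
    linear_combination (-x) * hzeroR + hN - x * hS + x ^ 2 * hT
  -- If `m = a - n` is `0`, the characteristic polynomial of `ε` is `X² (X - n) - 1`; if `m = n`, then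
  -- that of `δ` is.
  rcases cubic_double_root (by exact_mod_cast hn) hc hf with ⟨h0, rfl⟩ | ⟨h0, rfl⟩
  · have han : a = n := by omega
    subst han
    refine ⟨ε⁻¹, hposε hN, ?_, by rw [inv_inv, ha]⟩
    rw [hb]; linarith
  · have han : a = 2 * n := by omega
    have hd1 : d = 1 := by
      have : (n : ℤ) * ((n : ℤ) ^ 2 - a * n + -1 * b) = 0 := by rw [hzero, mul_zero]
      omega
    subst hd1
    have haδn : aδ = n := by
      have : (aδ : ℝ) = n := by
        rw [← hT']; rw [han] at hT; push_cast at hT; linarith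
      exact_mod_cast this
    subst haδn
    refine ⟨δ⁻¹, hposδ hN', ?_, by rw [inv_inv, ha']⟩
    rw [hb']
    have : (bδ : ℝ) = 0 := by
      rw [han] at hT hzeroR
      push_cast at hT hS' hzeroR hS
      linear_combination (-1 : ℝ) * hS' + hS + 2 * (n : ℝ) * (-1) * hT + hzeroR
    exact_mod_cast this

/-- For the complex cubic field `K = ℚ(ω)` with
`ω³ + ω² − 1 = 0` (discriminant `−23`), `N_K = {1, 2, 3, 4}`. -/
theorem sums_of_units_stmt_15 (K : Type*) [Field K] [NumberField K]
    (ω : K) (hω : ω ^ 3 + ω ^ 2 - 1 = 0)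
    (hgen : IntermediateField.adjoin ℚ {ω} = ⊤) :
    NK K = {1, 2, 3, 4} := by
  have hint : IsIntegral ℤ ω :=
    ⟨Polynomial.X ^ 3 + Polynomial.X ^ 2 - 1, by monicity!, by simpa using hω⟩
  let x : 𝓞 K := ⟨ω, hint⟩
  have hx : x ^ 3 + x ^ 2 = 1 := by
    apply RingOfIntegers.ext
    have : (x : K) = ω := rfl
    simp only [map_add, map_pow, map_one, this]
    linear_combination hω
  let w : (𝓞 K)ˣ := ⟨x, x + x ^ 2, by linear_combination hx, by linear_combination hx⟩
  have hwx : (w : 𝓞 K) = x := rfl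
  have hwi : ((w⁻¹ : (𝓞 K)ˣ) : 𝓞 K) = x + x ^ 2 := rfl
  have hwω : ((w : 𝓞 K) : K) = ω := rfl
  have hx1 (u : (𝓞 K)ˣ) (k : ℕ) : ((u ^ k : (𝓞 K)ˣ) : 𝓞 K) = (u : 𝓞 K) ^ k :=
    Units.val_pow_eq_pow_val u k
  ext n
  simp only [NK, Set.mem_ofPred_eq, Set.mem_insert_iff, Set.mem_singleton_iff]
  constructor
  · rintro ⟨hn0, ε, δ, h⟩
    by_contra hne
    have hn : 5 ≤ n := by omega
    obtain ⟨σ, τ, h34, hlt1, hconj, htr, hnm⟩ := exists_embeddings K ω hω hgen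
    obtain ⟨y, hy0, hyT, hyT'⟩ := unit_of_large_sum σ τ htr hnm ε δ hn h
    have hσ3 : σ ω ^ 3 + σ ω ^ 2 = 1 := by
      have := congrArg σ hω
      simp only [map_sub, map_add, map_pow, map_one, map_zero] at this
      linarith
    obtain ⟨k, rfl⟩ := unit_eq_zpow σ τ htr hnm w h34 hlt1 hσ3 y hy0
    have htrZ (x : 𝓞 K) : (Algebra.trace ℤ (𝓞 K) x : ℝ) = σ x + 2 * (τ x).re := by
      rw [← htr, ← Algebra.coe_trace_int]; norm_cast
    have hre : 2 * (τ ω).re = -(1 + σ ω) := by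
      have := congrArg Complex.re hconj
      simp at this
      linarith
    have t0 : Algebra.trace ℤ (𝓞 K) 1 = 3 := by
      have := htrZ 1
      simp only [map_one, Complex.one_re] at this
      norm_num at this
      exact_mod_cast this
    have t1 : Algebra.trace ℤ (𝓞 K) (w : 𝓞 K) = -1 := by
      have := htrZ w
      rw [hwω, hre] at this
      have h' : (Algebra.trace ℤ (𝓞 K) (w : 𝓞 K) : ℝ) = -1 := by linarith
      exact_mod_cast h'
    have t2 : Algebra.trace ℤ (𝓞 K) ((w : 𝓞 K) ^ 2) = 1 := by
      obtain ⟨c, hc, hN, -, -⟩ := unit_symmetric_functions σ τ htr hnm w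
      have := htrZ ((w : 𝓞 K) ^ 2)
      have hw2 : (((w : 𝓞 K) ^ 2 : 𝓞 K) : K) = ω ^ 2 := rfl
      rw [hw2, map_pow σ, map_pow τ, pow_two (τ ω), Complex.mul_re] at this
      rw [hwω] at hN
      have hσ0 : 0 < σ ω := by linarith
      have hc1 : (c : ℝ) = 1 := by
        rcases hc with rfl | rfl
        · norm_num
        · push_cast at hN
          nlinarith [sq_nonneg (τ ω).re, sq_nonneg (τ ω).im]
      have hz : (τ ω).re ^ 2 + (τ ω).im ^ 2 = σ ω ^ 2 + σ ω := by
        apply mul_left_cancel₀ hσ0.ne'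
        rw [hN, hc1]
        linear_combination -hσ3
      have h' : (Algebra.trace ℤ (𝓞 K) ((w : 𝓞 K) ^ 2) : ℝ) = 1 := by
        rw [this]
        linear_combination (-2 : ℝ) * hz + (2 * (τ ω).re - 1 - σ ω) * hre
      exact_mod_cast h'
    have hk := trace_zpow_eq_zero (Algebra.trace ℤ (𝓞 K)).toAddMonoidHom w hx t0 t1 t2 k hyT
    rw [hk, zpow_neg_one, inv_inv, t1] at hyT'
    omega
  · rintro (rfl | rfl | rfl | rfl)
    · refine ⟨by norm_num, w ^ 3, w ^ 2, ?_⟩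
      rw [hx1, hx1, hwx]
      push_cast
      linear_combination hx
    · exact ⟨by norm_num, 1, 1, by norm_num⟩
    · refine ⟨by norm_num, w⁻¹ ^ 4, -w ^ 9, ?_⟩
      rw [Units.val_neg, hx1, hx1, hwx, hwi]
      push_cast
      linear_combination (3 + 3 * x ^ 2 + 3 * x ^ 3 + 2 * x ^ 4 + 2 * x ^ 5 - x ^ 6) * hx
    · refine ⟨by norm_num, w⁻¹ ^ 5, -w ^ 9, ?_⟩
      rw [Units.val_neg, hx1, hx1, hwx, hwi]
      push_cast
      linear_combination (4 + 4 * x ^ 2 + 4 * x ^ 3 + 4 * x ^ 4 + 7 * x ^ 5 + 3 * x ^ 6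
        + x ^ 7) * hx
end

section
/- Let K = ℚ(ω) where ω is a root of the irreducible polynomial x³ − x² − 1 (a complex cubic field of discriminant −31). Then N_K = {1, 2, 3, 67}. -/
/-!
The argument rests on the group of units being `±ω^ℤ`. It is proved directly: since `-31` is
squarefree, the characteristic polynomial of a unit of `K` has discriminant `-31 q²` with `q` an
integer, and it has small coefficients if the real conjugate of the unit lies in `[1, r)`, where
`r` is the real root of `x³ - x² - 1` (`eq_one_of_one_le`).

Let `ε + δ = n ≥ 4`, and let `f = x³ - t x² + s x - N` be the characteristic polynomial of `ε`.
Then `f(n) = N(δ)`, so `n ∣ N(ε) + N(δ)`, hence the norms are opposite, say `N(ε) = 1`, and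
`s = n (t - n)`. In the real place `f(e) = 0` becomes `e (e - n) (n - t + e) = 1`, and because
`|t - e| ≤ 2 / √e` the unit `-ε² δ` has real conjugate between `1 / r` and `r`
(`real_estimate`); so `-ε² δ = 1`. This gives `t = n` and `s = 0`, that is, `Tr(ε⁻¹) = 0` with
`ε = ω ^ k` and `k > 0`.

It remains to find the zeros of the linear recurrence `Tr(ω ^ (-k))`, by Skolem's method at the
prime `47`, which splits in `K` (`trace_etaMat_pow_eq_zero`). Modulo `47` the sequence has period
`46` and vanishes only for `k ≡ 1, 11`, and `η ^ 46 ≡ 1 (mod 47)` for `η = ω⁻¹`. Writing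
`η ^ 46 = 1 + 47 α`, in either class a zero other than `k = 1, 11` would make `Tr(η α)` or
`Tr(η¹¹ α)` divisible by `47`, which it is not. The value `k = 11` gives
`67 = ω¹¹ - ω⁻²²`; the value `k = 1` gives `n = 1`.
-/

open NumberField

/-! ### Zeros of the trace sequence, 47-adically -/

/-- The truncated logarithm: `(1 + 47 X) ^ m` is `1 + 47 m X` modulo `47 ^ (v + 2)`, where
`m = 47 ^ v * j`. -/
theorem one_add_pow_prime_pow {R : Type*} [CommRing R] (X : R) (v j : ℕ) :
    ∃ B : R, (1 + 47 * X) ^ (47 ^ v * j) = 1 + 47 ^ (v + 1) * ((j : R) * X + 47 * B) := by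
  -- the inductive step needs the third order, with `C(47, 2) = 47 * 23` divisible by `47`
  have h2 : ∀ (z : R) (n : ℕ), ∃ w : R, (1 + z) ^ n = 1 + n * z + z ^ 2 * w := by
    intro z n
    induction n with
    | zero => exact ⟨0, by simp⟩
    | succ n ih =>
      obtain ⟨w, hw⟩ := ih
      refine ⟨n + w + z * w, ?_⟩
      rw [pow_succ, hw]; push_cast; ring
  have h3 : ∀ z : R, ∃ w : R, (1 + z) ^ 47 = 1 + 47 * z + 47 * 23 * z ^ 2 + z ^ 3 * w := by
    have key : ∀ (z : R) (n : ℕ), ∃ w : R,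
        (1 + z) ^ n = 1 + n * z + (n.choose 2 : ℕ) * z ^ 2 + z ^ 3 * w := by
      intro z n
      induction n with
      | zero => exact ⟨0, by simp⟩
      | succ n ih =>
        obtain ⟨w, hw⟩ := ih
        refine ⟨(n.choose 2 : ℕ) + w + z * w, ?_⟩
        rw [pow_succ, hw, Nat.choose_succ_succ' n 1]; push_cast; simp; ring
    intro z
    obtain ⟨w, hw⟩ := key z 47
    refine ⟨w, ?_⟩
    rw [hw, show Nat.choose 47 2 = 47 * 23 from by decide]; push_cast; ring
  induction v with
  | zero =>
    obtain ⟨w, hw⟩ := h2 (47 * X) j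
    exact ⟨X ^ 2 * w, by rw [pow_zero, one_mul, hw]; ring⟩
  | succ v ih =>
    obtain ⟨B, hB⟩ := ih
    obtain ⟨w, hw⟩ := h3 (47 ^ (v + 1) * ((j : R) * X + 47 * B))
    refine ⟨B + 23 * 47 ^ v * ((j : R) * X + 47 * B) ^ 2
      + 47 ^ (2 * v) * ((j : R) * X + 47 * B) ^ 3 * w, ?_⟩
    rw [pow_succ, mul_right_comm, pow_mul, hB, hw]; ring

/-- The matrix of multiplication by `η = ω⁻¹ = ω² - ω` in the basis `1, ω, ω²`. -/
def etaMat : Matrix (Fin 3) (Fin 3) ℤ := !![0, 1, 0; -1, 0, 1; 1, 0, 0]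

/-- The coordinates of `η ^ k` in the basis `1, η, η²`, where `η³ = 1 - η`. -/
def etaCoeff : ℕ → ℤ × ℤ × ℤ
  | 0 => (1, 0, 0)
  | k + 1 => ((etaCoeff k).2.2, (etaCoeff k).1 - (etaCoeff k).2.2, (etaCoeff k).2.1)

theorem etaMat_pow (k : ℕ) : etaMat ^ k = (etaCoeff k).1 • (1 : Matrix (Fin 3) (Fin 3) ℤ)
    + (etaCoeff k).2.1 • etaMat + (etaCoeff k).2.2 • etaMat ^ 2 := by
  have h3 : etaMat ^ 3 = 1 - etaMat := by decide +kernel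
  induction k with
  | zero => simp [etaCoeff]
  | succ k ih =>
    rw [pow_succ, ih]
    simp only [etaCoeff, add_mul, smul_mul_assoc, one_mul, ← pow_succ, h3, ← pow_two]
    module

theorem trace_etaMat_pow (k : ℕ) :
    (etaMat ^ k).trace = 3 * (etaCoeff k).1 - 2 * (etaCoeff k).2.2 := by
  have h1 : etaMat.trace = 0 := by decide +kernel
  have h2 : (etaMat ^ 2).trace = -2 := by decide +kernel
  rw [etaMat_pow, Matrix.trace_add, Matrix.trace_add, Matrix.trace_smul, Matrix.trace_smul,
    Matrix.trace_smul, h1, h2, Matrix.trace_one]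
  simp; ring

/-- The matrix of `α = (η ^ 46 - 1) / 47`, a first approximation to `log (η ^ 46) / 47`. -/
def etaLog : Matrix (Fin 3) (Fin 3) ℤ :=
  (-27) • (1 : Matrix (Fin 3) (Fin 3) ℤ) + (-13) • etaMat + 77 • etaMat ^ 2

theorem etaMat_pow_46 : etaMat ^ 46 = 1 + 47 * etaLog := by
  have h : etaCoeff 46 = (1 + 47 * (-27), 47 * (-13), 47 * 77) := by decide +kernel
  rw [etaMat_pow, h, etaLog]
  have : (47 : Matrix (Fin 3) (Fin 3) ℤ) = (47 : ℤ) • 1 := by simp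
  rw [this, smul_mul_assoc, one_mul]
  module

theorem etaMat_pow_46_mul (v j : ℕ) : ∃ B : Matrix (Fin 3) (Fin 3) ℤ,
    etaMat ^ (46 * (47 ^ v * j)) = 1 + (47 : ℤ) ^ (v + 1) • ((j : ℤ) • etaLog + (47 : ℤ) • B) := by
  obtain ⟨B, hB⟩ := one_add_pow_prime_pow (Polynomial.X : Polynomial ℤ) v j
  refine ⟨Polynomial.aeval etaLog B, ?_⟩
  have := congrArg (Polynomial.aeval etaLog) hB
  simp only [map_pow, map_add, map_mul, map_one, map_ofNat, Polynomial.aeval_X, map_natCast] at this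
  rw [pow_mul, etaMat_pow_46, this]
  simp [zsmul_eq_mul, mul_add]

/-- The trace of `ω ^ (-k)` vanishes for `k = 1, 11` only. -/
theorem trace_etaMat_pow_eq_zero {k : ℕ} (hk : (etaMat ^ k).trace = 0) : k = 1 ∨ k = 11 := by
  -- modulo `47` the trace of `η ^ k` has period `46` and vanishes for `k ≡ 1, 11` only
  have hmod : k % 46 = 1 ∨ k % 46 = 11 := by
    obtain ⟨B, hB⟩ := etaMat_pow_46_mul 0 (k / 46)
    have hk' : k = k % 46 + 46 * (47 ^ 0 * (k / 46)) := by omega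
    rw [hk', pow_add, hB, mul_add, mul_one, Matrix.trace_add, mul_smul_comm, Matrix.trace_smul]
      at hk
    have hdvd : (47 : ℤ) ∣ (etaMat ^ (k % 46)).trace :=
      ⟨_, by rw [eq_neg_of_add_eq_zero_left hk, smul_eq_mul, zero_add, pow_one, ← mul_neg]⟩
    rw [trace_etaMat_pow] at hdvd
    have hcheck : ∀ r < 46, (47 : ℤ) ∣ 3 * (etaCoeff r).1 - 2 * (etaCoeff r).2.2 →
        r = 1 ∨ r = 11 := by decide +kernel
    exact hcheck _ (Nat.mod_lt _ (by norm_num)) hdvd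
  have hr0 : (etaMat ^ (k % 46)).trace = 0 := by
    rcases hmod with h | h <;> rw [h, trace_etaMat_pow] <;> decide +kernel
  have hr1 : ¬ (47 : ℤ) ∣ (etaMat ^ (k % 46) * etaLog).trace := by
    rcases hmod with h | h <;> rw [h]
    · decide +kernel
    · rw [etaMat_pow, show etaCoeff 11 = (-2, 5, -3) from by decide +kernel]; decide +kernel
  -- write `k = r + 46 · 47 ^ v · j` with `47 ∤ j`, and compare the terms of order `47 ^ (v + 1)`
  by_cases hj : k / 46 = 0
  · omega
  exfalso
  obtain ⟨v, j, hj', hvj⟩ := Nat.exists_eq_pow_mul_and_not_dvd hj 47 (by norm_num)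
  obtain ⟨B, hB⟩ := etaMat_pow_46_mul v j
  have hk' : k = k % 46 + 46 * (47 ^ v * j) := by omega
  rw [hk', pow_add, hB, mul_add, mul_one, Matrix.trace_add, hr0, zero_add, mul_smul_comm,
    Matrix.trace_smul, smul_eq_mul, mul_eq_zero, or_iff_right (by positivity), mul_add,
    Matrix.trace_add, mul_smul_comm, mul_smul_comm, Matrix.trace_smul, Matrix.trace_smul] at hk
  have hp : Prime (47 : ℤ) := by norm_num [Int.prime_iff_natAbs_prime]
  have : (47 : ℤ) ∣ (j : ℤ) * (etaMat ^ (k % 46) * etaLog).trace :=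
    ⟨_, by rw [← smul_eq_mul, eq_neg_of_add_eq_zero_left hk, smul_eq_mul, ← mul_neg]⟩
  rcases hp.dvd_or_dvd this with h | h
  · exact hj' (by exact_mod_cast h)
  · exact hr1 h

/-! ### Coordinates, trace and norm in the basis `1, ω, ω²` -/

section
variable {K : Type*} [Field K] [NumberField K] {ω : K}

open Polynomial in
theorem minpoly_omega_s16 (hω : ω ^ 3 - ω ^ 2 - 1 = 0) :
    minpoly ℚ ω = X ^ 3 - X ^ 2 - 1 := by
  have hdeg : (X ^ 3 - X ^ 2 - 1 : ℚ[X]).natDegree = 3 := by compute_degree!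
  have hmonic : (X ^ 3 - X ^ 2 - 1 : ℚ[X]).Monic := by monicity!
  symm
  refine minpoly.eq_of_irreducible_of_monic ?_ (by simpa using hω) hmonic
  rw [irreducible_iff_roots_eq_zero_of_degree_le_three (by rw [hdeg]; norm_num) hdeg.le,
    Multiset.eq_zero_iff_forall_notMem]
  intro x hx
  have hx : x ^ 3 - x ^ 2 - 1 = 0 := by simpa using (mem_roots'.mp hx).2
  -- a rational root would be an integer
  have hint : IsIntegral ℤ x := by
    refine ⟨X ^ 3 - X ^ 2 - 1, by monicity!, by simpa using hx⟩
  obtain ⟨y, rfl⟩ := IsIntegrallyClosed.isIntegral_iff.mp hint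
  have hy : y ^ 3 - y ^ 2 - 1 = 0 := by
    simp only [eq_intCast] at hx; exact_mod_cast hx
  have : y ^ 2 * (y - 1) = 1 := by linear_combination hy
  rcases Int.eq_one_or_neg_one_of_mul_eq_one this with h | h
  · rw [h, one_mul] at this
    obtain rfl : y = 2 := by linarith
    norm_num at h
  · nlinarith

theorem exists_powerBasis (hω : ω ^ 3 - ω ^ 2 - 1 = 0)
    (hgen : IntermediateField.adjoin ℚ {ω} = ⊤) :
    ∃ pb : PowerBasis ℚ K, pb.gen = ω ∧ pb.dim = 3 := by
  have hint : IsIntegral ℚ ω := Algebra.IsIntegral.isIntegral ω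
  have htop : Algebra.adjoin ℚ {ω} = ⊤ := by
    rw [← IntermediateField.adjoin_simple_toSubalgebra_of_isAlgebraic hint.isAlgebraic, hgen,
      IntermediateField.top_toSubalgebra]
  refine ⟨PowerBasis.ofAdjoinEqTop hint htop, PowerBasis.ofAdjoinEqTop_gen hint htop, ?_⟩
  rw [PowerBasis.ofAdjoinEqTop_dim, minpoly_omega_s16 hω]
  compute_degree!

theorem exists_basis (hω : ω ^ 3 - ω ^ 2 - 1 = 0) (hgen : IntermediateField.adjoin ℚ {ω} = ⊤) :
    ∃ b : Module.Basis (Fin 3) ℚ K, b 0 = 1 ∧ b 1 = ω ∧ b 2 = ω ^ 2 := by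
  obtain ⟨pb, hpb, hdim⟩ := exists_powerBasis hω hgen
  refine ⟨pb.basis.reindex (finCongr hdim), ?_, ?_, ?_⟩ <;> simp [hpb]

theorem exists_embedding (hω : ω ^ 3 - ω ^ 2 - 1 = 0)
    (hgen : IntermediateField.adjoin ℚ {ω} = ⊤) {r : ℝ} (hr : r ^ 3 - r ^ 2 - 1 = 0) :
    ∃ φ : K →ₐ[ℚ] ℝ, φ ω = r := by
  obtain ⟨pb, hpb, -⟩ := exists_powerBasis hω hgen
  have h0 : Polynomial.aeval r (minpoly ℚ pb.gen) = 0 := by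
    rw [hpb, minpoly_omega_s16 hω]; simpa using hr
  exact ⟨pb.lift r h0, by rw [← hpb, pb.lift_gen]⟩

/-- The matrix of multiplication by `a + bω + cω²` in the basis `1, ω, ω²`. -/
def mulMat (a b c : ℚ) : Matrix (Fin 3) (Fin 3) ℚ :=
  !![a, c, b + c; b, a, c; c, b + c, a + b + c]

theorem leftMulMatrix_eq (hω : ω ^ 3 - ω ^ 2 - 1 = 0) {B : Module.Basis (Fin 3) ℚ K}
    (h0 : B 0 = 1) (h1 : B 1 = ω) (h2 : B 2 = ω ^ 2) (a b c : ℚ) :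
    Algebra.leftMulMatrix B ((a : K) + b * ω + c * ω ^ 2) = mulMat a b c := by
  have hrepr : ∀ (x y z : ℚ) (i : Fin 3),
      B.repr ((x : K) + y * ω + z * ω ^ 2) i = ![x, y, z] i := by
    intro x y z i
    have : (x : K) + y * ω + z * ω ^ 2 = x • B 0 + y • B 1 + z • B 2 := by
      rw [h0, h1, h2]; simp [Rat.smul_def]
    rw [this]
    fin_cases i <;> simp
  ext i j
  rw [Algebra.leftMulMatrix_eq_repr_mul]
  have e0 : ((a : K) + b * ω + c * ω ^ 2) * B 0 = (a : K) + b * ω + c * ω ^ 2 := by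
    rw [h0, mul_one]
  have e1 : ((a : K) + b * ω + c * ω ^ 2) * B 1
      = ((c : ℚ) : K) + (a : ℚ) * ω + ((b + c : ℚ) : K) * ω ^ 2 := by
    rw [h1]; push_cast; linear_combination (c : K) * hω
  have e2 : ((a : K) + b * ω + c * ω ^ 2) * B 2
      = ((b + c : ℚ) : K) + (c : ℚ) * ω + ((a + b + c : ℚ) : K) * ω ^ 2 := by
    rw [h2]; push_cast; linear_combination ((b : K) + c + c * ω) * hω
  fin_cases j
  · change B.repr (_ * B 0) i = _
    rw [e0, hrepr]; fin_cases i <;> rfl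
  · change B.repr (_ * B 1) i = _
    rw [e1, hrepr]; fin_cases i <;> rfl
  · change B.repr (_ * B 2) i = _
    rw [e2, hrepr]; fin_cases i <;> rfl

/-- The cubic `x³ - t x² + s x - N` is the characteristic polynomial of the unit `ε`, whose
coordinates in `1, ω, ω²` are `a, b, c`; `q` is the index form, so that the discriminant of the
cubic is `-31 q²`. -/
structure UnitData (ω : K) (ε : (𝓞 K)ˣ) (a b c : ℚ) (t s N q : ℤ) : Prop where
  coe_eq : ((ε : 𝓞 K) : K) = a + b * ω + c * ω ^ 2
  t_eq : (t : ℚ) = 3 * a + b + c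
  s_eq : (s : ℚ) = a ^ 2 - b * c + 2 * (a * (a + b + c) - c * (b + c))
  N_eq : (N : ℚ) = a * (a * (a + b + c) - c * (b + c)) - c * (b * (a + b + c) - c ^ 2)
    + (b + c) * (b * (b + c) - a * c)
  q_eq : (q : ℚ) = b ^ 3 + 2 * b ^ 2 * c + b * c ^ 2 - c ^ 3
  N_unit : N = 1 ∨ N = -1
  trace_inv : Algebra.trace ℚ K ((ε⁻¹ : (𝓞 K)ˣ) : 𝓞 K) = N * s

/-- The discriminant of the characteristic polynomial of `a + bω + cω²` is `-31` times the square of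
the index form. -/
theorem disc_eq {R : Type*} [CommRing R] (a b c t s N q : R)
    (ht : t = 3 * a + b + c)
    (hs : s = a ^ 2 - b * c + 2 * (a * (a + b + c) - c * (b + c)))
    (hN : N = a * (a * (a + b + c) - c * (b + c)) - c * (b * (a + b + c) - c ^ 2)
    + (b + c) * (b * (b + c) - a * c))
    (hq : q = b ^ 3 + 2 * b ^ 2 * c + b * c ^ 2 - c ^ 3) :
    t ^ 2 * s ^ 2 - 4 * s ^ 3 - 4 * t ^ 3 * N + 18 * t * s * N - 27 * N ^ 2 = -31 * q ^ 2 := by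
  subst ht hs hN hq; ring

theorem exists_coords_s16 (hω : ω ^ 3 - ω ^ 2 - 1 = 0)
    (hgen : IntermediateField.adjoin ℚ {ω} = ⊤) (x : K) :
    ∃ a b c : ℚ, x = a + b * ω + c * ω ^ 2 := by
  obtain ⟨B, h0, h1, h2⟩ := exists_basis hω hgen
  refine ⟨B.repr x 0, B.repr x 1, B.repr x 2, ?_⟩
  conv_lhs => rw [← B.sum_repr x]
  rw [Fin.sum_univ_three, h0, h1, h2]; simp [Rat.smul_def]

/-- The coordinates of a unit are only assumed rational (that `𝓞 K = ℤ[ω]` is not needed), but the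
coefficients of its characteristic polynomial and its index form are integers. -/
theorem exists_unitData (hω : ω ^ 3 - ω ^ 2 - 1 = 0)
    (hgen : IntermediateField.adjoin ℚ {ω} = ⊤) (ε : (𝓞 K)ˣ) {a b c : ℚ}
    (habc : ((ε : 𝓞 K) : K) = a + b * ω + c * ω ^ 2) :
    ∃ t s N q : ℤ, UnitData ω ε a b c t s N q := by
  obtain ⟨B, h0, h1, h2⟩ := exists_basis hω hgen
  set x : K := ((ε : 𝓞 K) : K) with hx
  set y : K := (((ε⁻¹ : (𝓞 K)ˣ) : 𝓞 K) : K) with hy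
  have hxy : x * y = 1 := by
    rw [hx, hy, ← map_mul, ← Units.val_mul, mul_inv_cancel, Units.val_one, map_one]
  have hint : ∀ z : 𝓞 K, ∃ m : ℤ, (m : ℚ) = Algebra.trace ℚ K (z : K) := by
    intro z
    obtain ⟨m, hm⟩ := IsIntegrallyClosed.isIntegral_iff.mp
      (Algebra.isIntegral_trace (L := ℚ) (RingOfIntegers.isIntegral_coe z))
    exact ⟨m, by simpa using hm⟩
  have hΦ : Algebra.leftMulMatrix B x = mulMat a b c := by
    rw [habc, leftMulMatrix_eq hω h0 h1 h2]
  obtain ⟨t, ht⟩ := hint (ε : 𝓞 K)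
  obtain ⟨t', ht'⟩ := hint ((ε⁻¹ : (𝓞 K)ˣ) : 𝓞 K)
  obtain ⟨N, hN, hN1⟩ : ∃ N : ℤ, (N : ℚ) = Algebra.norm ℚ x ∧ (N = 1 ∨ N = -1) := by
    have := NumberField.isUnit_iff_norm.mp ε.isUnit
    rw [RingOfIntegers.coe_norm] at this
    rcases (abs_eq zero_le_one).mp this with h | h
    · exact ⟨1, by rw [h]; simp, Or.inl rfl⟩
    · exact ⟨-1, by rw [h]; simp, Or.inr rfl⟩
  -- `adj Φ(ε) = N Φ(ε⁻¹)`, whose trace is `s`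
  have hadj : (mulMat a b c).adjugate = (N : ℚ) • Algebra.leftMulMatrix B y := by
    have h : mulMat a b c * Algebra.leftMulMatrix B y = 1 := by
      rw [← hΦ, ← map_mul, hxy, map_one]
    calc (mulMat a b c).adjugate
        = (mulMat a b c).adjugate * (mulMat a b c * Algebra.leftMulMatrix B y) := by
          rw [h, mul_one]
      _ = _ := by
          rw [← mul_assoc, Matrix.adjugate_mul, ← hΦ, ← Algebra.norm_eq_matrix_det, ← hN,
            smul_mul_assoc, one_mul]
  have hs : (a ^ 2 - b * c + 2 * (a * (a + b + c) - c * (b + c)) : ℚ) = N * t' := by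
    have := congrArg Matrix.trace hadj
    rw [Matrix.trace_smul, ← Algebra.trace_eq_matrix_trace, ← ht', smul_eq_mul] at this
    rw [← this, mulMat, Matrix.adjugate_fin_three, Matrix.trace_fin_three]
    simp; ring
  have ht2 : (t : ℚ) = 3 * a + b + c := by
    rw [ht, ← hx, Algebra.trace_eq_matrix_trace B, hΦ, mulMat, Matrix.trace_fin_three]
    simp; ring
  have hN2 : (N : ℚ) = a * (a * (a + b + c) - c * (b + c)) - c * (b * (a + b + c) - c ^ 2)
      + (b + c) * (b * (b + c) - a * c) := by
    rw [hN, Algebra.norm_eq_matrix_det B, hΦ, mulMat, Matrix.det_fin_three]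
    simp; ring
  have hNN : (N : ℚ) * N = 1 := by rcases hN1 with h | h <;> simp [h]
  -- the index form is integral, as `31` is squarefree
  obtain ⟨q, hq⟩ : ∃ q : ℤ, (q : ℚ) = b ^ 3 + 2 * b ^ 2 * c + b * c ^ 2 - c ^ 3 := by
    set Q : ℚ := b ^ 3 + 2 * b ^ 2 * c + b * c ^ 2 - c ^ 3 with hQ
    have hd := disc_eq a b c (t : ℚ) ((N * t' : ℤ) : ℚ) N Q ht2 (by push_cast; rw [hs]) hN2 hQ
    set d : ℤ := t ^ 2 * (N * t') ^ 2 - 4 * (N * t') ^ 3 - 4 * t ^ 3 * N + 18 * t * (N * t') * N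
      - 27 * N ^ 2 with hd'
    have hd1 : (d : ℚ) = -31 * Q ^ 2 := by rw [← hd, hd']; push_cast; ring
    have hint : IsIntegral ℤ (31 * Q) := by
      refine IsIntegral.of_pow (n := 2) (by norm_num) ?_
      have : (31 * Q) ^ 2 = ((-31 * d : ℤ) : ℚ) := by push_cast; rw [hd1]; ring
      rw [this]; exact isIntegral_algebraMap (R := ℤ) (x := -31 * d)
    obtain ⟨m, hm⟩ := IsIntegrallyClosed.isIntegral_iff.mp hint
    have hm : (m : ℚ) = 31 * Q := by simpa using hm
    have hm2 : m ^ 2 = 31 * (-d) := by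
      have : ((m ^ 2 : ℤ) : ℚ) = ((31 * (-d) : ℤ) : ℚ) := by
        push_cast; rw [hm, hd1]; ring
      exact_mod_cast this
    obtain ⟨q, hq⟩ := Int.Prime.dvd_pow' (p := 31) (by norm_num) (k := 2) (n := m)
      ⟨-d, by exact_mod_cast hm2⟩
    refine ⟨q, ?_⟩
    rw [hq] at hm; push_cast at hm; linarith
  refine ⟨t, N * t', N, q, habc, ht2, by push_cast; rw [hs], hN2, hq, hN1, ?_⟩
  rw [← ht']; push_cast; rw [← mul_assoc, hNN, one_mul]


/-! ### The real embedding and the fundamental unit -/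

/-- The real conjugate of a unit under the real embedding `φ`, as a homomorphism to `ℝˣ`. -/
noncomputable def realVal (φ : K →ₐ[ℚ] ℝ) : (𝓞 K)ˣ →* ℝˣ :=
  Units.map (((φ : K →+* ℝ).comp (algebraMap (𝓞 K) K) : 𝓞 K →+* ℝ) : 𝓞 K →* ℝ)

theorem coe_realVal (φ : K →ₐ[ℚ] ℝ) (ε : (𝓞 K)ˣ) :
    (realVal φ ε : ℝ) = φ ((ε : 𝓞 K) : K) := rfl

theorem realVal_injective (φ : K →ₐ[ℚ] ℝ) : Function.Injective (realVal φ) := by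
  intro u v h
  have h := congrArg (fun x : ℝˣ => (x : ℝ)) h
  simp only [coe_realVal] at h
  exact Units.ext (RingOfIntegers.ext (φ.injective h))

theorem exists_real_root : ∃ r : ℝ, r ^ 3 - r ^ 2 - 1 = 0 ∧ 1.4655 < r ∧ r < 1.4656 := by
  have hc : ContinuousOn (fun x : ℝ => x ^ 3 - x ^ 2 - 1) (Set.Icc 1.4655 1.4656) := by fun_prop
  obtain ⟨r, ⟨h1, h2⟩, hr⟩ := intermediate_value_Ioo (by norm_num) hc
    (show (0 : ℝ) ∈ Set.Ioo _ _ from ⟨by norm_num, by norm_num⟩)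
  exact ⟨r, hr, h1, h2⟩

/-- The index form of `ℤ[ω]` has no nontrivial rational zeros. -/
theorem index_form_eq_zero {b c : ℚ} (h : b ^ 3 + 2 * b ^ 2 * c + b * c ^ 2 - c ^ 3 = 0) :
    b = 0 ∧ c = 0 := by
  by_cases hc : c = 0
  · subst hc
    exact ⟨by simpa using h, rfl⟩
  exfalso
  obtain ⟨x, hx⟩ : ∃ x : ℚ, b = x * c := ⟨b / c, by field_simp⟩
  subst hx
  have hx : x ^ 3 + 2 * x ^ 2 + x - 1 = 0 := by
    have : c ^ 3 * (x ^ 3 + 2 * x ^ 2 + x - 1) = 0 := by linear_combination h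
    exact (mul_eq_zero.mp this).resolve_left (pow_ne_zero 3 hc)
  have hint : IsIntegral ℤ x := by
    open Polynomial in
    exact ⟨X ^ 3 + 2 * X ^ 2 + X - 1, by monicity!, by simpa using hx⟩
  obtain ⟨y, rfl⟩ := IsIntegrallyClosed.isIntegral_iff.mp hint
  have hy : y ^ 3 + 2 * y ^ 2 + y - 1 = 0 := by
    simp only [eq_intCast] at hx; exact_mod_cast hx
  have : y * (y + 1) ^ 2 = 1 := by linear_combination hy
  rcases Int.eq_one_or_neg_one_of_mul_eq_one this with h | h <;> subst h <;> norm_num at this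

theorem UnitData.disc {ε : (𝓞 K)ˣ} {a b c : ℚ} {t s N q : ℤ} (h : UnitData ω ε a b c t s N q) :
    t ^ 2 * s ^ 2 - 4 * s ^ 3 - 4 * t ^ 3 * N + 18 * t * s * N - 27 * N ^ 2 = -31 * q ^ 2 := by
  have := disc_eq a b c (t : ℚ) s N q h.t_eq h.s_eq h.N_eq h.q_eq
  exact_mod_cast this

/-- If `e` is the real conjugate of a unit, with complex conjugates `α` and `α'`, then
`w = α α' = s - (t - e) e` and `α + α' = t - e`, whence `N = w e` and `(t - e)² ≤ 4 w`. -/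
theorem UnitData.real_bounds {r : ℝ} (hr : r ^ 3 - r ^ 2 - 1 = 0) {φ : K →ₐ[ℚ] ℝ} (hφ : φ ω = r)
    {ε : (𝓞 K)ˣ} {a b c : ℚ} {t s N q : ℤ} (h : UnitData ω ε a b c t s N q) {e : ℝ}
    (he : e = realVal φ ε) :
    (N : ℝ) = (s - (t - e) * e) * e ∧ (t - e) ^ 2 ≤ 4 * (s - (t - e) * e) := by
  have he' : e = a + b * r + c * r ^ 2 := by
    rw [he, coe_realVal, h.coe_eq]
    simp [hφ]
  have ht : (t : ℝ) = 3 * a + b + c := by exact_mod_cast congrArg (fun x : ℚ => (x : ℝ)) h.t_eq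
  have hs : (s : ℝ) = a ^ 2 - b * c + 2 * (a * (a + b + c) - c * (b + c)) := by
    exact_mod_cast congrArg (fun x : ℚ => (x : ℝ)) h.s_eq
  have hN : (N : ℝ) = a * (a * (a + b + c) - c * (b + c)) - c * (b * (a + b + c) - c ^ 2)
      + (b + c) * (b * (b + c) - a * c) := by
    exact_mod_cast congrArg (fun x : ℚ => (x : ℝ)) h.N_eq
  have hcub : (N : ℝ) = (s - (t - e) * e) * e := by
    rw [hN, hs, ht, he']
    linear_combination -((c : ℝ) ^ 3 * r ^ 3 + 3 * b * c ^ 2 * r ^ 2 + c ^ 3 * r ^ 2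
      + 3 * b ^ 2 * c * r + 2 * b * c ^ 2 * r + b ^ 3 + b ^ 2 * c + c ^ 3) * hr
  refine ⟨hcub, ?_⟩
  have hdisc : (t : ℝ) ^ 2 * s ^ 2 - 4 * s ^ 3 - 4 * t ^ 3 * N + 18 * t * s * N - 27 * N ^ 2
      = -31 * q ^ 2 := by exact_mod_cast h.disc
  by_cases hq : q = 0
  · have h0 := h.q_eq
    rw [hq, Int.cast_zero] at h0
    obtain ⟨rfl, rfl⟩ := index_form_eq_zero h0.symm
    rw [hs, ht, he']
    apply le_of_eq
    push_cast; ring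
  · -- the discriminant of the cubic is `((t - e)² - 4 w) f'(e)²`
    set u : ℝ := t - e with hu
    set w : ℝ := s - u * e with hw
    have hid : (u ^ 2 - 4 * w) * (e ^ 2 - u * e + w) ^ 2 = -31 * q ^ 2 := by
      rw [← hdisc, hcub, show (t : ℝ) = u + e by rw [hu]; ring,
        show (s : ℝ) = w + u * e by rw [hw]; ring]
      ring
    have hq2 : (0 : ℝ) < q ^ 2 := by positivity
    by_contra! hlt
    have : 0 ≤ (u ^ 2 - 4 * w) * (e ^ 2 - u * e + w) ^ 2 :=
      mul_nonneg (by linarith) (sq_nonneg _)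
    linarith

/-- The real conjugate of a unit other than `1` does not lie in `[1, r)`: the characteristic
polynomial of such a unit would have small coefficients and discriminant `-31 q²`. -/
theorem eq_one_of_one_le (hω : ω ^ 3 - ω ^ 2 - 1 = 0)
    (hgen : IntermediateField.adjoin ℚ {ω} = ⊤) {r : ℝ} (hr : r ^ 3 - r ^ 2 - 1 = 0)
    (hr1 : 1.4655 < r) (hr2 : r < 1.4656) {φ : K →ₐ[ℚ] ℝ} (hφ : φ ω = r) {v : (𝓞 K)ˣ}
    (h1 : 1 ≤ (realVal φ v : ℝ)) (h2 : (realVal φ v : ℝ) < r) : v = 1 := by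
  obtain ⟨a, b, c, habc⟩ := exists_coords_s16 hω hgen ((v : 𝓞 K) : K)
  obtain ⟨t, s, N, q, hD⟩ := exists_unitData hω hgen v habc
  obtain ⟨hN, hu⟩ := hD.real_bounds hr hφ rfl
  set e : ℝ := ((realVal φ v : ℝˣ) : ℝ) with he
  have hNpos : (0 : ℝ) ≤ N := by
    rw [hN]; exact mul_nonneg (by nlinarith [sq_nonneg ((t : ℝ) - e)]) (by linarith)
  have hN1 : N = 1 := by
    rcases hD.N_unit with h | h
    · exact h
    · rw [h] at hNpos; norm_num at hNpos
  by_cases hq : q = 0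
  · have h0 := hD.q_eq
    rw [hq, Int.cast_zero] at h0
    obtain ⟨rfl, rfl⟩ := index_form_eq_zero h0.symm
    have ha : a ^ 3 = 1 := by
      have := hD.N_eq
      rw [hN1] at this; push_cast at this; linarith
    have ha1 : a = 1 := by
      have : (a - 1) * (a ^ 2 + a + 1) = 0 := by linear_combination ha
      rcases mul_eq_zero.mp this with h | h
      · linarith
      · nlinarith [sq_nonneg (a + 1 / 2)]
    refine Units.ext (RingOfIntegers.ext ?_)
    rw [habc, ha1]; simp
  exfalso
  rw [hN1, Int.cast_one] at hN
  set u : ℝ := t - e with hu'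
  set w : ℝ := s - u * e with hw
  have hw0 : 0 < w := by
    by_contra! h
    nlinarith
  have hw1 : w ≤ 1 := by nlinarith
  have hu1 : u ≤ 2 := by nlinarith
  have hu2 : -2 ≤ u := by nlinarith
  have hue : (u * e) ^ 2 ≤ 4 * e := by
    have : u ^ 2 * e ^ 2 ≤ 4 * w * e ^ 2 := mul_le_mul_of_nonneg_right hu (sq_nonneg e)
    nlinarith
  have hue1 : u * e < 5 / 2 := by nlinarith
  have hue2 : -(5 / 2) < u * e := by nlinarith
  have t1 : -1 ≤ t := by
    have : (-2 : ℝ) < t := by linarith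
    have : (-2 : ℤ) < t := by exact_mod_cast this
    omega
  have t2 : t ≤ 3 := by
    have : (t : ℝ) < 4 := by linarith
    have : t < 4 := by exact_mod_cast this
    omega
  have s1 : -2 ≤ s := by
    have : (-3 : ℝ) < s := by linarith
    have : (-3 : ℤ) < s := by exact_mod_cast this
    omega
  have s2 : s ≤ 3 := by
    have : (s : ℝ) < 4 := by linarith
    have : s < 4 := by exact_mod_cast this
    omega
  have hdisc := hD.disc
  rw [hN1] at hdisc
  have hq1 : 1 ≤ q ^ 2 := by
    have : 0 < q ^ 2 := by positivity
    omega
  -- in this range only three cubics have a discriminant that is negative and divisible by `31`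
  have hcases : (t = 0 ∧ s = 1) ∨ (t = 1 ∧ s = -2) ∨ (t = 1 ∧ s = 0) := by
    generalize q ^ 2 = m at hdisc hq1
    clear_value u w e
    clear hN hu hu' hw
    interval_cases t <;> interval_cases s <;> omega
  have hcub : e ^ 3 - t * e ^ 2 + s * e = 1 := by rw [hN, hw, hu']; ring
  rcases hcases with ⟨rfl, rfl⟩ | ⟨rfl, rfl⟩ | ⟨rfl, rfl⟩ <;> push_cast at hcub
  · nlinarith [sq_nonneg e]
  · nlinarith [mul_nonneg (sub_nonneg.mpr h1) (sub_nonneg.mpr h1)]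
  · have h : (r - e) * (r * (r - 1) + e * (e - 1) + r * e) = 0 := by linear_combination hr - hcub
    have : 0 < (r - e) * (r * (r - 1) + e * (e - 1) + r * e) := by
      refine mul_pos (by linarith) ?_
      nlinarith
    linarith

theorem eq_one_of_mem_Ioo (hω : ω ^ 3 - ω ^ 2 - 1 = 0)
    (hgen : IntermediateField.adjoin ℚ {ω} = ⊤) {r : ℝ} (hr : r ^ 3 - r ^ 2 - 1 = 0)
    (hr1 : 1.4655 < r) (hr2 : r < 1.4656) {φ : K →ₐ[ℚ] ℝ} (hφ : φ ω = r) {v : (𝓞 K)ˣ}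
    (h1 : 1 < r * (realVal φ v : ℝ)) (h2 : (realVal φ v : ℝ) < r) : v = 1 := by
  rcases le_or_gt 1 (realVal φ v : ℝ) with h | h
  · exact eq_one_of_one_le hω hgen hr hr1 hr2 hφ h h2
  · have hpos : 0 < (realVal φ v : ℝ) := by
      by_contra! h'
      nlinarith
    rw [← inv_eq_one]
    apply eq_one_of_one_le hω hgen hr hr1 hr2 hφ
    · rw [map_inv, Units.val_inv_eq_inv_val]
      exact (one_le_inv₀ hpos).mpr h.le
    · rw [map_inv, Units.val_inv_eq_inv_val]
      exact inv_lt_of_inv_lt₀ (by linarith) (by rwa [inv_lt_iff_one_lt_mul₀' (by linarith)])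

theorem exists_unit_omega {K : Type*} [Field K] {ω : K} (hω : ω ^ 3 - ω ^ 2 - 1 = 0) :
    ∃ W : (𝓞 K)ˣ, ((W : 𝓞 K) : K) = ω ∧ (((W⁻¹ : (𝓞 K)ˣ) : 𝓞 K) : K) = ω ^ 2 - ω := by
  have hint : IsIntegral ℤ ω := by
    open Polynomial in
    exact ⟨X ^ 3 - X ^ 2 - 1, by monicity!, by simpa using hω⟩
  let x : 𝓞 K := ⟨ω, hint⟩
  have hx : (x : K) = ω := rfl
  have h : x * (x ^ 2 - x) = 1 := by
    apply RingOfIntegers.ext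
    simp only [map_mul, map_sub, map_pow, map_one, hx]
    linear_combination hω
  exact ⟨⟨x, x ^ 2 - x, h, by rw [mul_comm]; exact h⟩, rfl, by simp [Units.inv_mk, hx]⟩

/-- `ω` is a fundamental unit: the units with positive real conjugate are its powers. -/
theorem exists_zpow (hω : ω ^ 3 - ω ^ 2 - 1 = 0)
    (hgen : IntermediateField.adjoin ℚ {ω} = ⊤) {r : ℝ} (hr : r ^ 3 - r ^ 2 - 1 = 0)
    (hr1 : 1.4655 < r) (hr2 : r < 1.4656) {φ : K →ₐ[ℚ] ℝ} (hφ : φ ω = r)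
    {W : (𝓞 K)ˣ} (hW : ((W : 𝓞 K) : K) = ω) {v : (𝓞 K)ˣ}
    (hv : 0 < (realVal φ v : ℝ)) : ∃ k : ℤ, v = W ^ k := by
  obtain ⟨k, hk1, hk2⟩ := exists_mem_Ico_zpow hv (show 1 < r by linarith)
  refine ⟨k, ?_⟩
  have hrk : 0 < r ^ k := zpow_pos (by linarith) k
  have hval : (realVal φ (v * (W ^ k)⁻¹) : ℝ) = (realVal φ v : ℝ) / r ^ k := by
    rw [map_mul, map_inv, map_zpow, Units.val_mul, Units.val_inv_eq_inv_val,
      Units.val_zpow_eq_zpow_val, coe_realVal φ W, hW, hφ, div_eq_mul_inv]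
  rw [← mul_inv_eq_one]
  apply eq_one_of_one_le hω hgen hr hr1 hr2 hφ
  · rw [hval]; exact (one_le_div hrk).mpr hk1
  · rw [hval, div_lt_iff₀ hrk, mul_comm, ← zpow_add_one₀ (by linarith)]; exact hk2

theorem trace_eta_pow (hω : ω ^ 3 - ω ^ 2 - 1 = 0)
    (hgen : IntermediateField.adjoin ℚ {ω} = ⊤) (m : ℕ) :
    Algebra.trace ℚ K ((ω ^ 2 - ω) ^ m) = ((etaMat ^ m).trace : ℤ) := by
  obtain ⟨B, h0, h1, h2⟩ := exists_basis hω hgen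
  have hη : ω ^ 2 - ω = ((0 : ℚ) : K) + ((-1 : ℚ) : K) * ω + ((1 : ℚ) : K) * ω ^ 2 := by
    push_cast; ring
  have hM : mulMat 0 (-1) 1 = (Int.castRingHom ℚ).mapMatrix etaMat := by
    ext i j; fin_cases i <;> fin_cases j <;> norm_num [mulMat, etaMat]
  rw [Algebra.trace_eq_matrix_trace B, map_pow, hη, leftMulMatrix_eq hω h0 h1 h2, hM, ← map_pow]
  simp [Matrix.trace]

/-! ### Sums of two units -/

/-- Equivalent to `3 = ω³ - ω⁻⁵`. -/
theorem omega_pow_eight {F : Type*} [Field F] {ω : F} (hω : ω ^ 3 - ω ^ 2 - 1 = 0) :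
    ω ^ 8 = 3 * ω ^ 5 + 1 := by
  linear_combination (ω ^ 5 + ω ^ 4 + ω ^ 3 - ω ^ 2 + 1) * hω

/-- Equivalent to `67 = ω¹¹ - ω⁻²²`. -/
theorem omega_pow_thirtythree {F : Type*} [Field F] {ω : F} (hω : ω ^ 3 - ω ^ 2 - 1 = 0) :
    ω ^ 33 = 67 * ω ^ 22 + 1 := by
  have h5 : ω ^ 5 = 1 + ω + 2 * ω ^ 2 := by linear_combination (ω ^ 2 + ω + 1) * hω
  have h11 : ω ^ 11 = 13 + 9 * ω + 19 * ω ^ 2 := by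
    rw [show ω ^ 11 = ω * (ω ^ 5) ^ 2 by ring, h5]
    linear_combination (4 * ω ^ 2 + 8 * ω + 13) * hω
  rw [show ω ^ 33 = (ω ^ 11) ^ 3 by ring, show ω ^ 22 = (ω ^ 11) ^ 2 by ring, h11]
  linear_combination ((6859) * ω ^ 3 + (16606) * ω ^ 2 + (11115) * ω ^ 1 + (9127) * ω ^ 0) * hω

/-- Here `e = φ(ε)`, `-D = φ(δ)` and `u` is the sum of the two complex conjugates of `ε`. -/
theorem real_estimate {r e D u n : ℝ} (hr1 : 1.4655 < r) (hr2 : r < 1.4656) (hn : 4 ≤ n)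
    (he : e = n + D) (hD : 0 < D) (hkey : e * D * (n - u) = 1) (hue : u ^ 2 * e ≤ 4) :
    1 < r * (e ^ 2 * D) ∧ e ^ 2 * D < r := by
  have hu3 : u ^ 2 ≤ 1 := by nlinarith [sq_nonneg u]
  have hu4 : u ≤ 1 := by nlinarith
  have hu5 : -1 ≤ u := by nlinarith
  have hDle : D ≤ 1 / 12 := by
    by_contra! h
    have h1 : 1 / 3 < e * D := by nlinarith
    nlinarith
  have hP : e ^ 2 * D * (n - u) = e := by linear_combination e * hkey
  have hPpos : 0 < n - u := by linarith
  constructor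
  · refine lt_of_mul_lt_mul_right (a := n - u) ?_ hPpos.le
    rw [mul_assoc r, hP]; nlinarith
  · refine lt_of_mul_lt_mul_right (a := n - u) ?_ hPpos.le
    rw [hP]; nlinarith

/-- If a unit `ε` of norm `1` and a unit `δ` add up to `n ≥ 4`, then `δ = -ε⁻²`, so `ε⁻¹` has trace
zero; this forces `ε = ω¹¹`. -/
theorem eq_of_norm_one (hω : ω ^ 3 - ω ^ 2 - 1 = 0)
    (hgen : IntermediateField.adjoin ℚ {ω} = ⊤) {n : ℕ} (hn : 4 ≤ n) {ε δ : (𝓞 K)ˣ}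
    (hsum : (ε : 𝓞 K) + (δ : 𝓞 K) = (n : 𝓞 K)) {a b c : ℚ} {t s q t' s' N' q' : ℤ}
    (hε : UnitData ω ε a b c t s 1 q) (hδ : UnitData ω δ (n - a) (-b) (-c) t' s' N' q') :
    n = 67 := by
  obtain ⟨r, hr, hr1, hr2⟩ := exists_real_root
  obtain ⟨φ, hφ⟩ := exists_embedding hω hgen hr
  obtain ⟨W, hW, hWinv⟩ := exists_unit_omega hω
  have hsumK : ((ε : 𝓞 K) : K) + ((δ : 𝓞 K) : K) = n := by
    rw [← map_add, hsum, map_natCast]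
  -- `N' = f(n)` where `f` is the characteristic polynomial of `ε`
  have hchar : (n : ℤ) ^ 3 - t * n ^ 2 + s * n - 1 = N' := by
    have : (n : ℚ) ^ 3 - t * n ^ 2 + s * n - 1 = N' := by
      have h1 := hε.N_eq
      push_cast at h1
      rw [hδ.N_eq, hε.t_eq, hε.s_eq]; linear_combination -h1
    exact_mod_cast this
  have hN' : N' = -1 := by
    rcases hδ.N_unit with h | h
    · exfalso
      have : (n : ℤ) ∣ 2 := ⟨n ^ 2 - t * n + s, by linear_combination -hchar - h⟩
      have := Int.le_of_dvd (by norm_num) this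
      omega
    · exact h
  have hs : s = n * (t - n) := by
    have h0 : (n : ℤ) ≠ 0 := by omega
    apply mul_left_cancel₀ h0
    rw [hN'] at hchar
    linear_combination hchar
  obtain ⟨hN1, hu1⟩ := hε.real_bounds hr hφ rfl
  obtain ⟨hN2, hu2⟩ := hδ.real_bounds hr hφ rfl
  have hde : (realVal φ δ : ℝ) = n - realVal φ ε := by
    rw [coe_realVal, coe_realVal, eq_sub_iff_add_eq, ← map_add, add_comm, hsumK, map_natCast]
  rw [hN', hde] at hN2
  rw [hde] at hu2
  set e : ℝ := ((realVal φ ε : ℝˣ) : ℝ) with he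
  have hsR : (s : ℝ) = n * (t - n) := by exact_mod_cast hs
  have hnR : (4 : ℝ) ≤ n := by exact_mod_cast hn
  push_cast at hN1 hN2
  have hepos : 0 < e := by
    by_contra! h
    nlinarith [mul_nonneg (show (0 : ℝ) ≤ s - (t - e) * e by nlinarith [sq_nonneg ((t : ℝ) - e)])
      (neg_nonneg.mpr h)]
  have hDpos : 0 < e - n := by
    by_contra! h
    nlinarith [mul_nonneg (show (0 : ℝ) ≤ s' - (t' - (n - e)) * (n - e) by
      nlinarith [sq_nonneg ((t' : ℝ) - (n - e))]) (show 0 ≤ n - e by linarith)]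
  obtain ⟨D, hD⟩ : ∃ D : ℝ, e = n + D := ⟨e - n, by ring⟩
  obtain ⟨u, hu⟩ : ∃ u : ℝ, (t : ℝ) = e + u := ⟨t - e, by ring⟩
  have hDpos : 0 < D := by linarith
  have hkey : e * D * (n - u) = 1 := by
    rw [hN1, hsR, hu, hD]; ring
  have hue : u ^ 2 * e ≤ 4 := by
    have h := mul_le_mul_of_nonneg_right hu1 hepos.le
    rw [mul_assoc, ← hN1, hu] at h
    simpa using h
  obtain ⟨hlow, hupp⟩ := real_estimate hr1 hr2 hnR hD hDpos hkey hue
  -- the unit `-ε² δ` has real conjugate `e² D`, close enough to `1`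
  have hval : (realVal φ (ε ^ 2 * -δ) : ℝ) = e ^ 2 * D := by
    have : (realVal φ (-δ) : ℝ) = D := by
      have h : (((-δ : (𝓞 K)ˣ) : 𝓞 K) : K) = -((δ : 𝓞 K) : K) := by simp
      rw [coe_realVal, h, map_neg, ← coe_realVal, hde]; linarith
    rw [map_mul, map_pow, Units.val_mul, Units.val_pow_eq_pow_val, this]
  have hP : e ^ 2 * D * (n - u) = e := by linear_combination e * hkey
  have hone : ε ^ 2 * -δ = 1 := by
    apply eq_one_of_mem_Ioo hω hgen hr hr1 hr2 hφ
    · rw [hval]; exact hlow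
    · rw [hval]; exact hupp
  have hval1 : e ^ 2 * D = 1 := by rw [← hval, hone]; simp
  have hs0 : s = 0 := by
    have h1 : e = n - u := by rw [hval1, one_mul] at hP; exact hP.symm
    have : (t : ℝ) = n := by linarith
    have : (s : ℝ) = 0 := by rw [hsR, this]; ring
    exact_mod_cast this
  obtain ⟨k, hk⟩ := exists_zpow hω hgen hr hr1 hr2 hφ hW hepos
  have hek : e = r ^ k := by
    rw [he, hk, map_zpow, Units.val_zpow_eq_zpow_val, coe_realVal, hW, hφ]
  have hkpos : 0 ≤ k := by
    by_contra! h
    have : r ^ k < 1 := zpow_lt_one_of_neg₀ (by linarith) h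
    linarith
  lift k to ℕ using hkpos with m
  rw [zpow_natCast] at hk hek
  have htr : (etaMat ^ m).trace = 0 := by
    have h1 := hε.trace_inv
    have h2 : (((ε⁻¹ : (𝓞 K)ˣ) : 𝓞 K) : K) = (ω ^ 2 - ω) ^ m := by
      rw [hk, ← inv_pow, ← hWinv]; simp only [Units.val_pow_eq_pow_val, map_pow]
    rw [hs0, h2, trace_eta_pow hω hgen] at h1
    simpa using h1
  rcases trace_etaMat_pow_eq_zero htr with rfl | rfl
  · rw [pow_one] at hek; linarith
  · -- `n ε² = ε³ - 1` with `ε = ω¹¹`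
    have hone : ((ε : 𝓞 K) : K) ^ 2 * -((δ : 𝓞 K) : K) = 1 := by
      have := congrArg (fun x : (𝓞 K)ˣ => ((x : 𝓞 K) : K)) hone
      simpa using this
    have hε11 : ((ε : 𝓞 K) : K) = ω ^ 11 := by rw [hk]; simp [hW]
    have h33 := omega_pow_thirtythree hω
    have hω0 : ω ≠ 0 := by rintro rfl; simp at hω
    have hδn : ((δ : 𝓞 K) : K) = n - ω ^ 11 := by rw [← hε11, ← hsumK]; ring
    rw [hε11, hδn] at hone
    have h : ((n : K) - 67) * ω ^ 22 = 0 := by linear_combination h33 - hone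
    have := sub_eq_zero.mp ((mul_eq_zero.mp h).resolve_right (pow_ne_zero _ hω0))
    exact_mod_cast this

theorem eq_of_add_eq (hω : ω ^ 3 - ω ^ 2 - 1 = 0)
    (hgen : IntermediateField.adjoin ℚ {ω} = ⊤) {n : ℕ} (hn : 4 ≤ n) {ε δ : (𝓞 K)ˣ}
    (hsum : (ε : 𝓞 K) + (δ : 𝓞 K) = (n : 𝓞 K)) : n = 67 := by
  obtain ⟨a, b, c, habc⟩ := exists_coords_s16 hω hgen ((ε : 𝓞 K) : K)
  have hsumK : ((ε : 𝓞 K) : K) + ((δ : 𝓞 K) : K) = n := by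
    rw [← map_add, hsum, map_natCast]
  have hδ : ((δ : 𝓞 K) : K) = ((n - a : ℚ) : K) + ((-b : ℚ) : K) * ω + ((-c : ℚ) : K) * ω ^ 2 := by
    push_cast; linear_combination hsumK - habc
  obtain ⟨t, s, N, q, h1⟩ := exists_unitData hω hgen ε habc
  obtain ⟨t', s', N', q', h2⟩ := exists_unitData hω hgen δ hδ
  rcases h1.N_unit with rfl | rfl
  · exact eq_of_norm_one hω hgen hn hsum h1 h2
  -- otherwise `δ` has norm `1`, and the roles are exchanged
  have hN' : N' = 1 := by
    rcases h2.N_unit with h | h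
    · exact h
    · exfalso
      have hchar : (n : ℤ) ^ 3 - t * n ^ 2 + s * n - -1 = N' := by
        have : (n : ℚ) ^ 3 - t * n ^ 2 + s * n - (-1 : ℤ) = N' := by
          rw [h1.N_eq, h2.N_eq, h1.t_eq, h1.s_eq]; ring
        exact_mod_cast this
      have : (n : ℤ) ∣ 2 := ⟨-(n ^ 2 - t * n + s), by linear_combination hchar + h⟩
      have := Int.le_of_dvd (by norm_num) this
      omega
  subst hN'
  refine eq_of_norm_one hω hgen hn (by rw [add_comm]; exact hsum) h2
    (t' := t) (s' := s) (N' := -1) (q' := q) ?_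
  simpa using h1

end

/-- For the complex cubic field `K = ℚ(ω)` with
`ω³ − ω² − 1 = 0` (discriminant `−31`), `N_K = {1, 2, 3, 67}`. -/
theorem sums_of_units_stmt_16 (K : Type*) [Field K] [NumberField K]
    (ω : K) (hω : ω ^ 3 - ω ^ 2 - 1 = 0)
    (hgen : IntermediateField.adjoin ℚ {ω} = ⊤) :
    NK K = {1, 2, 3, 67} := by
  ext n
  simp only [NK, Set.mem_ofPred_eq, Set.mem_insert_iff, Set.mem_singleton_iff]
  constructor
  · rintro ⟨hpos, ε, δ, h⟩
    by_cases hn : 4 ≤ n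
    · exact Or.inr (Or.inr (Or.inr (eq_of_add_eq hω hgen hn h)))
    · omega
  · obtain ⟨W, hW, hWinv⟩ := exists_unit_omega hω
    have hω0 : ω ≠ 0 := by rintro rfl; simp at hω
    have hWinv' : (((W⁻¹ : (𝓞 K)ˣ) : 𝓞 K) : K) = ω⁻¹ := by
      rw [hWinv]; apply eq_inv_of_mul_eq_one_left; linear_combination hω
    rintro (rfl | rfl | rfl | rfl)
    · refine ⟨by norm_num, W ^ 3, -W ^ 2, RingOfIntegers.ext ?_⟩
      simp [hW]; linear_combination hω
    · exact ⟨by norm_num, 1, 1, by norm_num⟩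
    · refine ⟨by norm_num, W ^ 3, -W⁻¹ ^ 5, RingOfIntegers.ext ?_⟩
      have h8 := omega_pow_eight hω
      simp only [Units.val_neg, Units.val_pow_eq_pow_val, map_add, map_neg, map_pow, hW, hWinv',
        map_natCast]
      push_cast; field_simp; linear_combination h8
    · refine ⟨by norm_num, W ^ 11, -W⁻¹ ^ 22, RingOfIntegers.ext ?_⟩
      have h33 := omega_pow_thirtythree hω
      simp only [Units.val_neg, Units.val_pow_eq_pow_val, map_add, map_neg, map_pow, hW, hWinv',
        map_natCast]
      push_cast; field_simp; linear_combination h33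
end

section
/- Let K be a complex cubic field such that K contains no root of g_a(x) = x³ − a x² − 1 for any nonzero integer a ≥ −1 (i.e., K is not isomorphic to any L_a). Then N_K = {2}. -/
/-!
Let `ε + δ = n` with units `ε, δ` of a complex cubic field. The characteristic polynomial
`f = x³ + bx² + cx + d` of multiplication by `ε` on `𝓞 K` has integer coefficients, and
`f(0) = N(-ε) = ±1`, `f(n) = N(δ) = ±1` (`exists_cubic`). If `ε` is rational then `ε = ±1`, which
forces `n = 2`. Otherwise a non-real embedding sends `ε` to a non-real root of `f`
(`im_ne_zero_of_not_rational`), so that `disc f < 0` (`disc_neg`).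

As `n ∣ f(n) - f(0)`, for `n ≠ 2` either `f(n) = f(0)`, and then `f = x(x - n)(x - m) ± 1` for an
integer `m`, or `n = 1` and `f(1) = -f(0)`. If `m = 0` or `m = n`, then `ε`, `-ε`, `n - ε` or
`ε - 1` is a root of some `g_a`. In all other cases the negative discriminant leaves finitely many
`f`; they have discriminant `-23` or `-31`, so define the field `L_{-1}` or `L_1`, and a root of
`g_{-1}` or `g_1` is given explicitly as a polynomial in `ε`
(`exists_root_of_disc_neg`). So `n ≠ 2` contradicts the hypothesis on `K`, while `2 = 1 + 1`.
-/

open NumberField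

/-! ### Cubics of negative discriminant -/

/-- The discriminant of the monic cubic `x³ + bx² + cx + d`. -/
def cubicDisc {R : Type*} [CommRing R] (b c d : R) : R :=
  b ^ 2 * c ^ 2 - 4 * c ^ 3 - 4 * b ^ 3 * d - 27 * d ^ 2 + 18 * b * c * d

lemma disc_neg (b c d : ℝ) (z : ℂ) (hz : z.im ≠ 0)
    (h : z ^ 3 + b * z ^ 2 + c * z + d = 0) : cubicDisc b c d < 0 := by
  obtain ⟨u, v⟩ := z
  have hv : v ≠ 0 := hz
  have hre := congrArg Complex.re h
  have him := congrArg Complex.im h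
  simp [pow_succ] at hre him
  -- the imaginary part of `f(z)`, divided by `v`, determines `c`
  have hc : c = v ^ 2 - 3 * u ^ 2 - 2 * b * u := by
    apply mul_left_cancel₀ hv
    linear_combination him
  have hd : d = -(u ^ 2 + v ^ 2) * (-b - 2 * u) := by
    linear_combination hre - u * hc
  -- the third root is `r = -b - 2u`, and `disc f = (z - z̄)² |z - r|⁴`
  have key : cubicDisc b c d = -(4 * v ^ 2 * ((-b - 3 * u) ^ 2 + v ^ 2) ^ 2) := by
    rw [hd, hc, cubicDisc]; ring
  rw [key]
  have : 0 < 4 * v ^ 2 * ((-b - 3 * u) ^ 2 + v ^ 2) ^ 2 := by positivity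
  linarith

/-- If `x₁, x₂, x₃` are integers with successive gaps `p` and `q`, then `∏ (x - xᵢ) ± 1` has
discriminant `(pq(p + q))² ± 2(p - q)(2p + q)(p + 2q) - 27`. For `q ≤ p` the sign `-` is the one that
makes it smaller, and even then it is negative only if `p ≤ 3`. -/
lemma gap_le_three (p q : ℤ) (hq : 1 ≤ q) (hqp : q ≤ p)
    (h : (p * q * (p + q)) ^ 2 - 2 * ((p - q) * (2 * p + q) * (p + 2 * q)) < 27) : p ≤ 3 := by
  by_contra! hp
  refine absurd h (not_lt.mpr ?_)
  rcases hq.eq_or_lt with rfl | hq2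
  · obtain ⟨u, rfl⟩ : ∃ u, p = u + 4 := ⟨p - 4, by ring⟩
    have hu : 0 ≤ u := by linarith
    rw [← sub_nonneg]; ring_nf; positivity
  · obtain ⟨v, rfl⟩ : ∃ v, q = v + 2 := ⟨q - 2, by ring⟩
    obtain ⟨w, rfl⟩ : ∃ w, p = v + 2 + w := ⟨p - (v + 2), by ring⟩
    have hv : 0 ≤ v := by linarith
    have hw : 0 ≤ w := by linarith
    rw [← sub_nonneg]; ring_nf; positivity

lemma gaps_le_three (p q s : ℤ) (hp : 1 ≤ p) (hq : 1 ≤ q) (hs : s = 1 ∨ s = -1)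
    (h : (p * q * (p + q)) ^ 2 + s * (2 * ((p - q) * (2 * p + q) * (p + 2 * q))) < 27) :
    p ≤ 3 ∧ q ≤ 3 := by
  -- the left side is smallest for `s = -1` if `q ≤ p`, and for `s = 1` if `p ≤ q`
  rcases le_total q p with hqp | hpq
  · have h0 : 0 ≤ (p - q) * (2 * p + q) * (p + 2 * q) := by
      have : 0 ≤ p - q := by linarith
      positivity
    have := gap_le_three p q hq hqp (by rcases hs with rfl | rfl <;> linarith)
    omega
  · have h0 : 0 ≤ (q - p) * (2 * q + p) * (q + 2 * p) := by
      have : 0 ≤ q - p := by linarith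
      positivity
    have e : (q * p * (q + p)) ^ 2 = (p * q * (p + q)) ^ 2 := by ring
    have := gap_le_three q p hp hpq (by rcases hs with rfl | rfl <;> linarith)
    omega

/-- A cubic `x(x - n)(x - m) + s` of negative discriminant with `0, n, m` distinct has bounded
`n` and `m`. -/
lemma bounds_of_disc_neg_s17 (n m s : ℤ) (hn : 1 ≤ n) (hm0 : m ≠ 0) (hmn : m ≠ n) (hs : s = 1 ∨ s = -1)
    (h : cubicDisc (-(n + m)) (n * m) s < 0) : n ≤ 6 ∧ -3 ≤ m ∧ m ≤ 6 := by
  have hs2 : s ^ 2 = 1 := by rcases hs with rfl | rfl <;> norm_num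
  have hs' : -s = 1 ∨ -s = -1 := by omega
  unfold cubicDisc at h
  rcases lt_or_gt_of_ne hm0 with hm | hm
  · have := gaps_le_three (-m) n (-s) (by omega) hn hs' (by linear_combination h + 27 * hs2)
    omega
  rcases lt_or_gt_of_ne hmn with hm' | hm'
  · have := gaps_le_three m (n - m) (-s) (by omega) (by omega) hs'
      (by linear_combination h + 27 * hs2)
    omega
  · have := gaps_le_three n (m - n) (-s) hn (by omega) hs' (by linear_combination h + 27 * hs2)
    omega

/-! ### Roots of `g_a` from a cubic with `f(0), f(n) = ±1` -/

/-- The coefficients `(b, c, d)` of the cubics `f = x³ + bx² + cx + d` with `f(0), f(n) = ±1` for some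
`n ≥ 1`, `n ≠ 2`, and of negative discriminant, other than those with `f = x²(x - n) ± 1` or
`f = x(x - n)² ± 1`. All have discriminant `-23` or `-31`. -/
def sporadic : List (ℤ × ℤ × ℤ) :=
  [(-7, 12, 1), (-5, 4, -1), (-5, 6, 1), (-4, 3, -1), (-4, 5, -1), (-3, 2, -1), (-3, 2, 1),
   (-3, 4, -1), (-2, -3, -1), (-2, 3, -1), (-1, 2, -1), (0, -1, -1), (0, -1, 1), (0, 1, -1),
   (1, -2, 1), (1, 0, -1), (2, -3, 1)]

/-- `K` contains a root of `g_a` for some nonzero `a ≥ -1`. -/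
def HasRoot (K : Type*) [Field K] : Prop :=
  ∃ a : ℤ, a ≠ 0 ∧ -1 ≤ a ∧ ∃ ω : K, ω ^ 3 - (a : K) * ω ^ 2 - 1 = 0

lemma hasRoot_of_sporadic {K : Type*} [Field K] (x : K) (b c d : ℤ)
    (hx : x ^ 3 + b * x ^ 2 + c * x + d = 0) (h : (b, c, d) ∈ sporadic) : HasRoot K := by
  have neg1 : ∀ ω : K, ω ^ 3 + ω ^ 2 - 1 = 0 → HasRoot K := fun ω h =>
    ⟨-1, by norm_num, by norm_num, ω, by push_cast; linear_combination h⟩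
  have pos1 : ∀ ω : K, ω ^ 3 - ω ^ 2 - 1 = 0 → HasRoot K := fun ω h =>
    ⟨1, by norm_num, by norm_num, ω, by push_cast; linear_combination h⟩
  simp only [sporadic, List.mem_cons, Prod.mk.injEq, List.not_mem_nil, or_false] at h
  -- in each case `g_{±1}(ω)` is the multiple of `f(x)` displayed
  rcases h with ⟨rfl, rfl, rfl⟩ | ⟨rfl, rfl, rfl⟩ | ⟨rfl, rfl, rfl⟩ | ⟨rfl, rfl, rfl⟩ |
    ⟨rfl, rfl, rfl⟩ | ⟨rfl, rfl, rfl⟩ | ⟨rfl, rfl, rfl⟩ | ⟨rfl, rfl, rfl⟩ | ⟨rfl, rfl, rfl⟩ |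
    ⟨rfl, rfl, rfl⟩ | ⟨rfl, rfl, rfl⟩ | ⟨rfl, rfl, rfl⟩ | ⟨rfl, rfl, rfl⟩ | ⟨rfl, rfl, rfl⟩ |
    ⟨rfl, rfl, rfl⟩ | ⟨rfl, rfl, rfl⟩ | ⟨rfl, rfl, rfl⟩ <;> push_cast at hx
  · exact neg1 (1 + 3 * x - x ^ 2) (by linear_combination (1 + 3 * x + 2 * x ^ 2 - x ^ 3) * hx)
  · exact neg1 (-3 + 5 * x - x ^ 2) (by linear_combination (19 - 29 * x + 10 * x ^ 2 - x ^ 3) * hx)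
  · exact pos1 (1 - 3 * x + x ^ 2) (by linear_combination (-1 + 3 * x - 4 * x ^ 2 + x ^ 3) * hx)
  · exact pos1 (1 - 3 * x + x ^ 2) (by linear_combination (1 + 6 * x - 5 * x ^ 2 + x ^ 3) * hx)
  · exact neg1 (1 - x) (by linear_combination -hx)
  · exact neg1 (-2 * x + x ^ 2) (by linear_combination (1 + 2 * x - 3 * x ^ 2 + x ^ 3) * hx)
  · exact neg1 (-2 * x + x ^ 2) (by linear_combination (-1 + 2 * x - 3 * x ^ 2 + x ^ 3) * hx)
  · exact pos1 (2 - 2 * x + x ^ 2) (by linear_combination (-3 + 4 * x - 3 * x ^ 2 + x ^ 3) * hx)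
  · exact neg1 (1 + 3 * x - x ^ 2) (by linear_combination (-1 - 12 * x + 7 * x ^ 2 - x ^ 3) * hx)
  · exact neg1 (1 - x + x ^ 2) (by linear_combination (-1 + 2 * x - x ^ 2 + x ^ 3) * hx)
  · exact neg1 (1 - x + x ^ 2) (by linear_combination (-1 + 3 * x - 2 * x ^ 2 + x ^ 3) * hx)
  · exact neg1 (-1 + x ^ 2) (by linear_combination (1 - x + x ^ 3) * hx)
  · exact neg1 (-1 + x ^ 2) (by linear_combination (-1 - x + x ^ 3) * hx)
  · exact pos1 (1 + x ^ 2) (by linear_combination (1 + x + x ^ 3) * hx)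
  · exact pos1 (-1 + x + x ^ 2) (by linear_combination (-3 - x + 2 * x ^ 2 + x ^ 3) * hx)
  · exact neg1 x (by linear_combination hx)
  · exact neg1 (1 - 3 * x - x ^ 2) (by linear_combination (1 - 12 * x - 7 * x ^ 2 - x ^ 3) * hx)

lemma exists_root_of_disc_neg {K : Type*} [Field K] (x : K) (b c d t n : ℤ)
    (hx : x ^ 3 + b * x ^ 2 + c * x + d = 0) (hn : 1 ≤ n) (hn2 : n ≠ 2)
    (hd : d = 1 ∨ d = -1) (ht : t = 1 ∨ t = -1)
    (hf : n ^ 3 + b * n ^ 2 + c * n + d = t) (hD : cubicDisc b c d < 0) : HasRoot K := by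
  have hdvd : n ∣ t - d := ⟨n ^ 2 + b * n + c, by linear_combination -hf⟩
  by_cases htd : t = d
  · -- `f = x(x - n)(x - m) + d`
    obtain ⟨m, hm⟩ : ∃ m, m = -b - n := ⟨_, rfl⟩
    obtain rfl : b = -(n + m) := by omega
    obtain rfl : c = n * m := by
      apply mul_left_cancel₀ (show n ≠ 0 by omega)
      linear_combination hf + htd
    by_cases hm0 : m = 0
    · subst hm0
      rcases hd with rfl | rfl
      · -- `disc f = 4n³ - 27` is negative only for `n = 1`
        obtain rfl : n = 1 := by
          unfold cubicDisc at hD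
          by_contra hne
          have h3 : 3 ≤ n := by omega
          have : 3 ^ 3 ≤ n ^ 3 := pow_le_pow_left₀ (by norm_num) h3 3
          linarith
        exact ⟨-1, by norm_num, by norm_num, -x, by
          push_cast at hx ⊢; linear_combination -hx⟩
      · exact ⟨n, by omega, by omega, x, by push_cast at hx; linear_combination hx⟩
    by_cases hmn : m = n
    · subst hmn
      rcases hd with rfl | rfl
      · exact ⟨m, by omega, by omega, m - x, by push_cast at hx; linear_combination -hx⟩
      · -- again `disc f = 4n³ - 27`
        obtain rfl : m = 1 := by
          unfold cubicDisc at hD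
          by_contra hne
          have h3 : 3 ≤ m := by omega
          have : 3 ^ 3 ≤ m ^ 3 := pow_le_pow_left₀ (by norm_num) h3 3
          linarith
        exact ⟨-1, by norm_num, by norm_num, x - 1, by
          push_cast at hx ⊢; linear_combination hx⟩
    obtain ⟨h1, h2, h3⟩ := bounds_of_disc_neg_s17 n m d hn hm0 hmn hd hD
    refine hasRoot_of_sporadic x _ _ _ hx ?_
    clear hx hdvd hf htd ht hm
    revert hD
    rcases hd with rfl | rfl <;> interval_cases n <;> interval_cases m <;>
      first | omega | norm_num [cubicDisc, sporadic]
  · -- `t - d = ±2`, so `n = 1`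
    obtain rfl : n = 1 := by
      have : n ≤ 2 := by
        refine Int.le_of_dvd (by norm_num) (hdvd.trans ?_)
        rcases hd with rfl | rfl <;> rcases ht with rfl | rfl <;> first | omega | norm_num
      omega
    rcases hd with rfl | rfl
    · obtain rfl : t = -1 := by omega
      obtain rfl : c = -b - 3 := by linarith
      -- `disc f = (b² + 3b + 9)²`
      unfold cubicDisc at hD
      nlinarith [sq_nonneg (b ^ 2 + 3 * b + 9)]
    · obtain rfl : t = 1 := by omega
      obtain rfl : c = 1 - b := by linarith
      -- `disc f = (b² + 3b - 1)² - 32`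
      have hsq : (b ^ 2 + 3 * b - 1) ^ 2 < 6 ^ 2 := by
        unfold cubicDisc at hD
        linarith
      have h6 := abs_lt_of_sq_lt_sq' hsq (by norm_num)
      have hb1 : b ≤ 2 := by nlinarith
      have hb2 : -5 ≤ b := by nlinarith
      refine hasRoot_of_sporadic x _ _ _ hx ?_
      clear hx hdvd hf htd ht hsq h6
      revert hD
      interval_cases b <;> norm_num [cubicDisc, sporadic]

/-! ### Units of the cubic field -/

section NumberField

variable {K : Type*} [Field K] [NumberField K]

/-- `f` is the characteristic polynomial of multiplication by `ε` on `𝓞 K`; its value at an integer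
`k` is the norm of `k - ε`. -/
lemma exists_cubic (hK : Module.finrank ℚ K = 3) (ε : 𝓞 K) :
    ∃ b c d : ℤ, ε ^ 3 + b * ε ^ 2 + c * ε + d = 0 ∧
      ∀ k : ℤ, k ^ 3 + b * k ^ 2 + c * k + d = Algebra.norm ℤ ((k : 𝓞 K) - ε) := by
  set f := (Algebra.lmul ℤ (𝓞 K) ε).charpoly with hf
  have hdeg : f.natDegree = 3 := by
    rw [hf, LinearMap.charpoly_natDegree, RingOfIntegers.rank, hK]
  have hmon : f.Monic := LinearMap.charpoly_monic _
  have h3 : f.coeff 3 = 1 := by rw [← hdeg]; exact hmon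
  refine ⟨f.coeff 2, f.coeff 1, f.coeff 0, ?_, fun k => ?_⟩
  · have h := Algebra.aeval_self_charpoly_lmul (R := ℤ) ε
    rw [← hf, Polynomial.aeval_eq_sum_range, hdeg] at h
    simp [Finset.sum_range_succ, h3] at h
    linear_combination h
  · have h := LinearMap.eval_charpoly (Algebra.lmul ℤ (𝓞 K) ε) k
    rw [← hf, Polynomial.eval_eq_sum_range, hdeg] at h
    simp only [Finset.sum_range_succ, Finset.sum_range_zero, h3] at h
    rw [Algebra.norm_apply, map_sub]
    have e : (Algebra.lmul ℤ (𝓞 K)) (k : 𝓞 K) = algebraMap ℤ (Module.End ℤ (𝓞 K)) k := by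
      rw [eq_intCast, map_intCast]
    rw [e, ← h]
    ring

lemma im_ne_zero_of_not_rational (hK : Module.finrank ℚ K = 3) (φ : K →+* ℂ)
    (hφ : ¬ ComplexEmbedding.IsReal φ) (x : K) (hx : x ∉ (⊥ : Subalgebra ℚ K)) :
    (φ x).im ≠ 0 := by
  intro him
  -- the degree is prime, so `x` generates `K`, and `φ` agrees with its conjugate at `x`
  have hsimple : IsSimpleOrder (Subalgebra ℚ K) :=
    Subalgebra.isSimpleOrder_of_finrank_prime ℚ K (by rw [hK]; norm_num)
  have htop : Algebra.adjoin ℚ {x} = ⊤ := by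
    refine (hsimple.eq_bot_or_eq_top _).resolve_left fun h => hx ?_
    rw [← h]
    exact Algebra.self_mem_adjoin_singleton ℚ x
  have heq : (ComplexEmbedding.conjugate φ).toRatAlgHom = φ.toRatAlgHom := by
    refine AlgHom.ext_of_adjoin_eq_top htop ?_
    rintro _ rfl
    exact Complex.conj_eq_iff_im.mpr him
  exact hφ (RingHom.ext fun y => DFunLike.congr_fun heq y)

lemma norm_unit_s17 {K : Type*} [Field K] (u : (𝓞 K)ˣ) :
    Algebra.norm ℤ (u : 𝓞 K) = 1 ∨ Algebra.norm ℤ (u : 𝓞 K) = -1 :=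
  Int.isUnit_iff.mp (u.isUnit.map (Algebra.norm ℤ))

/-- A rational unit is `±1`, because its norm is its cube. -/
lemma unit_eq_of_rational (hK : Module.finrank ℚ K = 3) (u : (𝓞 K)ˣ)
    (h : ((u : 𝓞 K) : K) ∈ (⊥ : Subalgebra ℚ K)) : (u : 𝓞 K) = 1 ∨ (u : 𝓞 K) = -1 := by
  obtain ⟨q, hq⟩ := Algebra.mem_bot.mp h
  have hint : IsIntegral ℤ q := by
    rw [← isIntegral_algebraMap_iff (algebraMap ℚ K).injective, hq]
    exact RingOfIntegers.isIntegral_coe _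
  obtain ⟨k, rfl⟩ := IsIntegrallyClosed.isIntegral_iff.mp hint
  have hk : (u : 𝓞 K) = (k : 𝓞 K) := by
    apply RingOfIntegers.ext
    rw [← hq]
    simp
  have hnorm : Algebra.norm ℤ (u : 𝓞 K) = k ^ 3 := by
    rw [hk, ← eq_intCast (algebraMap ℤ (𝓞 K)) k,
      Algebra.norm_algebraMap_of_basis (RingOfIntegers.basis K),
      ← Module.finrank_eq_card_chooseBasisIndex, RingOfIntegers.rank, hK]
  have hu : IsUnit (k ^ 3) := by
    rw [← hnorm]; exact u.isUnit.map (Algebra.norm ℤ)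
  rcases Int.isUnit_iff.mp ((isUnit_pow_iff (by norm_num)).mp hu) with rfl | rfl
  · left; simpa using hk
  · right; simpa using hk

lemma eq_two_of_rational (hK : Module.finrank ℚ K = 3) (ε δ : (𝓞 K)ˣ) (n : ℕ) (hn : 0 < n)
    (h : (ε : 𝓞 K) + δ = n) (hε : ((ε : 𝓞 K) : K) ∈ (⊥ : Subalgebra ℚ K)) : n = 2 := by
  have hδ : ((δ : 𝓞 K) : K) ∈ (⊥ : Subalgebra ℚ K) := by
    have e : ((δ : 𝓞 K) : K) = (n : K) - ((ε : 𝓞 K) : K) := by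
      rw [eq_sub_iff_add_eq', ← map_add, h, map_natCast]
    rw [e]
    exact sub_mem (natCast_mem _ n) hε
  have key : ∀ a : ℤ, (n : 𝓞 K) = a → (n : ℤ) = a := fun a ha => by exact_mod_cast ha
  rcases unit_eq_of_rational hK ε hε with h1 | h1 <;>
    rcases unit_eq_of_rational hK δ hδ with h2 | h2 <;> rw [h1, h2] at h
  · have := key 2 (by rw [← h]; norm_num)
    omega
  · have := key 0 (by rw [← h]; norm_num)
    omega
  · have := key 0 (by rw [← h]; norm_num)
    omega
  · have := key (-2) (by rw [← h]; norm_num)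
    omega

end NumberField

/-- Let `K` be a complex cubic field containing no root of
`g_a(x) = x³ − ax² − 1` for any nonzero integer `a ≥ −1` (i.e. `K` is not
isomorphic to any `L_a`). Then `N_K = {2}`. -/
theorem sums_of_units_stmt_17 (K : Type*) [Field K] [NumberField K]
    (hK : Module.finrank ℚ K = 3)
    (hcomplex : ∃ φ : K →+* ℂ, ¬ NumberField.ComplexEmbedding.IsReal φ)
    (hnot : ∀ a : ℤ, a ≠ 0 → -1 ≤ a → ∀ ω : K, ω ^ 3 - (a : K) * ω ^ 2 - 1 ≠ 0) :
    NK K = {2} := by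
  ext n
  rw [Set.mem_singleton_iff]
  refine ⟨?_, fun hn => ?_⟩
  · rintro ⟨hn, ε, δ, h⟩
    by_contra hn2
    obtain ⟨φ, hφ⟩ := hcomplex
    by_cases hε : ((ε : 𝓞 K) : K) ∈ (⊥ : Subalgebra ℚ K)
    · exact hn2 (eq_two_of_rational hK ε δ n hn h hε)
    have him := im_ne_zero_of_not_rational hK φ hφ _ hε
    obtain ⟨b, c, d, hf, hval⟩ := exists_cubic hK (ε : 𝓞 K)
    have hx : ((ε : 𝓞 K) : K) ^ 3 + b * ((ε : 𝓞 K) : K) ^ 2 + c * ((ε : 𝓞 K) : K) + d = 0 := by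
      have := congrArg (algebraMap (𝓞 K) K) hf
      simpa using this
    have hD : cubicDisc b c d < 0 := by
      have hz := congrArg φ hx
      simp only [map_add, map_mul, map_pow, map_intCast, map_zero] at hz
      have := disc_neg b c d _ him (by exact_mod_cast hz)
      unfold cubicDisc at this ⊢
      exact_mod_cast this
    have hd : d = 1 ∨ d = -1 := by
      have h0 := hval 0
      have := norm_unit_s17 (-ε)
      rw [Units.val_neg, ← zero_sub, ← Int.cast_zero, ← h0] at this
      simpa using this
    have ht : (n : ℤ) ^ 3 + b * (n : ℤ) ^ 2 + c * n + d = Algebra.norm ℤ (δ : 𝓞 K) := by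
      rw [hval, Int.cast_natCast, ← h, add_sub_cancel_left]
    obtain ⟨a, ha0, ha1, ω, hω⟩ := exists_root_of_disc_neg _ b c d _ n hx (by omega) (by omega) hd
      (norm_unit_s17 δ) ht hD
    exact hnot a ha0 ha1 ω hω
  · subst hn
    exact ⟨by norm_num, 1, 1, by norm_num⟩
end

section
/- Let l ≥ 3 be an integer and let K = ℚ(ρ) where ρ is a root of the irreducible polynomial x³ + (l−1)x² − l x − 1 (an Ennola cubic field). Then the elements −ρ, l + ρ, 1 − ρ, lρ + ρ², l + 2 − lρ − ρ², and 1 + lρ + ρ² are all units of O_K, and consequently {l, l+1, l+2, l+3} ⊆ N_K. -/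
/-!
The cubic factors as `x³ + (l - 1)x² - l x - 1 = x (x - 1) (x + l) - 1`, so `ρ (ρ - 1) (ρ + l) = 1`
exhibits `ρ`, `ρ - 1` and `ρ + l` as units. Put `β = ρ (ρ + l)`, so that `β (ρ - 1) = 1`. Then
`1 + β = ρ β` is a unit, and `ρ (l + 2 - β) = -(ρ - 1)²` shows that `l + 2 - β` is one as well.
The four sums are `(-ρ) + (l + ρ)`, `(1 - ρ) + (l + ρ)`, `β + (l + 2 - β)` and
`(1 + β) + (l + 2 - β)`.
-/

open NumberField

/-- The six units, over any commutative ring containing an `r` with `r (r - 1) (r + l) = 1`. -/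
lemma ennola_isUnit {R : Type*} [CommRing R] (l r : R) (h : r * (r - 1) * (r + l) = 1) :
    IsUnit (-r) ∧ IsUnit (l + r) ∧ IsUnit (1 - r) ∧ IsUnit (l * r + r ^ 2) ∧
      IsUnit (l + 2 - l * r - r ^ 2) ∧ IsUnit (1 + l * r + r ^ 2) := by
  refine ⟨.of_mul_eq_one (-((r - 1) * (r + l))) ?_, .of_mul_eq_one (r * (r - 1)) ?_,
    .of_mul_eq_one (-(r * (r + l))) ?_, .of_mul_eq_one (r - 1) ?_,
    .of_mul_eq_one (-(r * (r * (r + l)) ^ 2)) ?_,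
    .of_mul_eq_one ((r - 1) ^ 2 * (r + l)) ?_⟩
  · linear_combination h
  · linear_combination h
  · linear_combination h
  · linear_combination h
  -- With `β = r (r + l)`: `r (l + 2 - β) = -(r - 1)²`, so `-r β²` is the inverse of `l + 2 - β`.
  · linear_combination (r * (r + l) * (r - 1) + 1 + (r * (r + l)) ^ 2) * h
  -- `(1 + β) (r - 1) = r`, hence `(1 + β) (r - 1)² (r + l) = 1`.
  · linear_combination ((r - 1) * (r + l) + 1) * h

/-- Let `l ≥ 3` and `K = ℚ(ρ)` where `ρ` is a root of the
Ennola cubic `x³ + (l−1)x² − lx − 1`. Then `−ρ`, `l + ρ`, `1 − ρ`, `lρ + ρ²`,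
`l + 2 − lρ − ρ²` and `1 + lρ + ρ²` are units of `𝓞 K`, and consequently
`{l, l+1, l+2, l+3} ⊆ N_K`. -/
theorem sums_of_units_stmt_18 (l : ℕ) (hl : 3 ≤ l)
    (K : Type*) [Field K] [NumberField K]
    (ρ : K) (hρ : ρ ^ 3 + ((l : K) - 1) * ρ ^ 2 - (l : K) * ρ - 1 = 0)
    (hgen : IntermediateField.adjoin ℚ {ρ} = ⊤) :
    (∃ u : (𝓞 K)ˣ, ((u : 𝓞 K) : K) = -ρ) ∧
    (∃ u : (𝓞 K)ˣ, ((u : 𝓞 K) : K) = (l : K) + ρ) ∧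
    (∃ u : (𝓞 K)ˣ, ((u : 𝓞 K) : K) = 1 - ρ) ∧
    (∃ u : (𝓞 K)ˣ, ((u : 𝓞 K) : K) = (l : K) * ρ + ρ ^ 2) ∧
    (∃ u : (𝓞 K)ˣ, ((u : 𝓞 K) : K) = (l : K) + 2 - (l : K) * ρ - ρ ^ 2) ∧
    (∃ u : (𝓞 K)ˣ, ((u : 𝓞 K) : K) = 1 + (l : K) * ρ + ρ ^ 2) ∧
    ({l, l + 1, l + 2, l + 3} : Set ℕ) ⊆ NK K := by
  have hint : IsIntegral ℤ ρ := by
    refine ⟨.X ^ 3 + .C ((l : ℤ) - 1) * .X ^ 2 - .C (l : ℤ) * .X - 1, ?_, ?_⟩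
    · monicity!
    · simpa [Polynomial.eval₂_eq_eval_map] using hρ
  obtain ⟨r, rfl⟩ : ∃ r : 𝓞 K, (r : K) = ρ := ⟨⟨ρ, hint⟩, rfl⟩
  have h : r * (r - 1) * (r + (l : 𝓞 K)) = 1 := by
    apply RingOfIntegers.coe_injective
    push_cast [map_mul, map_sub, map_add, map_one, map_natCast]
    linear_combination hρ
  obtain ⟨⟨a, ha⟩, ⟨b, hb⟩, ⟨c, hc⟩, ⟨d, hd⟩, ⟨e, he⟩, ⟨f, hf⟩⟩ := ennola_isUnit (l : 𝓞 K) r h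
  refine ⟨⟨a, by simp [ha]⟩, ⟨b, by simp [hb]⟩, ⟨c, by simp [hc]⟩, ⟨d, by simp [hd]⟩,
    ⟨e, by rw [he]; push_cast [map_mul, map_sub, map_add, map_natCast, map_ofNat, map_pow]; rfl⟩,
    ⟨f, by simp [hf]⟩, ?_⟩
  rintro n (rfl | rfl | rfl | rfl)
  · exact ⟨by omega, a, b, by rw [ha, hb]; ring⟩
  · exact ⟨by omega, c, b, by rw [hc, hb]; push_cast; ring⟩
  · exact ⟨by omega, d, e, by rw [hd, he]; push_cast; ring⟩
  · exact ⟨by omega, f, e, by rw [hf, he]; push_cast; ring⟩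
end
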